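/- There exists a constant C > 0 such that for every prime q, all integers h, k with 1 ≤ h, k < q and gcd(h,k) = 1 and q ≥ 4hk, and each choice of sign ±, one has |M_±(h,k;q) − (1/2)·(q/(hk))^{1/2}·(log(q/(hk)) + γ − log(8π) ∓ π/2)| ≤ C·(h+k)^{1/2}·log q. -/

import Mathlib

open Complex Real Finset

open scoped Classical in
/-- `M_±(h,k;q)`: the doubly twisted second moment over primitive (= nontrivial, for
prime `q`) characters mod `q` of parity `χ(-1) = ε`. -/
noncomputable def Mpm (ε : ℤ) (h k : ℤ) (q : ℕ) [NeZero q] : ℂ :=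
  (Real.sqrt q / (Nat.totient q : ℝ)) *
    ∑ χ : DirichletCharacter ℂ q, if χ ≠ 1 ∧ χ (-1 : ZMod q) = (ε : ℂ) then
      (‖χ.LFunction (1/2)‖^2 : ℂ) * χ (h : ZMod q) * (starRingEnd ℂ) (χ (k : ZMod q))
    else 0

namespace TT

noncomputable def tz (y : ℝ) : ℝ := (1/√y + 1/√(y+1))/2 - 2*(√(y+1)-√y)
noncomputable def ez (x : ℝ) : ℝ := ∑' m : ℕ, tz (x+m)
noncomputable def fz (x : ℝ) : ℝ := -2*√x + 1/(2*√x) + ez x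
noncomputable def vz (x : ℝ) : ℝ := 1/√x - 1/√(x+1)

lemma tz_eq {y : ℝ} (hy : 0 < y) : tz y = 1/(2*√y*√(y+1)*(√y+√(y+1))^3) := by
  have ha : 0 < √y := Real.sqrt_pos.2 hy
  have hb : 0 < √(y+1) := Real.sqrt_pos.2 (by linarith)
  have h1 : √(y+1)^2 = √y^2+1 := by
    rw [Real.sq_sqrt (by linarith), Real.sq_sqrt hy.le]
  have h2 : (√(y+1)-√y)*(√y+√(y+1)) = 1 := by nlinarith
  have h3 : √(y+1)-√y = 1/(√y+√(y+1)) := by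
    field_simp; linarith
  have h4 : tz y = (√(y+1)-√y)^2/(2*√y*√(y+1)*(√y+√(y+1))) := by
    unfold tz
    have : 2*(√(y+1)-√y) = 2/(√y+√(y+1)) := by rw [h3]; ring
    rw [this]
    field_simp
    ring
  rw [h4, h3]
  field_simp

lemma tz_nonneg {y : ℝ} (hy : 0 < y) : 0 ≤ tz y := by
  rw [tz_eq hy]; positivity

lemma vz_eq {y : ℝ} (hy : 0 < y) : vz y = 1/(√y*√(y+1)*(√y+√(y+1))) := by
  have ha : 0 < √y := Real.sqrt_pos.2 hy
  have hb : 0 < √(y+1) := Real.sqrt_pos.2 (by linarith)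
  have h1 : √(y+1)^2 = √y^2+1 := by
    rw [Real.sq_sqrt (by linarith), Real.sq_sqrt hy.le]
  unfold vz
  field_simp
  nlinarith

lemma vz_nonneg {y : ℝ} (hy : 0 < y) : 0 ≤ vz y := by
  rw [vz_eq hy]; positivity

lemma tz_le {y : ℝ} (hy : 0 < y) : tz y ≤ vz y - vz (y+1) := by
  have hc1 : √(y+1+1)^2 = √(y+1)^2+1 := by
    rw [Real.sq_sqrt (by linarith), Real.sq_sqrt (by linarith)]
  have h1 : √(y+1)^2 = √y^2+1 := by
    rw [Real.sq_sqrt (by linarith), Real.sq_sqrt hy.le]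
  rw [tz_eq hy, vz_eq hy, vz_eq (by linarith : 0 < y+1)]
  have ha : 0 < √y := Real.sqrt_pos.2 hy
  have hb : 0 < √(y+1) := Real.sqrt_pos.2 (by linarith)
  have hc : 0 < √(y+1+1) := Real.sqrt_pos.2 (by linarith)
  have hbc : √(y+1) ≤ √(y+1+1) := Real.sqrt_le_sqrt (by linarith)
  have hab : √y ≤ √(y+1) := Real.sqrt_le_sqrt (by linarith)
  set a := √y
  set b := √(y+1)
  set c := √(y+1+1)
  have e1 : 1/(a*b*(a+b)) - 1/(b*c*(b+c)) = (c*(b+c)-a*(a+b))/(a*b*c*(a+b)*(b+c)) := by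
    field_simp
  have e2 : 2/(a*b*c*(a+b)*(b+c)) ≤ (c*(b+c)-a*(a+b))/(a*b*c*(a+b)*(b+c)) := by
    gcongr
    nlinarith
  rw [e1]
  refine le_trans ?_ e2
  rw [div_le_div_iff₀ (by positivity) (by positivity)]
  have : c*(b+c) ≤ 4*(a+b)^2 := by nlinarith
  have h5 : 0 < a*b*(a+b) := by positivity
  nlinarith

lemma vz_tendsto (x : ℝ) : Filter.Tendsto (fun n : ℕ => 1/√(x+n)) Filter.atTop (nhds 0) := by
  have : Filter.Tendsto (fun n : ℕ => √(x+n)) Filter.atTop Filter.atTop :=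
    Real.tendsto_sqrt_atTop.comp (Filter.tendsto_atTop_add_const_left _ _ tendsto_natCast_atTop_atTop)
  have h2 := this.inv_tendsto_atTop
  simp only [one_div]
  exact h2

lemma tz_summable_pos {x : ℝ} (hx : 0 < x) :
    Summable (fun m : ℕ => tz (x+m)) ∧ ez x ≤ vz x := by
  have hb : ∀ n : ℕ, ∑ m ∈ Finset.range n, tz (x+m) ≤ vz x := by
    intro n
    have : ∑ m ∈ Finset.range n, tz (x+m) ≤ vz x - vz (x+n) := by
      induction n with
      | zero => simp
      | succ n ih =>
        rw [Finset.sum_range_succ]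
        have := tz_le (y := x+n) (by positivity)
        push_cast
        rw [← add_assoc]
        linarith
    have h2 := vz_nonneg (y := x+n) (by positivity)
    linarith
  have h0 : ∀ m : ℕ, 0 ≤ tz (x+m) := fun m => tz_nonneg (by positivity)
  have hs := summable_of_sum_range_le h0 hb
  exact ⟨hs, hs.tsum_le_of_sum_range_le hb⟩

lemma tz_summable (x : ℝ) : Summable (fun m : ℕ => tz (x+m)) := by
  obtain ⟨N, hN⟩ := exists_nat_gt (-x)
  rw [← summable_nat_add_iff N]
  have := (tz_summable_pos (x := x + N) (by linarith)).1
  refine this.congr fun m => ?_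
  push_cast; ring_nf

lemma ez_le {x : ℝ} (hx : 0 < x) : ez x ≤ vz x := (tz_summable_pos hx).2
lemma ez_nonneg {x : ℝ} (hx : 0 < x) : 0 ≤ ez x :=
  tsum_nonneg fun m => tz_nonneg (by positivity)

lemma ez_succ (x : ℝ) : ez x = tz x + ez (x+1) := by
  unfold ez
  rw [(tz_summable x).tsum_eq_zero_add]
  simp only [Nat.cast_zero, add_zero, Nat.cast_add, Nat.cast_one]
  congr 1
  apply tsum_congr; intro m; congr 1; ring

lemma fz_succ {x : ℝ} (hx : 0 < x) : fz x = 1/√x + fz (x+1) := by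
  unfold fz
  rw [ez_succ x]
  unfold tz
  have ha : 0 < √x := Real.sqrt_pos.2 hx
  have hb : 0 < √(x+1) := Real.sqrt_pos.2 (by linarith)
  field_simp
  ring

lemma fz_add_nat {x : ℝ} (hx : 0 < x) (N : ℕ) :
    fz x = ∑ n ∈ Finset.range N, 1/√(x+n) + fz (x+N) := by
  induction N with
  | zero => simp
  | succ N ih =>
    rw [ih, fz_succ (x := x+N) (by positivity), Finset.sum_range_succ]
    push_cast
    rw [← add_assoc, add_assoc x]

lemma fz_asymp {y : ℝ} (hy : 0 < y) : 0 ≤ fz y + 2*√y ∧ fz y + 2*√y ≤ 2/√y := by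
  have h1 := ez_nonneg hy
  have h2 := ez_le hy
  have ha : 0 < √y := Real.sqrt_pos.2 hy
  have hb : 0 < √(y+1) := Real.sqrt_pos.2 (by linarith)
  unfold vz at h2
  unfold fz
  have h3 : 0 < 1/√(y+1) := by positivity
  have h4 : 0 < 1/√y := by positivity
  have h5 : 1/(2*√y) = 1/√y/2 := by field_simp
  have h6 : 2/√y = 2*(1/√y) := by ring
  rw [h5, h6]
  constructor <;> linarith

lemma fz_lim (x y : ℝ) : Filter.Tendsto (fun N : ℕ => fz (x+N) + 2*√(y+N)) Filter.atTop (nhds 0) := by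
  have h1 : Filter.Tendsto (fun N : ℕ => fz (x+N) + 2*√(x+N)) Filter.atTop (nhds 0) := by
    have hl : Filter.Tendsto (fun n : ℕ => 2/√(x+n)) Filter.atTop (nhds 0) := by
      have := (vz_tendsto x).const_mul 2
      simpa [div_eq_mul_inv] using this
    have hev : ∀ᶠ N : ℕ in Filter.atTop, 0 < x + N := by
      obtain ⟨M, hM⟩ := exists_nat_gt (-x)
      filter_upwards [Filter.eventually_ge_atTop M] with N hN
      have : (M:ℝ) ≤ N := by exact_mod_cast hN
      linarith
    refine tendsto_of_tendsto_of_tendsto_of_le_of_le' tendsto_const_nhds hl ?_ ?_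
    · filter_upwards [hev] with N hN using (fz_asymp hN).1
    · filter_upwards [hev] with N hN using (fz_asymp hN).2
  have h2 : Filter.Tendsto (fun N : ℕ => 2*(√(y+N)-√(x+N))) Filter.atTop (nhds 0) := by
    have hev : ∀ᶠ N : ℕ in Filter.atTop, 1 ≤ x + N ∧ 1 ≤ y + N := by
      obtain ⟨M, hM⟩ := exists_nat_gt (1-x)
      obtain ⟨M', hM'⟩ := exists_nat_gt (1-y)
      filter_upwards [Filter.eventually_ge_atTop M, Filter.eventually_ge_atTop M'] with N hN hN'
      have : (M:ℝ) ≤ N := by exact_mod_cast hN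
      have : (M':ℝ) ≤ N := by exact_mod_cast hN'
      constructor <;> linarith
    have hl := (vz_tendsto x).const_mul (2*|y-x|)
    rw [mul_zero] at hl
    refine squeeze_zero_norm' ?_ hl
    filter_upwards [hev] with N hN
    have ha : 0 < √(x+N) := Real.sqrt_pos.2 (by linarith)
    have hb : 0 < √(y+N) := Real.sqrt_pos.2 (by linarith)
    have : √(y+N)-√(x+N) = (y-x)/(√(y+N)+√(x+N)) := by
      field_simp
      have := Real.sq_sqrt (by linarith : 0 ≤ x+N)
      have := Real.sq_sqrt (by linarith : 0 ≤ y+N)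
      nlinarith
    rw [this, Real.norm_eq_abs, abs_mul, abs_div, abs_of_pos (by positivity : 0 < √(y+N)+√(x+N)), abs_of_pos (two_pos), mul_assoc, mul_one_div]
    gcongr
    linarith
  have := h1.add h2
  simp only [add_zero] at this
  refine this.congr fun N => by ring

lemma fz_anti {x y : ℝ} (hx : 0 < x) (hxy : x ≤ y) : fz y ≤ fz x := by
  have h1 := (fz_lim x x).sub (fz_lim y x)
  have h2 : Filter.Tendsto (fun N : ℕ => fz (x+N) - fz (y+N)) Filter.atTop (nhds 0) := by
    simp only [sub_zero] at h1
    refine h1.congr fun N => by ring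
  have h3 : ∀ N : ℕ, fz (x+N) - fz (y+N) ≤ fz x - fz y := by
    intro N
    rw [fz_add_nat hx N, fz_add_nat (lt_of_lt_of_le hx hxy) N]
    have : ∑ n ∈ Finset.range N, 1/√(y+n) ≤ ∑ n ∈ Finset.range N, 1/√(x+n) := by
      apply Finset.sum_le_sum
      intro n _
      have : 0 < √(x+n) := Real.sqrt_pos.2 (by positivity)
      gcongr
    linarith
  have h4 : (0:ℝ) ≤ fz x - fz y := le_of_tendsto' h2 h3
  linarith

lemma fz_dist {x : ℝ} (hx : 0 < x) {k : ℕ} (hk : 0 < k) :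
    ∑ j ∈ Finset.range k, fz ((x+j)/k) = √k * fz x := by
  have hk' : (0:ℝ) < k := by exact_mod_cast hk
  have key : ∀ y : ℝ, 0 < y → ∑ j ∈ Finset.range k, fz ((y+j)/k) - √k * fz y =
      ∑ j ∈ Finset.range k, fz ((y+1+j)/k) - √k * fz (y+1) := by
    intro y hy
    have h1 : ∑ j ∈ Finset.range k, fz ((y+1+j)/k) = ∑ j ∈ Finset.range k, fz ((y+j)/k) - fz (y/k) + fz (y/k+1) := by
      have e1 := Finset.sum_range_succ (fun j : ℕ => fz ((y+j)/k)) k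
      have e2 := Finset.sum_range_succ' (fun j : ℕ => fz ((y+j)/k)) k
      have e3 : ∑ j ∈ Finset.range k, fz ((y+1+j)/k) = ∑ j ∈ Finset.range k, fz ((y+(j+1:ℕ))/k) := by
        apply Finset.sum_congr rfl; intro j _; push_cast; congr 2; ring
      have e4 : (y+k)/k = y/k+1 := by field_simp
      rw [e4] at e1
      simp only [Nat.cast_zero, add_zero] at e2
      rw [e3]
      linarith
    rw [h1, fz_succ hy, fz_succ (x := y/k) (by positivity)]
    have : √k * (1/√y) = 1/√(y/k) := by
      rw [Real.sqrt_div hy.le]; field_simp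
    linear_combination -this
  have hN : ∀ N : ℕ, ∑ j ∈ Finset.range k, fz ((x+j)/k) - √k * fz x =
      ∑ j ∈ Finset.range k, fz ((x+N+j)/k) - √k * fz (x+N) := by
    intro N
    induction N with
    | zero => simp
    | succ N ih =>
      rw [ih, key _ (by positivity)]
      push_cast
      simp only [add_assoc]
  have hlim : Filter.Tendsto (fun N : ℕ => ∑ j ∈ Finset.range k, fz ((x+(k*N:ℕ)+j)/k) - √k * fz (x+(k*N:ℕ))) Filter.atTop (nhds 0) := by
    have h1 : Filter.Tendsto (fun N : ℕ => ∑ j ∈ Finset.range k, (fz ((x+j)/k+N) + 2*√(x/k+N))) Filter.atTop (nhds (∑ j ∈ Finset.range k, 0)) :=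
      tendsto_finsetSum _ fun j _ => fz_lim _ _
    have h2 : Filter.Tendsto (fun N : ℕ => √k * (fz (x+(k*N:ℕ)) + 2*√(x+(k*N:ℕ)))) Filter.atTop (nhds (√k*0)) :=
      ((fz_lim x x).comp (Filter.tendsto_atTop_mono (fun n => Nat.le_mul_of_pos_left n hk) Filter.tendsto_id)).const_mul _
    have h3 := h1.sub h2
    simp only [Finset.sum_const_zero, mul_zero, sub_zero] at h3
    refine h3.congr fun N => ?_
    rw [Finset.sum_add_distrib, Finset.sum_const, Finset.card_range, nsmul_eq_mul]
    have e1 : √(x/k+N) * √k = √(x+(k*N:ℕ)) := by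
      rw [← Real.sqrt_mul (by positivity)]
      congr 1; push_cast; field_simp
    have e2 : (k:ℝ) = √k*√k := (Real.mul_self_sqrt hk'.le).symm
    have e3 : ∑ j ∈ Finset.range k, fz ((x+j)/k+N) = ∑ j ∈ Finset.range k, fz ((x+(k*N:ℕ)+j)/k) := by
      apply Finset.sum_congr rfl; intro j _; congr 1; push_cast; field_simp; ring
    rw [e3, ← e1]
    have : (k:ℝ)*(2*√(x/k+N)) = √k * (2*(√(x/k+N)*√k)) := by
      nth_rewrite 1 [e2]; ring
    rw [mul_add, this]
    ring
  have hc := hlim.congr (fun N => (hN (k*N)).symm)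
  have := tendsto_nhds_unique hc tendsto_const_nhds
  linarith

lemma fz_meas : Measurable fz := by
  have ht : Measurable tz := by unfold tz; fun_prop
  have he : Measurable ez := by
    refine measurable_of_tendsto_metrizable (f := fun (n : ℕ) (x:ℝ) => ∑ m ∈ Finset.range n, tz (x+m)) ?_ ?_
    · intro n; fun_prop
    · rw [tendsto_pi_nhds]; intro x
      exact (tz_summable x).hasSum.tendsto_sum_nat
  unfold fz; fun_prop

/-- `B x = - f (x+1)`, in `[0,3]`, increasing -/
noncomputable def Bz (x : ℝ) : ℝ := - fz (x+1)
noncomputable def pz (x : ℝ) : ℝ := 1/√x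

lemma Bz_meas : Measurable Bz := by unfold Bz; exact (fz_meas.comp (measurable_id.add_const 1)).neg
lemma pz_meas : Measurable pz := by unfold pz; fun_prop
lemma pz_nonneg (x : ℝ) : 0 ≤ pz x := by unfold pz; positivity
lemma fz_eq {x : ℝ} (hx : 0 < x) : fz x = pz x - Bz x := by
  rw [fz_succ hx]; unfold pz Bz; ring
lemma Bz_mono {x y : ℝ} (hx : 0 ≤ x) (hxy : x ≤ y) : Bz x ≤ Bz y := by
  unfold Bz; have := fz_anti (x := x+1) (y := y+1) (by linarith) (by linarith); linarith
lemma Bz_nonneg {x : ℝ} (hx : 0 ≤ x) : 0 ≤ Bz x := by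
  refine le_trans ?_ (Bz_mono le_rfl hx)
  unfold Bz
  have h := ez_le (x := 1) one_pos
  unfold vz at h
  have h2 : (0:ℝ) < 1/√(1+1) := by positivity
  rw [zero_add]; unfold fz
  rw [Real.sqrt_one] at *
  linarith
lemma Bz_le {x : ℝ} (hx : 0 ≤ x) (hx1 : x ≤ 1) : Bz x ≤ 3 := by
  refine (Bz_mono hx hx1).trans ?_
  unfold Bz
  have h := (fz_asymp (y := 2) (by norm_num)).1
  have : √(2:ℝ) ≤ 3/2 := by rw [Real.sqrt_le_left (by norm_num)]; norm_num
  rw [one_add_one_eq_two]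
  linarith
lemma pz_anti {x y : ℝ} (hx : 0 < x) (hxy : x ≤ y) : pz y ≤ pz x := by
  unfold pz
  have : 0 < √x := Real.sqrt_pos.2 hx
  gcongr
lemma pz_ge {x : ℝ} (hx : 0 < x) (h1 : x ≤ 1) : 1 ≤ pz x := by
  have := pz_anti hx h1
  simpa [pz] using this

end TT

namespace TT

noncomputable def Fs (a : ℝ) (n : ℕ) (s : ℂ) : ℂ := 1/((n:ℂ)+(a:ℂ))^s - 1/((n:ℂ)+((1:ℝ):ℂ))^s

lemma Fs_bound {a : ℝ} (ha : 0 < a) (ha1 : a ≤ 1) (n : ℕ) {s : ℂ} (hs : 1/4 < s.re) (hs3 : ‖s‖ < 3) :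
    ‖Fs a n s‖ ≤ 3 * a^(-3:ℝ) * (1/|(n:ℝ)+a|^(5/4:ℝ)) := by
  have hre : s.re ≤ 3 := (Complex.re_le_norm s).trans hs3.le
  have hn : (0:ℝ) ≤ n := Nat.cast_nonneg n
  have key := Convex.norm_image_sub_le_of_norm_hasDerivWithin_le
    (f := fun t : ℝ => (t:ℂ)^(-s)) (f' := fun t : ℝ => -s * (t:ℂ)^(-s-1)) (s := Set.Icc ((n:ℝ)+a) ((n:ℝ)+1))
    (C := 3 * (a^(-3:ℝ) * ((n:ℝ)+a)^(-(5/4):ℝ))) (x := (n:ℝ)+1) (y := (n:ℝ)+a) ?_ ?_ (convex_Icc _ _) ?_ ?_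
  · have e : Fs a n s = (((n:ℝ)+a : ℝ):ℂ)^(-s) - (((n:ℝ)+1 : ℝ):ℂ)^(-s) := by
      unfold Fs; push_cast; rw [Complex.cpow_neg, Complex.cpow_neg]; simp
    rw [e]
    refine key.trans ?_
    have h1 : ‖(n:ℝ)+a - ((n:ℝ)+1)‖ ≤ 1 := by
      rw [Real.norm_eq_abs, abs_le]; constructor <;> linarith
    rw [abs_of_pos (by linarith : (0:ℝ) < n + a), one_div, ← Real.rpow_neg (by linarith)]
    have h2 : 0 ≤ 3 * (a^(-3:ℝ) * ((n:ℝ)+a)^(-(5/4):ℝ)) := by positivity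
    calc _ ≤ 3 * (a^(-3:ℝ) * ((n:ℝ)+a)^(-(5/4):ℝ)) * 1 := by gcongr
      _ = _ := by ring
  · intro t ht
    have ht0 : 0 < t := by have := ht.1; linarith
    have := (Complex.hasStrictDerivAt_cpow_const (x := (t:ℂ)) (c := -s) (Complex.ofReal_mem_slitPlane.2 ht0)).hasDerivAt.comp_ofReal
    exact this.hasDerivWithinAt
  · intro t ht
    have ht0 : 0 < t := by have := ht.1; linarith
    have hta : a ≤ t := by have := ht.1; linarith
    rw [norm_mul, norm_neg, Complex.norm_cpow_eq_rpow_re_of_pos ht0]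
    have e1 : t^((-s-1).re) = t^(-(s.re-1/4)) * t^(-(5/4):ℝ) := by
      rw [← Real.rpow_add ht0]; congr 1; simp; ring
    rw [e1]
    have e2 : t^(-(s.re-1/4)) ≤ a^(-3:ℝ) := by
      calc t^(-(s.re-1/4)) ≤ a^(-(s.re-1/4)) := Real.rpow_le_rpow_of_nonpos ha hta (by linarith)
        _ ≤ a^(-3:ℝ) := Real.rpow_le_rpow_of_exponent_ge ha ha1 (by linarith)
    have e3 : t^(-(5/4):ℝ) ≤ ((n:ℝ)+a)^(-(5/4):ℝ) := Real.rpow_le_rpow_of_nonpos (by linarith) ht.1 (by norm_num)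
    gcongr
  · exact ⟨by linarith, le_rfl⟩
  · exact ⟨le_rfl, by linarith⟩

lemma Fs_summable_bound {a : ℝ} : Summable (fun n : ℕ => 3 * a^(-3:ℝ) * (1/|(n:ℝ)+a|^(5/4:ℝ))) :=
  ((Real.summable_one_div_nat_add_rpow a (5/4)).2 (by norm_num)).mul_left _

lemma hurwitz_half {a : ℝ} (ha : 0 < a) (ha1 : a ≤ 1) :
    HurwitzZeta.hurwitzZeta (a : UnitAddCircle) (1/2) - HurwitzZeta.hurwitzZeta ((1:ℝ) : UnitAddCircle) (1/2)
      = ((fz a - fz 1 : ℝ) : ℂ) := by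
  set U : Set ℂ := {s | 1/4 < s.re} ∩ Metric.ball 0 3 with hU
  have hUo : IsOpen U := (isOpen_lt continuous_const Complex.continuous_re).inter Metric.isOpen_ball
  have hUc : Convex ℝ U := (convex_halfSpace_re_gt _).inter (convex_ball _ _)
  have hmem : ∀ s ∈ U, 1/4 < s.re ∧ ‖s‖ < 3 := fun s hs => ⟨hs.1, by simpa using hs.2⟩
  have hd1 : DifferentiableOn ℂ (fun s => ∑' n, Fs a n s) U := by
    refine differentiableOn_tsum_of_summable_norm (Fs_summable_bound (a := a)) ?_ hUo ?_
    · intro n s hs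
      refine DifferentiableAt.differentiableWithinAt ?_
      have h1 : ((n:ℂ)+(a:ℂ)) ≠ 0 := by
        have : ((n:ℝ)+a) ≠ 0 := by positivity
        exact_mod_cast this
      have h2 : ((n:ℂ)+((1:ℝ):ℂ)) ≠ 0 := by
        have : ((n:ℝ)+1) ≠ 0 := by positivity
        exact_mod_cast this
      unfold Fs
      refine DifferentiableAt.sub (DifferentiableAt.div (by fun_prop) ?_ ?_) (DifferentiableAt.div (by fun_prop) ?_ ?_)
      · exact differentiableAt_id.const_cpow (Or.inl h1)
      · simp [Complex.cpow_eq_zero_iff, h1]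
      · exact differentiableAt_id.const_cpow (Or.inl h2)
      · simp only [ne_eq, Complex.cpow_eq_zero_iff, h2, false_and, not_false_iff]
    · intro n s hs
      exact Fs_bound ha ha1 n (hmem s hs).1 (hmem s hs).2
  have hd2 : DifferentiableOn ℂ (fun s => HurwitzZeta.hurwitzZeta (a : UnitAddCircle) s - HurwitzZeta.hurwitzZeta ((1:ℝ) : UnitAddCircle) s) U :=
    (HurwitzZeta.differentiable_hurwitzZeta_sub_hurwitzZeta _ _).differentiableOn
  have h2U : (2:ℂ) ∈ U := by
    refine ⟨by norm_num, by simp; norm_num⟩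
  have hhU : (1/2:ℂ) ∈ U := by
    refine ⟨by norm_num, by simp; norm_num⟩
  have heq := AnalyticOnNhd.eqOn_of_preconnected_of_eventuallyEq (hd2.analyticOnNhd hUo) (hd1.analyticOnNhd hUo) hUc.isPreconnected h2U ?_
  · have h := heq hhU
    simp only at h
    rw [h]
    have hs : Summable (fun n => Fs a n (1/2)) := by
      refine Summable.of_norm_bounded (Fs_summable_bound (a := a)) fun n => ?_
      exact Fs_bound ha ha1 n (hmem _ hhU).1 (hmem _ hhU).2
    have hcp : ∀ x : ℝ, 0 ≤ x → (x:ℂ)^(1/2:ℂ) = ((√x:ℝ):ℂ) := by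
      intro x hx
      rw [Real.sqrt_eq_rpow, Complex.ofReal_cpow hx]; norm_num
    have hF : ∀ n : ℕ, Fs a n (1/2) = ((1/√(a+n) - 1/√(1+n) : ℝ) : ℂ) := by
      intro n
      have h1 := hcp (a+n) (by positivity)
      have h2 := hcp (1+n) (by positivity)
      unfold Fs
      push_cast at h1 h2 ⊢
      rw [← h1, ← h2, add_comm (n:ℂ), add_comm (n:ℂ)]
    have ht := hs.hasSum.tendsto_sum_nat
    have ht2 : Filter.Tendsto (fun N : ℕ => ∑ n ∈ Finset.range N, Fs a n (1/2)) Filter.atTop (nhds ((fz a - fz 1 : ℝ) : ℂ)) := by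
      have e : ∀ N : ℕ, ∑ n ∈ Finset.range N, Fs a n (1/2) = ((fz a - fz 1 - ((fz (a+N) + 2*√(1+N)) - (fz (1+N) + 2*√(1+N))) : ℝ) : ℂ) := by
        intro N
        rw [Finset.sum_congr rfl (fun n _ => hF n), ← Complex.ofReal_sum, Finset.sum_sub_distrib]
        congr 1
        rw [fz_add_nat ha N, fz_add_nat one_pos N]
        ring
      simp_rw [e]
      refine (Complex.continuous_ofReal.tendsto _).comp ?_
      have := ((fz_lim a 1).sub (fz_lim 1 1)).const_sub (fz a - fz 1)
      simpa using this
    exact tendsto_nhds_unique ht ht2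
  · have : ∀ᶠ s : ℂ in nhds 2, 1 < s.re := by
      refine (isOpen_lt continuous_const Complex.continuous_re).mem_nhds ?_
      norm_num
    filter_upwards [this] with s hs
    have h1 := HurwitzZeta.hasSum_hurwitzZeta_of_one_lt_re (a := a) ⟨ha.le, ha1⟩ hs
    have h2 := HurwitzZeta.hasSum_hurwitzZeta_of_one_lt_re (a := 1) ⟨zero_le_one, le_rfl⟩ hs
    exact ((h1.sub h2).tsum_eq).symm

lemma LF_half {q : ℕ} [NeZero q] (hq : 1 < q) (χ : DirichletCharacter ℂ q) (hχ : χ ≠ 1) :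
    χ.LFunction (1/2) = ((1/√q : ℝ):ℂ) * ∑ j : ZMod q, χ j * ((fz ((j.val:ℝ)/q) : ℝ) : ℂ) := by
  have hq0 : (0:ℝ) < q := by exact_mod_cast (by omega : 0 < q)
  haveI : Fact (1 < q) := ⟨hq⟩
  unfold DirichletCharacter.LFunction ZMod.LFunction
  have h0 : ∑ j : ZMod q, χ j = 0 := MulChar.sum_eq_zero_of_ne_one hχ
  have hz : χ (0 : ZMod q) = 0 := MulChar.map_zero χ
  have e1 : (q:ℂ)^(-(1/2:ℂ)) = ((1/√q : ℝ):ℂ) := by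
    rw [Complex.cpow_neg, Complex.ofReal_div, Complex.ofReal_one, one_div]
    congr 1
    rw [Real.sqrt_eq_rpow, Complex.ofReal_cpow hq0.le]; norm_num
  rw [e1]
  congr 1
  have e2 : ∑ j : ZMod q, χ j * HurwitzZeta.hurwitzZeta (ZMod.toAddCircle j) (1/2) =
      ∑ j : ZMod q, χ j * (((fz ((j.val:ℝ)/q) : ℝ) : ℂ) + (HurwitzZeta.hurwitzZeta ((1:ℝ) : UnitAddCircle) (1/2) - (fz 1 : ℝ))) := by
    apply Finset.sum_congr rfl
    intro j _
    by_cases hj : j = 0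
    · subst hj; rw [hz]; simp
    · congr 1
      have hjv : 0 < j.val := Nat.pos_of_ne_zero (by rwa [ne_eq, ZMod.val_eq_zero])
      have hjl := ZMod.val_lt j
      have := hurwitz_half (a := (j.val:ℝ)/q) (by positivity) (by rw [div_le_one hq0]; exact_mod_cast hjl.le)
      rw [ZMod.toAddCircle_apply]
      push_cast at this ⊢
      linear_combination this
  rw [e2]
  simp_rw [mul_add]
  rw [Finset.sum_add_distrib, ← Finset.sum_mul, h0, zero_mul, add_zero]

end TT

namespace TT

noncomputable def ph (x : ℝ) : ℝ := fz (1 - Int.fract (-x))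

lemma ph_periodic : Function.Periodic ph 1 := by
  intro x
  unfold ph
  rw [neg_add, ← sub_eq_add_neg, Int.fract_sub_one]

lemma ph_add_int (x : ℝ) (m : ℤ) : ph (x + m) = ph x := by
  have := ph_periodic.int_mul m x
  simpa using this

lemma ph_eq {y : ℝ} (h0 : 0 < y) (h1 : y ≤ 1) : ph y = fz y := by
  unfold ph
  congr 1
  have : Int.fract (-y) = 1 - y := by
    rw [Int.fract_eq_iff]
    refine ⟨by linarith, by linarith, -1, by push_cast; ring⟩
  rw [this]; ring

lemma fz_val {q : ℕ} [NeZero q] (m : ℤ) (hm : (m : ZMod q) ≠ 0) :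
    fz (((m : ZMod q).val : ℝ)/q) = ph ((m:ℝ)/q) := by
  have hq0 : (0:ℝ) < q := by exact_mod_cast (NeZero.pos q)
  have hv : (((m : ZMod q).val : ℤ)) = m % q := ZMod.val_intCast m
  have hpos : 0 < (m : ZMod q).val := Nat.pos_of_ne_zero (by rwa [ne_eq, ZMod.val_eq_zero])
  have hlt := ZMod.val_lt (m : ZMod q)
  have e : (m:ℝ)/q = (((m : ZMod q).val : ℝ)/q) + ((m / (q:ℤ) : ℤ):ℝ) := by
    have h2 : ((m : ZMod q).val : ℤ) + q * (m / (q:ℤ)) = m := by rw [hv]; exact Int.emod_add_mul_ediv m q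
    have h3 : (((m : ZMod q).val : ℝ)) + q * ((m / (q:ℤ) : ℤ):ℝ) = m := by exact_mod_cast h2
    field_simp
    linarith
  rw [e, ph_add_int, ph_eq (by positivity) (by rw [div_le_one hq0]; exact_mod_cast hlt.le)]

lemma sum_zmod {q : ℕ} [NeZero q] (g : ZMod q → ℝ) (g0 : g 0 = 0) :
    ∑ j : ZMod q, g j = ∑ n ∈ Finset.Ico 1 q, g (n : ZMod q) := by
  have h1 : ∑ j : ZMod q, g j = ∑ n ∈ Finset.range q, g (n : ZMod q) := by
    refine Finset.sum_nbij' (i := ZMod.val) (j := fun n : ℕ => (n : ZMod q)) ?_ ?_ ?_ ?_ ?_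
    · intro a _; exact Finset.mem_range.2 (ZMod.val_lt a)
    · intro a _; simp
    · intro a _; simp
    · intro a ha; exact ZMod.val_cast_of_lt (Finset.mem_range.1 ha)
    · intro a _; simp
  rw [h1, Finset.range_eq_Ico, Finset.sum_eq_sum_Ico_succ_bot (NeZero.pos q)]
  simp [g0]

section
variable {q : ℕ} [hqp : Fact q.Prime]

noncomputable def Fq (j : ZMod q) : ℝ := if j = 0 then 0 else fz ((j.val:ℝ)/q)

noncomputable def Lc (χ : DirichletCharacter ℂ q) : ℂ := ∑ j : ZMod q, χ j * ((Fq j : ℝ) : ℂ)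

lemma Lc_eq (χ : DirichletCharacter ℂ q) (hχ : χ ≠ 1) :
    χ.LFunction (1/2) = ((1/√q : ℝ):ℂ) * Lc χ := by
  rw [LF_half hqp.out.one_lt χ hχ]
  congr 1
  apply Finset.sum_congr rfl
  intro j _
  unfold Fq
  by_cases hj : j = 0
  · rw [hj, MulChar.map_zero χ]; simp
  · simp [hj]

lemma conj_char (χ : DirichletCharacter ℂ q) (b : ZMod q) : (starRingEnd ℂ) (χ b) = χ b⁻¹ := by
  have h1 : star (χ b) = χ⁻¹ b := MulChar.star_apply' χ b
  rw [← MulChar.inv_apply' χ b, ← h1]; rfl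

lemma conj_Lc (χ : DirichletCharacter ℂ q) : (starRingEnd ℂ) (Lc χ) = ∑ j : ZMod q, χ j⁻¹ * ((Fq j : ℝ) : ℂ) := by
  unfold Lc
  rw [map_sum]
  apply Finset.sum_congr rfl
  intro j _
  rw [map_mul, conj_char, Complex.conj_ofReal]

/-- full orthogonality -/
lemma orth (u v : ZMod q) (hu : u ≠ 0) (hv : v ≠ 0) :
    ∑ χ : DirichletCharacter ℂ q, (Lc χ * (starRingEnd ℂ) (Lc χ)) * χ u * χ v⁻¹ =
      (((q.totient : ℝ) * ∑ n : ZMod q, Fq (v * n) * Fq (u * n) : ℝ) : ℂ) := by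
  have h1 : ∀ χ : DirichletCharacter ℂ q, (Lc χ * (starRingEnd ℂ) (Lc χ)) * χ u * χ v⁻¹ =
      ∑ n : ZMod q, ∑ a : ZMod q, (χ (v*(u*n))⁻¹ * χ (u*a)) * (((Fq a * Fq (u*n) : ℝ)) : ℂ) := by
    intro χ
    rw [conj_Lc]
    have : ∑ j : ZMod q, χ j⁻¹ * ((Fq j : ℝ) : ℂ) = ∑ n : ZMod q, χ (u*n)⁻¹ * ((Fq (u*n) : ℝ) : ℂ) :=
      (Equiv.sum_comp (Equiv.mulLeft₀ u hu) (fun j => χ j⁻¹ * ((Fq j : ℝ) : ℂ))).symm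
    rw [this]
    unfold Lc
    rw [Finset.sum_mul_sum, Finset.sum_comm]
    simp_rw [Finset.sum_mul]
    apply Finset.sum_congr rfl; intro n _
    apply Finset.sum_congr rfl; intro a _
    rw [mul_inv v, map_mul χ v⁻¹, map_mul χ u a]
    push_cast
    ring
  simp_rw [h1]
  rw [Finset.sum_comm]
  push_cast
  rw [Finset.mul_sum]
  apply Finset.sum_congr rfl; intro n _
  rw [Finset.sum_comm]
  simp_rw [← Finset.sum_mul]
  by_cases hn : n = 0
  · subst hn; simp [Fq]
  · have hunit : IsUnit (v*(u*n)) := (mul_ne_zero hv (mul_ne_zero hu hn)).isUnit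
    simp_rw [DirichletCharacter.sum_char_inv_mul_char_eq ℂ hunit]
    have hiff : ∀ a : ZMod q, (v*(u*n) = u*a) ↔ (v*n = a) := by
      intro a
      rw [show v*(u*n) = u*(v*n) by ring, mul_right_inj' hu]
    simp_rw [hiff]
    rw [Finset.sum_eq_single (v*n)]
    · simp
    · intro b _ hb; rw [if_neg (Ne.symm hb)]; simp
    · simp

lemma sum_Fq_ph (u v : ℤ) (hu : (u : ZMod q) ≠ 0) (hv : (v : ZMod q) ≠ 0) :
    ∑ n : ZMod q, Fq ((v : ZMod q) * n) * Fq ((u : ZMod q) * n) =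
      ∑ n ∈ Finset.Ico 1 q, ph (v * ((n:ℝ)/q)) * ph (u * ((n:ℝ)/q)) := by
  rw [sum_zmod]
  · apply Finset.sum_congr rfl
    intro n hn
    rw [Finset.mem_Ico] at hn
    have hn0 : (n : ZMod q) ≠ 0 := by
      rw [ne_eq, ZMod.natCast_eq_zero_iff]
      exact Nat.not_dvd_of_pos_of_lt hn.1 hn.2
    have key : ∀ w : ℤ, (w : ZMod q) ≠ 0 → Fq ((w : ZMod q) * (n : ZMod q)) = ph (w * ((n:ℝ)/q)) := by
      intro w hw
      have h1 : ((w * n : ℤ) : ZMod q) ≠ 0 := by push_cast; exact mul_ne_zero hw hn0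
      have h2 := fz_val (q := q) (w*n) h1
      push_cast at h2 h1
      unfold Fq
      rw [if_neg h1, h2, mul_div_assoc]
    rw [key u hu, key v hv]
  · simp [Fq]

lemma sum_Fq : ∑ j : ZMod q, Fq j = (√q - 1) * fz 1 := by
  have hq : 0 < q := hqp.out.pos
  rw [sum_zmod _ (by simp [Fq])]
  have h := fz_dist (x := 1) one_pos hq
  have e : ∑ n ∈ Finset.Ico 1 q, Fq (n : ZMod q) = ∑ n ∈ Finset.Ico 1 q, fz ((n:ℝ)/q) := by
    apply Finset.sum_congr rfl
    intro n hn
    rw [Finset.mem_Ico] at hn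
    have hn0 : (n : ZMod q) ≠ 0 := by
      rw [ne_eq, ZMod.natCast_eq_zero_iff]
      exact Nat.not_dvd_of_pos_of_lt hn.1 hn.2
    unfold Fq
    rw [if_neg hn0, ZMod.val_cast_of_lt hn.2]
  have e2 : ∑ j ∈ Finset.range q, fz ((1+j)/q) = ∑ n ∈ Finset.Ico 1 q, fz ((n:ℝ)/q) + fz 1 := by
    have : ∑ j ∈ Finset.range q, fz ((1+j)/q) = ∑ n ∈ Finset.Ico 1 (q+1), fz ((n:ℝ)/q) := by
      rw [Finset.sum_Ico_eq_sum_range]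
      simp
    rw [this, Finset.sum_Ico_succ_top hq, div_self (by exact_mod_cast hq.ne')]
  rw [e]; linarith

lemma Lc_one : Lc (1 : DirichletCharacter ℂ q) = (((√q - 1) * fz 1 : ℝ) : ℂ) := by
  rw [← sum_Fq]
  unfold Lc
  push_cast
  apply Finset.sum_congr rfl
  intro j _
  by_cases hj : j = 0
  · simp [hj, Fq]
  · rw [MulChar.one_apply (isUnit_iff_ne_zero.2 hj), one_mul]

end

lemma Mpm_eq (q : ℕ) (hq : q.Prime) [NeZero q] (h k : ℕ) (h1 : 1 ≤ h) (hhq : h < q) (k1 : 1 ≤ k) (hkq : k < q)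
    (ε : ℤ) (hε : ε = 1 ∨ ε = -1) :
    ∃ t : ℝ, |t| ≤ 18 ∧ Mpm ε h k q = (((1/(2*√q)) *
      ((∑ n ∈ Finset.Ico 1 q, ph (k * ((n:ℝ)/q)) * ph (h * ((n:ℝ)/q))) +
        ε * ∑ n ∈ Finset.Ico 1 q, ph (k * ((n:ℝ)/q)) * ph (-(h * ((n:ℝ)/q)))) - t : ℝ) : ℂ) := by
  haveI hF : Fact q.Prime := ⟨hq⟩
  have hq2 : (2:ℝ) ≤ q := by exact_mod_cast hq.two_le
  have hh0 : ((h:ℤ) : ZMod q) ≠ 0 := by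
    rw [Int.cast_natCast, ne_eq, ZMod.natCast_eq_zero_iff]
    exact Nat.not_dvd_of_pos_of_lt h1 hhq
  have hk0 : ((k:ℤ) : ZMod q) ≠ 0 := by
    rw [Int.cast_natCast, ne_eq, ZMod.natCast_eq_zero_iff]
    exact Nat.not_dvd_of_pos_of_lt k1 hkq
  have hnh0 : ((-h:ℤ) : ZMod q) ≠ 0 := by rw [Int.cast_neg]; exact neg_ne_zero.2 hh0
  have hsq : √(q:ℝ)*√q = q := Real.mul_self_sqrt (by positivity)
  have hsp : 0 < √(q:ℝ) := Real.sqrt_pos.2 (by positivity)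
  have htot : (q.totient : ℝ) = q - 1 := by
    rw [Nat.totient_prime hq, Nat.cast_sub hq.one_le]; simp
  -- the weights
  have hw : ∀ χ : DirichletCharacter ℂ q, (if χ ≠ 1 ∧ χ (-1 : ZMod q) = (ε : ℂ) then
      (‖χ.LFunction (1/2)‖^2 : ℂ) * χ ((h:ℤ) : ZMod q) * (starRingEnd ℂ) (χ ((k:ℤ) : ZMod q)) else 0) =
      (1/(2*(q:ℂ))) * ((Lc χ * (starRingEnd ℂ) (Lc χ)) * χ ((h:ℤ) : ZMod q) * χ ((k:ℤ) : ZMod q)⁻¹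
        + ε * ((Lc χ * (starRingEnd ℂ) (Lc χ)) * χ ((-h:ℤ) : ZMod q) * χ ((k:ℤ) : ZMod q)⁻¹)) -
      (if χ = 1 then (1/(2*(q:ℂ))) * (1 + ε) * (((√q - 1) * fz 1 : ℝ) : ℂ)^2 else 0) := by
    intro χ
    have hneg : χ ((-h:ℤ) : ZMod q) = χ (-1) * χ ((h:ℤ) : ZMod q) := by
      rw [← map_mul]; congr 1; push_cast; ring
    rw [hneg]
    by_cases hχ : χ = 1
    · subst hχ
      rw [if_neg (by simp), if_pos rfl, Lc_one, Complex.conj_ofReal, MulChar.one_apply hh0.isUnit,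
        MulChar.one_apply (inv_ne_zero hk0).isUnit, MulChar.one_apply (neg_ne_zero.2 (one_ne_zero)).isUnit]
      ring
    · rw [if_neg hχ, sub_zero]
      have hL : (‖χ.LFunction (1/2)‖^2 : ℂ) = (1/(q:ℂ)) * (Lc χ * (starRingEnd ℂ) (Lc χ)) := by
        rw [← Complex.mul_conj', Lc_eq χ hχ, map_mul, Complex.conj_ofReal]
        have : ((1/√q : ℝ):ℂ) * ((1/√q : ℝ):ℂ) = 1/(q:ℂ) := by
          rw [← Complex.ofReal_mul]
          have : 1/√(q:ℝ) * (1/√q) = 1/q := by rw [div_mul_div_comm, hsq]; norm_num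
          rw [this]; simp
        rw [← this]; ring
      have hsqr : χ (-1) = 1 ∨ χ (-1) = -1 := by
        have : χ (-1) * χ (-1) = 1 := by rw [← map_mul]; simp
        exact mul_self_eq_one_iff.1 this
      rw [hL, conj_char]
      have hq0 : (q:ℂ) ≠ 0 := by exact_mod_cast hq.ne_zero
      have h11 : (1:ℂ) ≠ -1 := by norm_num
      rcases hsqr with hs | hs <;> rcases hε with rfl | rfl <;>
        simp [hs, hχ, h11, h11.symm] <;> first | ring | (field_simp; ring) | skip
  set t : ℝ := (√q/(q.totient:ℝ)) * ((1/(2*(q:ℝ))) * (1 + ε) * ((√q - 1) * fz 1)^2) with ht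
  refine ⟨t, ?_, ?_⟩
  · have hB := Bz_le (x := 0) le_rfl zero_le_one
    have hB0 := Bz_nonneg (x := 0) le_rfl
    unfold Bz at hB hB0
    rw [zero_add] at hB hB0
    have hf : (fz 1)^2 ≤ 9 := by nlinarith
    have he : |1 + (ε:ℝ)| ≤ 2 := by rcases hε with rfl | rfl <;> norm_num
    rw [ht, htot]
    have hq1 : (0:ℝ) < q - 1 := by linarith
    rw [abs_mul, abs_mul, abs_mul, abs_of_nonneg (by positivity : 0 ≤ √(q:ℝ)/((q:ℝ)-1)), abs_of_nonneg (by positivity : 0 ≤ 1/(2*(q:ℝ))), abs_of_nonneg (by positivity : 0 ≤ ((√(q:ℝ) - 1) * fz 1)^2)]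
    have s1 : 1 ≤ √(q:ℝ) := by rw [Real.one_le_sqrt]; linarith
    have a1 : √(q:ℝ)/((q:ℝ)-1) ≤ 2 := by
      rw [div_le_iff₀ hq1]; nlinarith
    have a2 : ((√(q:ℝ) - 1) * fz 1)^2 ≤ q * 9 := by
      rw [mul_pow]
      have : (√(q:ℝ) - 1)^2 ≤ q := by nlinarith
      gcongr
    calc √(q:ℝ)/((q:ℝ)-1) * (1/(2*(q:ℝ)) * |1+(ε:ℝ)| * ((√(q:ℝ) - 1) * fz 1)^2)
        ≤ 2 * (1/(2*(q:ℝ)) * 2 * (q * 9)) := by gcongr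
      _ = 18 := by field_simp; norm_num
  · unfold Mpm
    have hsum := Finset.sum_congr (rfl : (Finset.univ : Finset (DirichletCharacter ℂ q)) = Finset.univ) (fun χ _ => hw χ)
    have hcong2 := congrArg (fun z => ((√(q:ℝ):ℝ):ℂ)/((q.totient : ℝ):ℂ) * z) hsum
    refine Eq.trans ?_ (hcong2.trans ?_)
    · simp only
    · rw [Finset.sum_sub_distrib, Finset.sum_ite_eq' Finset.univ, if_pos (Finset.mem_univ _), ← Finset.mul_sum,
        Finset.sum_add_distrib, ← Finset.mul_sum, orth _ _ hh0 hk0, orth _ _ hnh0 hk0, sum_Fq_ph _ _ hh0 hk0, sum_Fq_ph _ _ hnh0 hk0]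
      have e : ∀ n : ℕ, (((-(h:ℤ) : ℤ):ℝ)) * ((n:ℝ)/q) = -(h * ((n:ℝ)/q)) := by
        intro n; push_cast; ring
      simp_rw [e]
      rw [ht]
      rw [← Complex.ofReal_natCast q, ← Complex.ofReal_intCast ε]
      norm_cast
      push_cast
      have htp : (q.totient:ℝ) ≠ 0 := by rw [htot]; linarith
      set A := ∑ n ∈ Finset.Ico 1 q, ph (k * ((n:ℝ)/q)) * ph (h * ((n:ℝ)/q))
      set A' := ∑ n ∈ Finset.Ico 1 q, ph (k * ((n:ℝ)/q)) * ph (-(h * ((n:ℝ)/q)))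
      have hf : √(q:ℝ)/q = 1/√q := by
        rw [div_eq_div_iff (by positivity) hsp.ne', hsq]; ring
      have : (√(q:ℝ)/(q.totient:ℝ)) * (1/(2*(q:ℝ)) * ((q.totient:ℝ)*A + ε * ((q.totient:ℝ)*A'))) = (1/2)*(√(q:ℝ)/q) * (A + ε*A') := by
        field_simp
      rw [mul_sub, this, hf]
      ring

end TT

namespace TT
open MeasureTheory intervalIntegral

lemma ii_pz (a b : ℝ) : IntervalIntegrable pz volume a b := by
  have h := intervalIntegral.intervalIntegrable_rpow' (a := a) (b := b) (r := -(1/2)) (by norm_num)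
  refine h.mono_fun (pz_meas.aestronglyMeasurable) (Filter.Eventually.of_forall fun x => ?_)
  unfold pz
  beta_reduce
  by_cases hx : 0 ≤ x
  · rw [Real.rpow_neg hx, ← Real.sqrt_eq_rpow, one_div]
  · rw [Real.sqrt_eq_zero_of_nonpos (by linarith)]
    simp

lemma int_pz (a b : ℝ) : ∫ x in a..b, pz x = 2*√b - 2*√a := by
  refine MeasureTheory.integral_eq_of_hasDerivAt_off_countable (fun x => 2*√x) pz
    (Set.countable_singleton (0:ℝ)) (by fun_prop) ?_ (ii_pz a b)
  rintro x ⟨_, hx⟩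
  have hx0 : x ≠ 0 := hx
  rcases lt_or_gt_of_ne hx0 with h | h
  · have : pz x = 0 := by unfold pz; rw [Real.sqrt_eq_zero_of_nonpos h.le]; simp
    rw [this]
    refine (hasDerivAt_const x (0:ℝ)).congr_of_eventuallyEq ?_
    filter_upwards [Iio_mem_nhds h] with y hy
    rw [Real.sqrt_eq_zero_of_nonpos (le_of_lt hy)]; simp
  · have h1 := (Real.hasDerivAt_sqrt hx0).const_mul 2
    have e : pz x = 2 * (1/(2*√x)) := by unfold pz; field_simp
    rw [e]; exact h1

noncomputable def Dz (x : ℝ) : ℝ := pz (Int.fract x) + pz (1 - Int.fract x)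

lemma Dz_meas : Measurable Dz := by
  unfold Dz
  exact (pz_meas.comp measurable_fract).add (pz_meas.comp (measurable_const.sub measurable_fract))

lemma Dz_periodic : Function.Periodic Dz 1 := by
  intro x; unfold Dz; rw [Int.fract_add_one]

lemma one_le_Dz (x : ℝ) : 1 ≤ Dz x := by
  have h1 := Int.fract_nonneg x
  have h2 := Int.fract_lt_one x
  have := pz_ge (x := 1 - Int.fract x) (by linarith) (by linarith)
  have := pz_nonneg (Int.fract x)
  unfold Dz; linarith

lemma Dz_nonneg (x : ℝ) : 0 ≤ Dz x := le_trans zero_le_one (one_le_Dz x)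

lemma Dz_neg (x : ℝ) : Dz (-x) = Dz x := by
  unfold Dz
  by_cases h : Int.fract x = 0
  · have : Int.fract (-x) = 0 := by rw [Int.fract_neg_eq_zero]; exact h
    rw [h, this]
  · rw [Int.fract_neg h]
    rw [sub_sub_cancel, add_comm]

lemma Dz_refl (k : ℕ) (x : ℝ) : Dz (k*(1-x)) = Dz (k*x) := by
  rw [← Dz_neg (k*x)]
  have := Dz_periodic.nat_mul k (-(k*x))
  rw [← this]; congr 1; ring

lemma Dz_le {y u v : ℝ} (hu : 0 < u) (hv : 0 < v) (h1 : u ≤ Int.fract y) (h2 : v ≤ 1 - Int.fract y) :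
    Dz y ≤ pz u + pz v := by
  unfold Dz
  exact add_le_add (pz_anti hu h1) (pz_anti hv h2)

lemma Dz_near_int {y : ℝ} (i : ℤ) (h0 : y ≠ i) (h1 : |y - i| ≤ 1/2) : Dz y ≤ 2 * pz |y-i| := by
  have hp : 0 < |y - i| := abs_pos.2 (sub_ne_zero.2 h0)
  rw [two_mul]
  rcases lt_or_gt_of_ne h0 with h | h
  · rw [abs_of_neg (by linarith)] at hp h1 ⊢
    have hf : Int.fract y = y - i + 1 := by
      rw [Int.fract_eq_iff]; refine ⟨by linarith, by linarith, i-1, by push_cast; ring⟩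
    apply Dz_le hp hp <;> rw [hf] <;> linarith
  · rw [abs_of_pos (by linarith)] at hp h1 ⊢
    have hf : Int.fract y = y - i := by
      rw [Int.fract_eq_iff]; refine ⟨by linarith, by linarith, i, by push_cast; ring⟩
    apply Dz_le hp hp <;> rw [hf] <;> linarith

lemma Dz_near_frac {y δ : ℝ} (a : ℤ) {s h : ℕ} (hs : 1 ≤ s) (hsh : s < h) (hy : y = a + (s:ℝ)/h + δ)
    (hδ : |δ| ≤ 1/(4*h)) : Dz y ≤ pz ((s:ℝ)/(4*h)) + pz (((h:ℝ)-s)/(4*h)) := by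
  have hh : (0:ℝ) < h := by exact_mod_cast (by omega : 0 < h)
  have hs' : (1:ℝ) ≤ s := by exact_mod_cast hs
  have hsh' : (s:ℝ) + 1 ≤ h := by exact_mod_cast hsh
  rw [abs_le] at hδ
  have e1 : (s:ℝ)/(4*h) = ((s:ℝ)/h)/4 := by field_simp
  have e2 : ((h:ℝ)-s)/(4*h) = (1 - (s:ℝ)/h)/4 := by field_simp
  have e3 : 1/(4*(h:ℝ)) = (1/h)/4 := by field_simp
  have e4 : 1/(h:ℝ) ≤ s/h := by gcongr
  have e5 : 1/(h:ℝ) ≤ 1 - s/h := by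
    rw [div_le_iff₀ hh, sub_mul, div_mul_cancel₀ _ hh.ne']; linarith
  have e6 : 0 < 1/(h:ℝ) := by positivity
  rw [e3] at hδ
  rw [e1, e2]
  have hf : Int.fract y = (s:ℝ)/h + δ := by
    rw [Int.fract_eq_iff]; refine ⟨by linarith, by linarith, a, by rw [hy]; ring⟩
  apply Dz_le <;> (try rw [hf]) <;> linarith

lemma ii_Dz (a b : ℝ) : IntervalIntegrable Dz volume a b := by
  have h0 : IntervalIntegrable Dz volume 0 1 := by
    have h1 : IntervalIntegrable (fun x => pz x + pz (1 - x)) volume 0 1 := by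
      refine (ii_pz 0 1).add ?_
      have := ((ii_pz 1 0).comp_sub_left (1:ℝ))
      simpa using this
    refine h1.congr_ae ?_
    rw [Set.uIoc_of_le zero_le_one]
    rw [Filter.EventuallyEq, ae_restrict_iff' measurableSet_Ioc]
    have : ∀ᵐ x : ℝ, x ≠ 1 := by simp [ae_iff]
    filter_upwards [this] with x hx hx2
    have : Int.fract x = x := Int.fract_eq_self.2 ⟨hx2.1.le, lt_of_le_of_ne hx2.2 hx⟩
    unfold Dz; rw [this]
  exact Dz_periodic.intervalIntegrable₀ one_ne_zero h0 a b

lemma ii_Dz_mul {k : ℕ} (hk : 1 ≤ k) (a b : ℝ) : IntervalIntegrable (fun x => Dz (k*x)) volume a b := by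
  have hk0 : (k:ℝ) ≠ 0 := by positivity
  have := (ii_Dz (k*a) (k*b)).comp_mul_left (c := (k:ℝ))
  simpa [hk0] using this

end TT

namespace TT
open MeasureTheory intervalIntegral

structure Gd (h k : ℕ) (K : ℝ) (Φ : ℝ → ℝ) : Prop where
  meas : Measurable Φ
  nn : ∀ x, 0 ≤ Φ x
  b1 : ∀ x, 0 < x → x < 1 → Φ x ≤ K * (Dz (k*x) * Dz (h*x))
  b2 : ∀ x, 0 < x → x < 1 → Φ x ≤ K * (√h * Dz (h*x) + √k * Dz (k*x))

def Dec (h k : ℕ) (Φ : ℝ → ℝ) : Prop := ∀ (x y : ℝ) (i j : ℤ), 0 < x → x ≤ y → y < 1 →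
  (i:ℝ) < k*x → k*y < i+1 → (j:ℝ) < h*x → h*y < j+1 → Φ y ≤ Φ x

lemma Gd.swap {h k : ℕ} {K : ℝ} {Φ : ℝ → ℝ} (H : Gd h k K Φ) : Gd k h K Φ where
  meas := H.meas
  nn := H.nn
  b1 := fun x h0 h1 => by rw [mul_comm (Dz _)]; exact H.b1 x h0 h1
  b2 := fun x h0 h1 => by rw [add_comm]; exact H.b2 x h0 h1

lemma Gd.ii {h k : ℕ} {K : ℝ} {Φ : ℝ → ℝ} (H : Gd h k K Φ) (hh : 1 ≤ h) (hk : 1 ≤ k) :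
    IntervalIntegrable Φ volume 0 1 := by
  have h1 : IntervalIntegrable (fun x => K * (√h * Dz (h*x) + √k * Dz (k*x))) volume 0 1 :=
    (((ii_Dz_mul hh 0 1).const_mul _).add ((ii_Dz_mul hk 0 1).const_mul _)).const_mul _
  refine h1.mono_fun H.meas.aestronglyMeasurable ?_
  rw [Set.uIoc_of_le zero_le_one, Filter.EventuallyLE, ae_restrict_iff' measurableSet_Ioc]
  have : ∀ᵐ x : ℝ, x ≠ 1 := by simp [ae_iff]
  filter_upwards [this] with x hx hx2
  have h3 := H.b2 x hx2.1 (lt_of_le_of_ne hx2.2 hx)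
  rw [Real.norm_of_nonneg (H.nn x)]
  exact h3.trans (le_abs_self _)

/-- cell integral times q -/
noncomputable def cellI (q : ℕ) (Φ : ℝ → ℝ) (n : ℕ) : ℝ := q * ∫ x in ((n:ℝ)/q)..(((n+1:ℕ):ℝ)/q), Φ x

noncomputable def cellG (q : ℕ) (Φ : ℝ → ℝ) (n : ℕ) : ℝ :=
  cellI q Φ n + (if n + 1 < q then Φ (((n+1:ℕ):ℝ)/q) else 0)

lemma cellI_nonneg (q : ℕ) (Φ : ℝ → ℝ) (nn : ∀ x, 0 ≤ Φ x) (n : ℕ) : 0 ≤ cellI q Φ n := by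
  unfold cellI
  refine mul_nonneg (by positivity) (intervalIntegral.integral_nonneg ?_ (fun x _ => nn x))
  gcongr; simp

lemma riem (q : ℕ) (hq : 2 ≤ q) (Φ : ℝ → ℝ) (nn : ∀ x, 0 ≤ Φ x) (ii : IntervalIntegrable Φ volume 0 1)
    (bad : Finset ℕ) (h0 : 0 ∈ bad) (h1 : q - 1 ∈ bad)
    (hm : ∀ n, n < q → n ∉ bad → cellI q Φ n ≤ Φ ((n:ℝ)/q) ∧ Φ (((n+1:ℕ):ℝ)/q) ≤ cellI q Φ n) :
    |∑ n ∈ Finset.Ico 1 q, Φ ((n:ℝ)/q) - q * ∫ x in (0:ℝ)..1, Φ x| ≤ ∑ n ∈ bad, cellG q Φ n := by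
  have hq0 : (0:ℝ) < q := by positivity
  have hInn := cellI_nonneg q Φ nn
  have hsum : q * ∫ x in (0:ℝ)..1, Φ x = ∑ n ∈ Finset.range q, cellI q Φ n := by
    unfold cellI
    rw [← Finset.mul_sum]
    congr 1
    rw [intervalIntegral.sum_integral_adjacent_intervals (a := fun n : ℕ => (n:ℝ)/q)]
    · simp [hq0.ne']
    · intro n hn
      refine ii.mono_set ?_
      rw [Set.uIcc_of_le (by gcongr; simp), Set.uIcc_of_le zero_le_one]
      refine Set.Icc_subset_Icc (by positivity) ?_
      rw [div_le_one hq0]; exact_mod_cast hn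
  have hGnn : ∀ n, 0 ≤ cellG q Φ n := fun n => by
    unfold cellG
    have : 0 ≤ (if n + 1 < q then Φ (((n+1:ℕ):ℝ)/q) else 0) := by split_ifs; exacts [nn _, le_rfl]
    linarith [hInn n]
  have hbsum : ∑ n ∈ (Finset.range q).filter (· ∈ bad), cellG q Φ n ≤ ∑ n ∈ bad, cellG q Φ n := by
    apply Finset.sum_le_sum_of_subset_of_nonneg
    · intro n hn; exact (Finset.mem_filter.1 hn).2
    · intro n _ _; exact hGnn n
  rw [hsum]
  refine le_trans ?_ hbsum
  rw [Finset.sum_filter]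
  rw [abs_le]
  constructor
  · -- lower
    have : ∑ n ∈ Finset.range q, cellI q Φ n ≤ ∑ n ∈ Finset.range q, ((if n ∈ bad then cellG q Φ n else 0) + (if n = 0 then 0 else Φ ((n:ℝ)/q))) := by
      apply Finset.sum_le_sum
      intro n hn
      by_cases hb : n ∈ bad
      · rw [if_pos hb]
        have : cellI q Φ n ≤ cellG q Φ n := by
          unfold cellG; split_ifs
          · linarith [nn (((n+1:ℕ):ℝ)/q)]
          · linarith
        have : 0 ≤ (if n = 0 then 0 else Φ ((n:ℝ)/q)) := by split_ifs; exacts [le_rfl, nn _]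
        linarith
      · have hn0 : n ≠ 0 := fun h => hb (h ▸ h0)
        rw [if_neg hb, if_neg hn0, zero_add]
        exact (hm n (Finset.mem_range.1 hn) hb).1
    rw [Finset.sum_add_distrib] at this
    have e : ∑ n ∈ Finset.range q, (if n = 0 then 0 else Φ ((n:ℝ)/q)) = ∑ n ∈ Finset.Ico 1 q, Φ ((n:ℝ)/q) := by
      rw [Finset.range_eq_Ico, Finset.sum_eq_sum_Ico_succ_bot (by omega)]
      simp only [if_true, zero_add]
      apply Finset.sum_congr rfl
      intro n hn
      rw [if_neg]; have := (Finset.mem_Ico.1 hn).1; omega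
    linarith
  · have e : ∑ n ∈ Finset.Ico 1 q, Φ ((n:ℝ)/q) = ∑ n ∈ Finset.range q, (if n + 1 < q then Φ (((n+1:ℕ):ℝ)/q) else 0) := by
      obtain ⟨p, rfl⟩ : ∃ p, q = p + 1 := ⟨q-1, by omega⟩
      rw [Finset.sum_range_succ, Finset.sum_Ico_eq_sum_range]
      simp only [lt_irrefl, if_false, add_zero, Nat.add_sub_cancel]
      apply Finset.sum_congr rfl
      intro n hn
      rw [if_pos (by have := Finset.mem_range.1 hn; omega), add_comm 1 n]
    rw [e, ← Finset.sum_sub_distrib]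
    apply Finset.sum_le_sum
    intro n hn
    by_cases hb : n ∈ bad
    · rw [if_pos hb]; unfold cellG; linarith [hInn n]
    · rw [if_neg hb]
      have hn' := Finset.mem_range.1 hn
      have : n ≠ q - 1 := fun h => hb (h ▸ h1)
      rw [if_pos (by omega)]
      linarith [(hm n hn' hb).2]

lemma cell_floor {q h n : ℕ} (hq : q.Prime) (h1 : 1 ≤ h) (hhq : h < q) (n1 : 1 ≤ n) (nq : n + 1 < q)
    (hb : ∀ i ∈ Finset.Ico 1 h, q*i/h ≠ n) :
    ∃ j : ℤ, ∀ x : ℝ, (n:ℝ)/q ≤ x → x ≤ ((n+1:ℕ):ℝ)/q → (j:ℝ) < h*x ∧ h*x < j+1 := by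
  have hq0 : (0:ℝ) < q := by exact_mod_cast hq.pos
  have hnd : ∀ m, 1 ≤ m → m < q → ¬ q ∣ h*m := by
    intro m m1 mq hd
    rcases (Nat.Prime.dvd_mul hq).1 hd with hd | hd
    · exact Nat.not_dvd_of_pos_of_lt h1 hhq hd
    · exact Nat.not_dvd_of_pos_of_lt m1 mq hd
  set j := h*n/q with hj
  have k1 : q * j < h*n := by
    have := Nat.mul_div_le (h*n) q
    refine lt_of_le_of_ne this (fun e => hnd n n1 (by omega) ⟨_, e.symm⟩)
  have k2 : h*(n+1) < q*(j+1) := by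
    by_contra hc
    push Not at hc
    have hne : q*(j+1) ≠ h*(n+1) := fun e => hnd (n+1) (by omega) nq ⟨_, e.symm⟩
    have hlt : q*(j+1) < h*(n+1) := lt_of_le_of_ne hc hne
    have hj1 : j + 1 < h := by
      by_contra hh
      push Not at hh
      have : q*h ≤ q*(j+1) := Nat.mul_le_mul_left _ hh
      have : h*(n+1) < h * q := Nat.mul_lt_mul_of_pos_left nq h1
      nlinarith
    have k3 : h*n < q*(j+1) := by
      rw [hj]; exact Nat.lt_mul_div_succ (h*n) hq.pos
    apply hb (j+1) (Finset.mem_Ico.2 ⟨Nat.le_add_left 1 j, hj1⟩)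
    rw [Nat.div_eq_iff (by omega)]
    constructor
    · nlinarith
    · rw [show n*h + h - 1 = h*(n+1) - 1 by ring_nf]; omega
  have k1' : (q:ℝ)*j < h*n := by exact_mod_cast k1
  have k2' : (h:ℝ)*(n+1) < q*(j+1) := by exact_mod_cast k2
  refine ⟨j, fun x hx1 hx2 => ⟨?_, ?_⟩⟩
  · have : (j:ℝ) < h * ((n:ℝ)/q) := by rw [← mul_div_assoc, lt_div_iff₀ hq0]; linarith
    push_cast
    refine this.trans_le (by gcongr)
  · have : (h:ℝ) * (((n+1:ℕ):ℝ)/q) < j + 1 := by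
      rw [← mul_div_assoc, div_lt_iff₀ hq0]; push_cast; linarith
    push_cast at this ⊢
    refine lt_of_le_of_lt ?_ this
    push_cast at hx2
    gcongr

lemma cell_dec {q : ℕ} (hq0 : (0:ℝ) < q) {Φ : ℝ → ℝ} {n : ℕ}
    (ii : IntervalIntegrable Φ volume ((n:ℝ)/q) (((n+1:ℕ):ℝ)/q))
    (hd : ∀ x y, (n:ℝ)/q ≤ x → x ≤ y → y ≤ ((n+1:ℕ):ℝ)/q → Φ y ≤ Φ x) :
    cellI q Φ n ≤ Φ ((n:ℝ)/q) ∧ Φ (((n+1:ℕ):ℝ)/q) ≤ cellI q Φ n := by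
  have hle : (n:ℝ)/q ≤ ((n+1:ℕ):ℝ)/q := by gcongr; simp
  have hlen : ((n+1:ℕ):ℝ)/q - (n:ℝ)/q = 1/q := by push_cast; ring
  unfold cellI
  constructor
  · have : ∫ x in ((n:ℝ)/q)..(((n+1:ℕ):ℝ)/q), Φ x ≤ ∫ x in ((n:ℝ)/q)..(((n+1:ℕ):ℝ)/q), Φ ((n:ℝ)/q) :=
      intervalIntegral.integral_mono_on hle ii (by simp) (fun x hx => hd _ _ le_rfl hx.1 hx.2)
    rw [intervalIntegral.integral_const, hlen, smul_eq_mul] at this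
    calc _ ≤ q * (1/q * Φ ((n:ℝ)/q)) := by gcongr
      _ = _ := by field_simp
  · have : ∫ x in ((n:ℝ)/q)..(((n+1:ℕ):ℝ)/q), Φ (((n+1:ℕ):ℝ)/q) ≤ ∫ x in ((n:ℝ)/q)..(((n+1:ℕ):ℝ)/q), Φ x :=
      intervalIntegral.integral_mono_on hle (by simp) ii (fun x hx => hd _ _ hx.1 hx.2 le_rfl)
    rw [intervalIntegral.integral_const, hlen, smul_eq_mul] at this
    calc _ = q * (1/q * Φ (((n+1:ℕ):ℝ)/q)) := by field_simp
      _ ≤ _ := by gcongr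

end TT

namespace TT
open MeasureTheory intervalIntegral

lemma mod_mem {u h i : ℕ} (hc : Nat.Coprime u h) (hi : i ∈ Finset.Ico 1 h) : u*i%h ∈ Finset.Ico 1 h := by
  rw [Finset.mem_Ico] at hi ⊢
  refine ⟨Nat.pos_of_ne_zero fun e => ?_, Nat.mod_lt _ (by omega)⟩
  have hd : h ∣ u*i := Nat.dvd_of_mod_eq_zero e
  exact Nat.not_dvd_of_pos_of_lt hi.1 hi.2 (hc.symm.dvd_of_dvd_mul_left hd)

lemma perm_sum {u h : ℕ} (hc : Nat.Coprime u h) (F : ℕ → ℝ) :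
    ∑ i ∈ Finset.Ico 1 h, F (u*i%h) = ∑ s ∈ Finset.Ico 1 h, F s := by
  have hinj : Set.InjOn (fun i => u*i%h) (Finset.Ico 1 h : Finset ℕ) := by
    intro a ha b hb hab
    rw [Finset.mem_coe, Finset.mem_Ico] at ha hb
    have h1 : u*a ≡ u*b [MOD h] := hab
    have h2 : a ≡ b [MOD h] := Nat.ModEq.cancel_left_of_coprime (by rw [Nat.gcd_comm]; exact hc) h1
    exact Nat.ModEq.eq_of_lt_of_lt h2 ha.2 hb.2
  have him : (Finset.Ico 1 h).image (fun i => u*i%h) = Finset.Ico 1 h := by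
    apply Finset.eq_of_subset_of_card_le
    · intro x hx
      obtain ⟨i, hi, rfl⟩ := Finset.mem_image.1 hx
      exact mod_mem hc hi
    · rw [Finset.card_image_of_injOn hinj]
  conv_rhs => rw [← him]
  rw [Finset.sum_image hinj]

lemma refl_sum (h : ℕ) (F : ℕ → ℝ) :
    ∑ i ∈ Finset.Ico 1 h, F (h - i) = ∑ s ∈ Finset.Ico 1 h, F s := by
  refine Finset.sum_nbij' (fun s => h - s) (fun s => h - s) ?_ ?_ ?_ ?_ ?_ <;>
    (intro a ha; rw [Finset.mem_Ico] at ha)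
  · rw [Finset.mem_Ico]; omega
  · rw [Finset.mem_Ico]; omega
  · show h - (h - a) = a
    omega
  · show h - (h - a) = a
    omega

lemma harm_sum (h q : ℕ) (h1 : 1 ≤ h) (hq : h ≤ q) : ∑ s ∈ Finset.Ico 1 h, (1:ℝ)/s ≤ 1 + Real.log q := by
  have e : ∑ s ∈ Finset.Ico 1 h, (1:ℝ)/s = ((harmonic (h-1) : ℚ) : ℝ) := by
    unfold harmonic
    rw [Finset.sum_Ico_eq_sum_range]
    push_cast
    apply Finset.sum_congr rfl
    intro i _
    rw [add_comm]; simp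
  rw [e]
  refine (harmonic_le_one_add_log _).trans ?_
  rcases Nat.eq_or_lt_of_le h1 with h2 | h2
  · rw [← h2]; simp; exact Real.log_natCast_nonneg q
  · have : Real.log ((h-1:ℕ):ℝ) ≤ Real.log q := by
      apply Real.log_le_log
      · exact_mod_cast (by omega : 0 < h - 1)
      · exact_mod_cast (by omega)
    linarith

lemma pz_abs (u : ℝ) : pz |u| = pz u + pz (-u) := by
  unfold pz
  rcases le_total 0 u with h | h
  · rw [abs_of_nonneg h, Real.sqrt_eq_zero_of_nonpos (by linarith : -u ≤ 0)]; simp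
  · rw [abs_of_nonpos h, Real.sqrt_eq_zero_of_nonpos h]; simp

lemma pz_div {s c : ℝ} (hs : 0 < s) (hc : 0 < c) : pz (s/c) = √c / √s := by
  unfold pz
  rw [Real.sqrt_div hs.le, one_div_div]

lemma abc_le (a b c : ℝ) : (a+b)*c ≤ a^2+b^2+c^2 := by
  nlinarith [sq_nonneg (a - c), sq_nonneg (b - c), sq_nonneg a, sq_nonneg b]

set_option maxHeartbeats 1000000 in
lemma bad_cell {q h k i : ℕ} (hq : q.Prime) (h1 : 1 ≤ h) (hhq : h < q) (k1 : 1 ≤ k)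
    (hc : Nat.Coprime h k) (h4 : 4*h*k ≤ q) (hi : i ∈ Finset.Ico 1 h) {K : ℝ} (hK : 0 ≤ K) {Φ : ℝ → ℝ}
    (H : Gd h k K Φ) :
    cellG q Φ (q*i/h) ≤ 20*K*√(q*h) * (1/((k*i%h:ℕ):ℝ) + 1/((h - k*i%h : ℕ):ℝ) + 1/((h - q*i%h : ℕ):ℝ)) := by
  have hq0 : (0:ℝ) < q := by exact_mod_cast hq.pos
  have hh0 : (0:ℝ) < h := by exact_mod_cast h1
  have hk0 : (0:ℝ) < k := by exact_mod_cast k1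
  have hs := mod_mem hc.symm hi
  have hqh : Nat.Coprime q h := (hq.coprime_iff_not_dvd.2 (Nat.not_dvd_of_pos_of_lt h1 hhq))
  have hr := mod_mem hqh hi
  have hi' := Finset.mem_Ico.1 hi
  set s := k*i%h with hsdef
  set ρ := q*i%h with hρ
  set m := q*i/h with hm
  rw [Finset.mem_Ico] at hs hr
  have hqi : h*m + ρ = q*i := Nat.div_add_mod _ _
  have hki : h*(k*i/h) + s = k*i := Nat.div_add_mod _ _
  set a := k*i/h with ha
  have hqi' : (h:ℝ)*m + ρ = q*i := by exact_mod_cast hqi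
  have hki' : (h:ℝ)*a + s = k*i := by exact_mod_cast hki
  have hρ1 : (1:ℝ) ≤ ρ := by exact_mod_cast hr.1
  have hρ2 : (ρ:ℝ) + 1 ≤ h := by exact_mod_cast hr.2
  have hs1 : (1:ℝ) ≤ s := by exact_mod_cast hs.1
  have hs2 : (s:ℝ) + 1 ≤ h := by exact_mod_cast hs.2
  have h4' : 4*(h:ℝ)*k ≤ q := by exact_mod_cast h4
  have hmq : m + 1 < q := by
    have : h*(m+1) < h*q := by
      have : q*i + q ≤ q*h := by nlinarith [hi'.2]
      nlinarith
    exact Nat.lt_of_mul_lt_mul_left this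
  rw [Nat.cast_sub hs.2.le, Nat.cast_sub hr.2.le]
  set A := pz ((s:ℝ)/(4*h)) + pz (((h:ℝ)-s)/(4*h)) with hA
  have hA0 : 0 ≤ A := add_nonneg (pz_nonneg _) (pz_nonneg _)
  have hAeq : A = 2*√h*(1/√s + 1/√((h:ℝ)-s)) := by
    rw [hA, pz_div (by linarith) (by positivity), pz_div (by linarith) (by positivity), Real.sqrt_mul (by norm_num),
      show (4:ℝ) = 2^2 by norm_num, Real.sqrt_sq (by norm_num)]
    ring
  -- pointwise bound
  have hpt : ∀ x : ℝ, 0 < x → x < 1 → (m:ℝ)/q ≤ x → x ≤ ((m+1:ℕ):ℝ)/q → (h:ℝ)*x ≠ i →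
      Φ x ≤ K*(A*(2*pz |(h:ℝ)*x - i|)) := by
    intro x hx0 hx1 hm1 hm2 hne
    rw [div_le_iff₀ hq0] at hm1
    rw [le_div_iff₀ hq0] at hm2
    push_cast at hm2
    have hd : |(h:ℝ)*x - i| ≤ h/q := by
      rw [abs_le]
      have e : (i:ℝ) = (h*m+ρ)/q := by rw [hqi']; field_simp
      rw [e]
      have t1 : (h:ℝ)*m ≤ h*(x*q) := by gcongr
      have t2 : (h:ℝ)*(x*q) ≤ h*(m+1) := by gcongr
      constructor
      · rw [neg_le_iff_add_nonneg, show (h:ℝ)*x - (h*m+ρ)/q + h/q = (h*(x*q) - h*m - ρ + h)/q by field_simp; ring]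
        apply div_nonneg _ hq0.le
        linarith
      · rw [← sub_nonneg, show (h:ℝ)/q - (h*x - (h*m+ρ)/q) = (h - h*(x*q) + h*m + ρ)/q by field_simp; ring]
        apply div_nonneg _ hq0.le
        nlinarith
    refine (H.b1 x hx0 hx1).trans ?_
    gcongr
    · exact Dz_nonneg _
    · refine Dz_near_frac (δ := k/h*(h*x - i)) a hs.1 hs.2 ?_ ?_
      · have : (k:ℝ)*i/h = a + s/h := by rw [← hki']; field_simp
        push_cast
        rw [← this]; field_simp; ring
      · rw [abs_mul, abs_of_nonneg (by positivity)]
        calc (k:ℝ)/h*|h*x - i| ≤ k/h*(h/q) := by gcongr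
          _ = k/q := by field_simp
          _ ≤ 1/(4*h) := by rw [div_le_div_iff₀ hq0 (by positivity)]; linarith
    · have := Dz_near_int (y := (h:ℝ)*x) (i:ℤ) (by exact_mod_cast hne) (by
        push_cast
        refine hd.trans ?_
        rw [div_le_div_iff₀ hq0 (by norm_num)]
        have : (1:ℝ) ≤ k := by exact_mod_cast k1
        nlinarith)
      exact_mod_cast this
  have hsq1 : 0 < √(s:ℝ) := Real.sqrt_pos.2 (by linarith)
  have hsq2 : 0 < √((h:ℝ)-s) := Real.sqrt_pos.2 (by linarith)
  have hsq3 : 0 < √((h:ℝ)-ρ) := Real.sqrt_pos.2 (by linarith)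
  have hsqh : 0 < √(h:ℝ) := Real.sqrt_pos.2 (by linarith)
  have hsqq : 0 < √(q:ℝ) := Real.sqrt_pos.2 (by linarith)
  have qs1 : √(s:ℝ)*√s = s := Real.mul_self_sqrt (by linarith)
  have qs2 : √((h:ℝ)-s)*√((h:ℝ)-s) = h-s := Real.mul_self_sqrt (by linarith)
  have qs3 : √((h:ℝ)-ρ)*√((h:ℝ)-ρ) = h-ρ := Real.mul_self_sqrt (by linarith)
  have qsh : √(h:ℝ)*√h = h := Real.mul_self_sqrt (by linarith)
  have qsq : √(q:ℝ)*√q = q := Real.mul_self_sqrt (by linarith)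
  have hmul : √((q:ℝ)*h) = √q*√h := Real.sqrt_mul hq0.le _
  have v1 : 1/(s:ℝ) = (1/√s)^2 := by rw [div_pow, one_pow, sq, qs1]
  have v2 : 1/((h:ℝ)-s) = (1/√((h:ℝ)-s))^2 := by rw [div_pow, one_pow, sq, qs2]
  have v3 : 1/((h:ℝ)-ρ) = (1/√((h:ℝ)-ρ))^2 := by rw [div_pow, one_pow, sq, qs3]
  -- point value
  have hpoint : Φ (((m+1:ℕ):ℝ)/q) ≤ 4*K*√(q*h) * (1/(s:ℝ) + 1/((h:ℝ) - s) + 1/((h:ℝ) - ρ)) := by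
    have hx : (h:ℝ)*(((m+1:ℕ):ℝ)/q) - i = (h-ρ)/q := by
      have e : (i:ℝ) = (h*m+ρ)/q := by rw [hqi']; field_simp
      rw [e]; push_cast; field_simp; ring
    have hpos : 0 < ((h:ℝ)-ρ)/q := div_pos (by linarith) hq0
    have := hpt (((m+1:ℕ):ℝ)/q) (by positivity) (by rw [div_lt_one hq0]; exact_mod_cast hmq) (by gcongr; simp) le_rfl
      (by intro e; rw [e, sub_self] at hx; linarith)
    rw [hx, abs_of_pos hpos, pz_div (by linarith) hq0] at this
    refine this.trans ?_
    rw [hAeq, hmul, v1, v2, v3]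
    have e : K * (2*√(h:ℝ)*(1/√s + 1/√((h:ℝ)-s)) * (2*(√q/√((h:ℝ)-ρ)))) =
       (4*K*(√q*√h)) * ((1/√s + 1/√((h:ℝ)-s))*(1/√((h:ℝ)-ρ))) := by ring
    rw [e]
    gcongr
    exact abc_le _ _ _
  have hIntg : cellI q Φ m ≤ 16*K*√(q*h) * (1/(s:ℝ) + 1/((h:ℝ) - s) + 1/((h:ℝ) - ρ)) := by
    have hle : (m:ℝ)/q ≤ ((m+1:ℕ):ℝ)/q := by gcongr; simp
    have hm1q : ((m+1:ℕ):ℝ)/q ≤ 1 := by rw [div_le_one hq0]; exact_mod_cast hmq.le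
    have iiΦ : IntervalIntegrable Φ volume ((m:ℝ)/q) (((m+1:ℕ):ℝ)/q) := by
      refine (H.ii h1 k1).mono_set ?_
      rw [Set.uIcc_of_le hle, Set.uIcc_of_le zero_le_one]
      exact Set.Icc_subset_Icc (by positivity) hm1q
    have hh : (h:ℝ) ≠ 0 := hh0.ne'
    have ii1 : IntervalIntegrable (fun x => pz ((h:ℝ)*x - i)) volume ((m:ℝ)/q) (((m+1:ℕ):ℝ)/q) := by
      have := ((ii_pz (h*((m:ℝ)/q) - i) (h*(((m+1:ℕ):ℝ)/q) - i)).comp_sub_right (i:ℝ)).comp_mul_left (c := (h:ℝ))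
      simpa [hh] using this
    have ii2 : IntervalIntegrable (fun x => pz (i - (h:ℝ)*x)) volume ((m:ℝ)/q) (((m+1:ℕ):ℝ)/q) := by
      have := ((ii_pz (i - h*((m:ℝ)/q)) (i - h*(((m+1:ℕ):ℝ)/q))).comp_sub_left (i:ℝ)).comp_mul_left (c := (h:ℝ))
      simpa [hh] using this
    have hb : ∫ x in ((m:ℝ)/q)..(((m+1:ℕ):ℝ)/q), Φ x ≤
        ∫ x in ((m:ℝ)/q)..(((m+1:ℕ):ℝ)/q), (K*A*2)*(pz ((h:ℝ)*x - i) + pz (i - (h:ℝ)*x)) := by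
      refine intervalIntegral.integral_mono_ae_restrict hle iiΦ ((ii1.add ii2).const_mul _) ?_
      rw [Filter.EventuallyLE, ae_restrict_iff' measurableSet_Icc]
      have a1 : ∀ᵐ x : ℝ, x ≠ 1 := by simp [ae_iff]
      have a2 : ∀ᵐ x : ℝ, x ≠ (i:ℝ)/h := by simp [ae_iff]
      have a3 : ∀ᵐ x : ℝ, x ≠ 0 := by simp [ae_iff]
      filter_upwards [a1, a2, a3] with x x1 x2 x3 hx
      have p0 : 0 ≤ x := le_trans (by positivity) hx.1
      have := hpt x (lt_of_le_of_ne p0 (Ne.symm x3)) (lt_of_le_of_ne (hx.2.trans hm1q) x1) hx.1 hx.2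
        (by intro e; apply x2; rw [← e]; field_simp)
      rw [pz_abs, neg_sub] at this
      linarith
    have e1 : ∫ x in ((m:ℝ)/q)..(((m+1:ℕ):ℝ)/q), pz ((h:ℝ)*x - i) ≤ (h:ℝ)⁻¹*(2*(√h/√q)) := by
      rw [intervalIntegral.integral_comp_mul_sub (f := pz) hh (i:ℝ), int_pz, smul_eq_mul]
      gcongr
      have : √((h:ℝ)*(((m+1:ℕ):ℝ)/q) - i) ≤ √h/√q := by
        rw [← Real.sqrt_div hh0.le]
        apply Real.sqrt_le_sqrt
        have e : (i:ℝ) = (h*m+ρ)/q := by rw [hqi']; field_simp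
        have : (h:ℝ)*(((m+1:ℕ):ℝ)/q) - i = (h-ρ)/q := by
          rw [e]; push_cast; field_simp; ring
        rw [this]; gcongr; linarith
      linarith [Real.sqrt_nonneg ((h:ℝ)*((m:ℝ)/q) - i)]
    have e2 : ∫ x in ((m:ℝ)/q)..(((m+1:ℕ):ℝ)/q), pz (i - (h:ℝ)*x) ≤ (h:ℝ)⁻¹*(2*(√h/√q)) := by
      rw [intervalIntegral.integral_comp_sub_mul (f := pz) hh (i:ℝ), int_pz, smul_eq_mul]
      gcongr
      have : √(i - (h:ℝ)*((m:ℝ)/q)) ≤ √h/√q := by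
        rw [← Real.sqrt_div hh0.le]
        apply Real.sqrt_le_sqrt
        have e : (i:ℝ) = (h*m+ρ)/q := by rw [hqi']; field_simp
        have : i - (h:ℝ)*((m:ℝ)/q) = ρ/q := by
          rw [e]; field_simp; ring
        rw [this]; gcongr; linarith
      linarith [Real.sqrt_nonneg (i - (h:ℝ)*(((m+1:ℕ):ℝ)/q))]
    rw [intervalIntegral.integral_const_mul, intervalIntegral.integral_add ii1 ii2] at hb
    unfold cellI
    calc (q:ℝ) * ∫ x in ((m:ℝ)/q)..(((m+1:ℕ):ℝ)/q), Φ x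
        ≤ q * (K*A*2*((h:ℝ)⁻¹*(2*(√h/√q)) + (h:ℝ)⁻¹*(2*(√h/√q)))) := by
          gcongr
          refine hb.trans ?_
          gcongr
      _ = 16*K*(√q*√q/√q)*(√h*√h/h)*(1/√s + 1/√((h:ℝ)-s)) := by
          rw [hAeq, qsq]; ring
      _ = 16*K*√q*(1/√s + 1/√((h:ℝ)-s)) := by
          rw [qsh, div_self hh, mul_div_assoc, div_self hsqq.ne']; ring
      _ ≤ 16*K*√q*(√h*(1/s) + √h*(1/((h:ℝ)-s)) + √h*(1/((h:ℝ)-ρ))) := by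
          have i1 : 1/√(s:ℝ) ≤ √h*(1/s) := by
            rw [mul_one_div, div_le_div_iff₀ hsq1 (by linarith)]
            have : √(s:ℝ) ≤ √h := Real.sqrt_le_sqrt (by linarith)
            nlinarith
          have i2 : 1/√((h:ℝ)-s) ≤ √h*(1/((h:ℝ)-s)) := by
            rw [mul_one_div, div_le_div_iff₀ hsq2 (by linarith)]
            have : √((h:ℝ)-s) ≤ √h := Real.sqrt_le_sqrt (by linarith)
            nlinarith
          have i3 : 0 ≤ √h*(1/((h:ℝ)-ρ)) := mul_nonneg hsqh.le (one_div_nonneg.2 (by linarith))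
          refine mul_le_mul_of_nonneg_left (by linarith) (by positivity)
      _ = _ := by rw [hmul]; ring
  unfold cellG
  rw [if_pos hmq]
  linarith

end TT

namespace TT
open MeasureTheory intervalIntegral

lemma Dz_small {q h : ℕ} (h1 : 1 ≤ h) (h4 : 4*h ≤ q) {x : ℝ} (hx0 : 0 < x) (hx : x ≤ 1/q) :
    √h * Dz (h*x) ≤ 2 * pz x := by
  have hh0 : (0:ℝ) < h := by exact_mod_cast h1
  have h4' : 4*(h:ℝ) ≤ q := by exact_mod_cast h4
  have hq0 : (0:ℝ) < q := by linarith
  have hp : 0 < (h:ℝ)*x := by positivity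
  have h2 : (h:ℝ)*x ≤ 1/2 := by
    calc (h:ℝ)*x ≤ h*(1/q) := by gcongr
      _ ≤ 1/2 := by rw [mul_one_div, div_le_div_iff₀ hq0 (by norm_num)]; linarith
  have := Dz_near_int (y := (h:ℝ)*x) 0 (by simpa using hp.ne') (by simpa [abs_of_pos hp] using h2)
  rw [Int.cast_zero, sub_zero, abs_of_pos hp] at this
  calc √h * Dz (h*x) ≤ √h * (2*pz (h*x)) := by gcongr
    _ = 2 * pz x := by
      unfold pz
      rw [Real.sqrt_mul hh0.le]
      have : 0 < √(h:ℝ) := Real.sqrt_pos.2 hh0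
      have : 0 < √x := Real.sqrt_pos.2 hx0
      field_simp

lemma end_cells {q h k : ℕ} (h1 : 1 ≤ h) (k1 : 1 ≤ k) (h4 : 4*h*k ≤ q) {K : ℝ} (hK : 0 ≤ K) {Φ : ℝ → ℝ}
    (H : Gd h k K Φ) : cellG q Φ 0 ≤ 12*K*√q ∧ cellG q Φ (q-1) ≤ 8*K*√q := by
  have hh4 : 4*h ≤ q := by nlinarith
  have hk4 : 4*k ≤ q := by nlinarith
  have hq4 : 4 ≤ q := by omega
  have hq0 : (0:ℝ) < q := by positivity
  have hsq : 0 < √(q:ℝ) := Real.sqrt_pos.2 hq0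
  have qsq : √(q:ℝ)*√q = q := Real.mul_self_sqrt hq0.le
  have hq1 : (1:ℝ)/q < 1 := by rw [div_lt_one hq0]; exact_mod_cast (by omega : 1 < q)
  have hs1 : √(1/(q:ℝ)) = 1/√q := by rw [Real.sqrt_div zero_le_one, Real.sqrt_one]
  have hpt0 : ∀ x : ℝ, 0 < x → x ≤ 1/q → Φ x ≤ 4*K*pz x := by
    intro x hx0 hx
    have := H.b2 x hx0 (hx.trans_lt hq1)
    have a := Dz_small h1 hh4 hx0 hx
    have b := Dz_small k1 hk4 hx0 hx
    calc Φ x ≤ _ := this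
      _ ≤ K*(2*pz x + 2*pz x) := by gcongr
      _ = _ := by ring
  have hpt1 : ∀ x : ℝ, x < 1 → 1 - x ≤ 1/q → Φ x ≤ 4*K*pz (1-x) := by
    intro x hx0 hx
    have := H.b2 x (by linarith) hx0
    have a := Dz_small h1 hh4 (by linarith : 0 < 1 - x) hx
    have b := Dz_small k1 hk4 (by linarith : 0 < 1 - x) hx
    rw [Dz_refl] at a b
    calc Φ x ≤ _ := this
      _ ≤ K*(2*pz (1-x) + 2*pz (1-x)) := by gcongr
      _ = _ := by ring
  have hii := H.ii h1 k1
  have hfin : (q:ℝ) * (4*K*(2*(1/√q))) = 8*K*√q := by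
    have : (q:ℝ)*(1/√q) = √q := by rw [mul_one_div, div_eq_iff hsq.ne', qsq]
    linear_combination 8*K*this
  have hI0 : cellI q Φ 0 ≤ 8*K*√q := by
    unfold cellI
    simp only [Nat.cast_zero, zero_div, zero_add, Nat.cast_one]
    have hle : (0:ℝ) ≤ 1/q := by positivity
    have hb : ∫ x in (0:ℝ)..(1/q), Φ x ≤ ∫ x in (0:ℝ)..(1/q), 4*K*pz x := by
      refine intervalIntegral.integral_mono_on_of_le_Ioo hle ?_ ((ii_pz _ _).const_mul _) ?_
      · refine hii.mono_set ?_
        rw [Set.uIcc_of_le hle, Set.uIcc_of_le zero_le_one]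
        exact Set.Icc_subset_Icc le_rfl hq1.le
      · intro x hx; exact hpt0 x hx.1 hx.2.le
    rw [intervalIntegral.integral_const_mul, int_pz, hs1, Real.sqrt_zero, mul_zero, sub_zero] at hb
    rw [← hfin]; gcongr
  have hI1 : cellI q Φ (q-1) ≤ 8*K*√q := by
    unfold cellI
    have e1 : ((q - 1 + 1 : ℕ):ℝ)/q = 1 := by rw [Nat.sub_add_cancel (by omega), div_self hq0.ne']
    have e2 : ((q - 1 : ℕ):ℝ)/q = 1 - 1/q := by rw [Nat.cast_sub (by omega)]; field_simp; simp
    rw [e1, e2]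
    have h0 : (0:ℝ) < 1/q := by positivity
    have hle : 1 - (1:ℝ)/q ≤ 1 := by linarith
    have iip : IntervalIntegrable (fun x => pz (1-x)) volume (1-1/q) 1 := by
      have := (ii_pz (1-(1-1/q)) (1-1)).comp_sub_left (1:ℝ)
      simpa using this
    have hb : ∫ x in (1 - (1:ℝ)/q)..1, Φ x ≤ ∫ x in (1 - (1:ℝ)/q)..1, 4*K*pz (1-x) := by
      refine intervalIntegral.integral_mono_on_of_le_Ioo hle ?_ (iip.const_mul _) ?_
      · refine hii.mono_set ?_
        rw [Set.uIcc_of_le hle, Set.uIcc_of_le zero_le_one]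
        exact Set.Icc_subset_Icc (by linarith) le_rfl
      · intro x hx; exact hpt1 x hx.2 (by linarith [hx.1])
    rw [intervalIntegral.integral_const_mul, intervalIntegral.integral_comp_sub_left (f := pz), int_pz, sub_sub_cancel, sub_self, hs1, Real.sqrt_zero, mul_zero, sub_zero] at hb
    rw [← hfin]; gcongr
  constructor
  · unfold cellG
    rw [if_pos (by omega)]
    have := hpt0 (1/q) (by positivity) le_rfl
    have e : pz (1/(q:ℝ)) = √q := by unfold pz; rw [hs1]; simp
    rw [e] at this
    simp only [zero_add, Nat.cast_one]
    linarith
  · unfold cellG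
    rw [if_neg (by omega), add_zero]; exact hI1

/-- Riemann sum lemma, decreasing case -/
lemma Edec {q h k : ℕ} (hq : q.Prime) (h1 : 1 ≤ h) (hhq : h < q) (k1 : 1 ≤ k) (hkq : k < q)
    (hc : Nat.Coprime h k) (h4 : 4*h*k ≤ q) {K : ℝ} (hK : 0 ≤ K) {Φ : ℝ → ℝ}
    (H : Gd h k K Φ) (hd : Dec h k Φ) :
    |∑ n ∈ Finset.Ico 1 q, Φ ((n:ℝ)/q) - q * ∫ x in (0:ℝ)..1, Φ x| ≤ 140*K*(√(q*(h+k)) * (1 + Real.log q)) := by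
  classical
  have hq0 : (0:ℝ) < q := by exact_mod_cast hq.pos
  have hii := H.ii h1 k1
  set bad : Finset ℕ := {0, q-1} ∪ ((Finset.Ico 1 h).image (fun i => q*i/h) ∪ (Finset.Ico 1 k).image (fun i => q*i/k)) with hbad
  have hr := riem q hq.two_le Φ H.nn hii bad (by simp [hbad]) (by simp [hbad]) (by
    intro n hn hnb
    simp only [hbad, Finset.mem_union, Finset.mem_insert, Finset.mem_singleton, Finset.mem_image, not_or, not_exists, not_and] at hnb
    obtain ⟨⟨n0, n1⟩, nh, nk⟩ := hnb
    obtain ⟨j, hj⟩ := cell_floor hq h1 hhq (n := n) (by omega) (by omega) nh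
    obtain ⟨i, hi⟩ := cell_floor hq k1 hkq (n := n) (by omega) (by omega) nk
    have hlt : ((n+1:ℕ):ℝ)/q < 1 := by rw [div_lt_one hq0]; exact_mod_cast (by omega : n + 1 < q)
    have hgt : 0 < (n:ℝ)/q := div_pos (by exact_mod_cast (by omega : 0 < n)) hq0
    apply cell_dec hq0
    · refine hii.mono_set ?_
      rw [Set.uIcc_of_le (by gcongr; simp), Set.uIcc_of_le zero_le_one]
      exact Set.Icc_subset_Icc hgt.le hlt.le
    · intro x y hx hxy hy
      exact hd x y i j (by linarith) hxy (by linarith) (hi x hx (hxy.trans hy)).1 (hi y (hx.trans hxy) hy).2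
        (hj x hx (hxy.trans hy)).1 (hj y (hx.trans hxy) hy).2)
  refine hr.trans ?_
  have hGnn : ∀ n, 0 ≤ cellG q Φ n := fun n => by
    unfold cellG
    have : 0 ≤ (if n + 1 < q then Φ (((n+1:ℕ):ℝ)/q) else 0) := by split_ifs; exacts [H.nn _, le_rfl]
    linarith [cellI_nonneg q Φ H.nn n]
  have hun : ∀ s t : Finset ℕ, ∑ n ∈ s ∪ t, cellG q Φ n ≤ ∑ n ∈ s, cellG q Φ n + ∑ n ∈ t, cellG q Φ n := by
    intro s t
    rw [← Finset.sum_union_inter]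
    have : 0 ≤ ∑ n ∈ s ∩ t, cellG q Φ n := Finset.sum_nonneg (fun n _ => hGnn n)
    linarith
  have him : ∀ (s : Finset ℕ) (g : ℕ → ℕ), ∑ n ∈ s.image g, cellG q Φ n ≤ ∑ i ∈ s, cellG q Φ (g i) := by
    intro s g
    exact Finset.sum_image_le_of_nonneg (fun n _ => hGnn n)
  obtain ⟨e0, e1⟩ := end_cells h1 k1 h4 hK H
  have hlog : 0 ≤ Real.log q := Real.log_natCast_nonneg q
  have hS : ∀ h' k' : ℕ, 1 ≤ h' → h' < q → 1 ≤ k' → Nat.Coprime h' k' → 4*h'*k' ≤ q → Gd h' k' K Φ →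
      ∑ i ∈ Finset.Ico 1 h', cellG q Φ (q*i/h') ≤ 60*K*√(q*h')*(1 + Real.log q) := by
    intro h' k' h1' hhq' k1' hc' h4' H'
    have hqh : Nat.Coprime q h' := (hq.coprime_iff_not_dvd.2 (Nat.not_dvd_of_pos_of_lt h1' hhq'))
    calc _ ≤ ∑ i ∈ Finset.Ico 1 h', 20*K*√(q*h') * (1/((k'*i%h':ℕ):ℝ) + 1/((h' - k'*i%h' : ℕ):ℝ) + 1/((h' - q*i%h' : ℕ):ℝ)) :=
          Finset.sum_le_sum (fun i hi => bad_cell hq h1' hhq' k1' hc' h4' hi hK H')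
      _ = 20*K*√(q*h') * (3 * ∑ s ∈ Finset.Ico 1 h', (1:ℝ)/s) := by
          rw [← Finset.mul_sum, Finset.sum_add_distrib, Finset.sum_add_distrib]
          rw [perm_sum hc'.symm (fun s => 1/(s:ℝ)), perm_sum hc'.symm (fun s => 1/((h'-s:ℕ):ℝ)),
            perm_sum hqh (fun s => 1/((h'-s:ℕ):ℝ)), refl_sum h' (fun s => 1/(s:ℝ))]
          ring
      _ ≤ 20*K*√(q*h') * (3*(1 + Real.log q)) := by
          have := harm_sum h' q h1' hhq'.le
          gcongr
      _ = _ := by ring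
  have s1 := hS h k h1 hhq k1 hc h4 H
  have s2 := hS k h k1 hkq h1 hc.symm (by linarith) H.swap
  have b0 : ∑ n ∈ ({0, q-1} : Finset ℕ), cellG q Φ n ≤ 20*K*√q := by
    have : ({0, q-1} : Finset ℕ) = {0} ∪ {q-1} := rfl
    rw [this]
    refine (hun _ _).trans ?_
    rw [Finset.sum_singleton, Finset.sum_singleton]; linarith
  have hh1 : (1:ℝ) ≤ h := by exact_mod_cast h1
  have hk1 : (1:ℝ) ≤ k := by exact_mod_cast k1
  have r1 : √((q:ℝ)*h) ≤ √(q*(h+k)) := Real.sqrt_le_sqrt (by nlinarith)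
  have r2 : √((q:ℝ)*k) ≤ √(q*(h+k)) := Real.sqrt_le_sqrt (by nlinarith)
  have r3 : √((q:ℝ)) ≤ √(q*(h+k)) := Real.sqrt_le_sqrt (by nlinarith)
  calc ∑ n ∈ bad, cellG q Φ n ≤ 20*K*√q + (60*K*√(q*h)*(1 + Real.log q) + 60*K*√(q*k)*(1 + Real.log q)) := by
        refine (hun _ _).trans (add_le_add b0 ((hun _ _).trans (add_le_add ((him _ _).trans s1) ((him _ _).trans s2))))
    _ ≤ 20*K*(√(q*(h+k)) * (1 + Real.log q)) + (60*K*√(q*(h+k))*(1 + Real.log q) + 60*K*√(q*(h+k))*(1 + Real.log q)) := by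
        have : √(q:ℝ) ≤ √(q*(h+k)) * (1 + Real.log q) := r3.trans (le_mul_of_one_le_right (Real.sqrt_nonneg _) (by linarith))
        gcongr
    _ = _ := by ring

def Inc (h k : ℕ) (Φ : ℝ → ℝ) : Prop := ∀ (x y : ℝ) (i j : ℤ), 0 < x → x ≤ y → y < 1 →
  (i:ℝ) < k*x → k*y < i+1 → (j:ℝ) < h*x → h*y < j+1 → Φ x ≤ Φ y

lemma Einc {q h k : ℕ} (hq : q.Prime) (h1 : 1 ≤ h) (hhq : h < q) (k1 : 1 ≤ k) (hkq : k < q)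
    (hc : Nat.Coprime h k) (h4 : 4*h*k ≤ q) {K : ℝ} (hK : 0 ≤ K) {Φ : ℝ → ℝ}
    (H : Gd h k K Φ) (hd : Inc h k Φ) :
    |∑ n ∈ Finset.Ico 1 q, Φ ((n:ℝ)/q) - q * ∫ x in (0:ℝ)..1, Φ x| ≤ 140*K*(√(q*(h+k)) * (1 + Real.log q)) := by
  have hq0 : (0:ℝ) < q := by exact_mod_cast hq.pos
  have H' : Gd h k K (fun x => Φ (1-x)) :=
    { meas := H.meas.comp (measurable_const.sub measurable_id)
      nn := fun x => H.nn _
      b1 := fun x h0 h1 => by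
        have := H.b1 (1-x) (by linarith) (by linarith)
        rwa [Dz_refl, Dz_refl] at this
      b2 := fun x h0 h1 => by
        have := H.b2 (1-x) (by linarith) (by linarith)
        rwa [Dz_refl, Dz_refl] at this }
  have hd' : Dec h k (fun x => Φ (1-x)) := by
    intro x y i j hx hxy hy a1 a2 a3 a4
    refine hd (1-y) (1-x) (k-1-i) (h-1-j) (by linarith) (by linarith) (by linarith) ?_ ?_ ?_ ?_ <;>
      push_cast <;> linarith
  have := Edec hq h1 hhq k1 hkq hc h4 hK H' hd'
  have e1 : ∑ n ∈ Finset.Ico 1 q, Φ (1 - (n:ℝ)/q) = ∑ n ∈ Finset.Ico 1 q, Φ ((n:ℝ)/q) := by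
    rw [← refl_sum q (fun n => Φ ((n:ℝ)/q))]
    apply Finset.sum_congr rfl
    intro n hn
    have := (Finset.mem_Ico.1 hn).2
    rw [Nat.cast_sub this.le, sub_div, div_self hq0.ne']
  have e2 : ∫ x in (0:ℝ)..1, Φ (1-x) = ∫ x in (0:ℝ)..1, Φ x := by
    rw [intervalIntegral.integral_comp_sub_left]; simp
  rwa [e1, e2] at this

end TT

namespace TT
open MeasureTheory intervalIntegral

noncomputable def Pz (x : ℝ) : ℝ := 1 - Int.fract (-x)

lemma Pz_pos (x : ℝ) : 0 < Pz x := by unfold Pz; linarith [Int.fract_lt_one (-x)]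
lemma Pz_le (x : ℝ) : Pz x ≤ 1 := by unfold Pz; linarith [Int.fract_nonneg (-x)]
lemma Pz_meas : Measurable Pz := by
  unfold Pz; exact measurable_const.sub (measurable_fract.comp measurable_neg)

lemma Pz_int (x : ℝ) : ∃ i : ℤ, Pz x = x - i := by
  refine ⟨-⌊-x⌋ - 1, ?_⟩
  unfold Pz Int.fract; push_cast; ring

lemma Pz_eq {x : ℝ} {i : ℤ} (h1 : (i:ℝ) < x) (h2 : x ≤ i + 1) : Pz x = x - i := by
  have : Int.fract (-x) = i + 1 - x := by
    rw [Int.fract_eq_iff]; refine ⟨by linarith, by linarith, -i-1, by push_cast; ring⟩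
  unfold Pz; rw [this]; ring

lemma Pz_neg_eq {x : ℝ} {i : ℤ} (h1 : (i:ℝ) < x) (h2 : x < i + 1) : Pz (-x) = i + 1 - x := by
  rw [Pz_eq (i := -i-1) (by push_cast; linarith) (by push_cast; linarith)]; push_cast; ring

lemma ph_def (x : ℝ) : ph x = pz (Pz x) - Bz (Pz x) := by
  rw [← fz_eq (Pz_pos x)]; rfl

lemma pP_le (x : ℝ) : pz (Pz x) ≤ Dz x := by
  rw [← Dz_neg]
  unfold Dz Pz
  linarith [pz_nonneg (Int.fract (-x))]

lemma pP_le' (x : ℝ) : pz (Pz (-x)) ≤ Dz x := by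
  rw [← Dz_neg]; exact pP_le _

lemma BP_nonneg (x : ℝ) : 0 ≤ Bz (Pz x) := Bz_nonneg (Pz_pos x).le
lemma BP_le (x : ℝ) : Bz (Pz x) ≤ 3 := Bz_le (Pz_pos x).le (Pz_le x)
lemma pP_nonneg (x : ℝ) : 0 ≤ pz (Pz x) := pz_nonneg _

lemma mkGd {h k : ℕ} (h1 : 1 ≤ h) (k1 : 1 ≤ k) {Φ M : ℝ → ℝ} (hm : Measurable Φ) (hn : ∀ x, 0 ≤ Φ x)
    (hb : ∀ x, 0 < x → x < 1 → Φ x ≤ M x + 3 * Dz (k*x) + 3*Dz (h*x) + 9)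
    (hM1 : ∀ x, 0 < x → x < 1 → M x ≤ Dz (k*x) * Dz (h*x))
    (hM2 : ∀ x, 0 < x → x < 1 → M x ≤ √h * Dz (h*x) + √k * Dz (k*x)) : Gd h k 16 Φ where
  meas := hm
  nn := hn
  b1 := fun x h0 h1 => by
    have := hb x h0 h1
    have := hM1 x h0 h1
    nlinarith [one_le_Dz (k*x), one_le_Dz (h*x), mul_nonneg (sub_nonneg.2 (one_le_Dz (k*x))) (sub_nonneg.2 (one_le_Dz (h*x)))]
  b2 := fun x h0 h1' => by
    have a := hb x h0 h1'
    have b := hM2 x h0 h1'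
    have s1 : 1 ≤ √(h:ℝ) := by rw [Real.one_le_sqrt]; exact_mod_cast h1
    have s2 : 1 ≤ √(k:ℝ) := by rw [Real.one_le_sqrt]; exact_mod_cast k1
    have d1 := one_le_Dz (k*x)
    have d2 := one_le_Dz (h*x)
    have : Dz (h*x) ≤ √h * Dz (h*x) := le_mul_of_one_le_left (by linarith) s1
    have : Dz (k*x) ≤ √k * Dz (k*x) := le_mul_of_one_le_left (by linarith) s2
    linarith

lemma pp_le {h k : ℕ} {X Y : ℝ} (hX : 0 < X) (hY : 0 < Y) (hd : 1 ≤ h*X + k*Y) :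
    pz X * pz Y ≤ √h * pz Y + √k * pz X := by
  have sX : 0 < √X := Real.sqrt_pos.2 hX
  have sY : 0 < √Y := Real.sqrt_pos.2 hY
  have qX : √X*√X = X := Real.mul_self_sqrt hX.le
  have qY : √Y*√Y = Y := Real.mul_self_sqrt hY.le
  have qh : √(h:ℝ)*√h = h := Real.mul_self_sqrt (by positivity)
  have qk : √(k:ℝ)*√k = k := Real.mul_self_sqrt (by positivity)
  have h0 : 0 ≤ √(h:ℝ)*√X := by positivity
  have k0 : 0 ≤ √(k:ℝ)*√Y := by positivity
  have : 1 ≤ √(h:ℝ)*√X + √(k:ℝ)*√Y := by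
    have e : (√(h:ℝ)*√X)*(√(h:ℝ)*√X) + (√(k:ℝ)*√Y)*(√(k:ℝ)*√Y) = h*X + k*Y := by
      calc _ = (√(h:ℝ)*√h)*(√X*√X) + (√(k:ℝ)*√k)*(√Y*√Y) := by ring
        _ = _ := by rw [qX, qY, qh, qk]
    nlinarith
  unfold pz
  calc 1/√X*(1/√Y) = 1*(1/√X*(1/√Y)) := by ring
    _ ≤ (√(h:ℝ)*√X + √(k:ℝ)*√Y)*(1/√X*(1/√Y)) := by gcongr
    _ = _ := by field_simp

lemma dXY (h k : ℕ) (h1 : 1 ≤ h) (k1 : 1 ≤ k) (x : ℝ) : 1 ≤ h * Pz (k*x) + k * Pz (-(h*x)) := by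
  obtain ⟨i, hi⟩ := Pz_int (k*x)
  obtain ⟨j, hj⟩ := Pz_int (-(h*x))
  have p1 := Pz_pos (k*x)
  have p2 := Pz_pos (-(h*x))
  have hh0 : (0:ℝ) < h := by exact_mod_cast h1
  have hk0 : (0:ℝ) < k := by exact_mod_cast k1
  have hp : 0 < h * Pz (k*x) + k * Pz (-(h*x)) := by positivity
  have e : h * Pz (k*x) + k * Pz (-(h*x)) = ((-(h*i) - k*j : ℤ) : ℝ) := by
    rw [hi, hj]; push_cast; ring
  rw [e] at hp ⊢
  have : (0:ℤ) < -(h*i) - k*j := by exact_mod_cast hp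
  exact_mod_cast this

section minus
variable (h k : ℕ)

noncomputable def fD1 (x : ℝ) : ℝ := pz (Pz (k*x)) * pz (Pz (-(h*x))) * (k*Pz (-(h*x))/(h * Pz (k*x) + k * Pz (-(h*x)))) + 3 * Bz (Pz (-(h*x)))
noncomputable def fD2 (x : ℝ) : ℝ := pz (Pz (k*x)) * Bz (Pz (-(h*x))) + (3 - Bz (Pz (k*x))) * Bz (Pz (-(h*x)))
noncomputable def fI1 (x : ℝ) : ℝ := pz (Pz (k*x)) * pz (Pz (-(h*x))) * (h*Pz (k*x)/(h * Pz (k*x) + k * Pz (-(h*x))))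
noncomputable def fI2 (x : ℝ) : ℝ := Bz (Pz (k*x)) * pz (Pz (-(h*x)))

lemma mX : Measurable (fun x : ℝ => Pz (k*x)) := Pz_meas.comp (measurable_const.mul measurable_id)
lemma mY : Measurable (fun x : ℝ => Pz (-(h*x))) := Pz_meas.comp (measurable_const.mul measurable_id).neg

variable {h k}

lemma gdD1 (h1 : 1 ≤ h) (k1 : 1 ≤ k) : Gd h k 16 (fD1 h k) := by
  have hh0 : (0:ℝ) < h := by exact_mod_cast h1
  have hk0 : (0:ℝ) < k := by exact_mod_cast k1
  refine mkGd h1 k1 (M := fun x => pz (Pz (k*x)) * pz (Pz (-(h*x)))) ?_ ?_ ?_ ?_ ?_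
  · unfold fD1
    exact (((pz_meas.comp (mX k)).mul (pz_meas.comp (mY h))).mul (((mY h).const_mul _).div (((mX k).const_mul _).add ((mY h).const_mul _)))).add ((Bz_meas.comp (mY h)).const_mul _)
  · intro x
    have := dXY h k h1 k1 x
    have := Pz_pos (-(h*x))
    have := BP_nonneg (-(h*x))
    have := pP_nonneg (k*x)
    have := pP_nonneg (-(h*x))
    unfold fD1
    have : 0 ≤ (k*Pz (-(h*x))/(h * Pz (k*x) + k * Pz (-(h*x)))) := div_nonneg (by positivity) (by linarith)
    positivity
  · intro x _ _
    have := dXY h k h1 k1 x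
    have := Pz_pos (-(h*x))
    have := Pz_pos (k*x)
    have := BP_le (-(h*x))
    have a := pP_nonneg (k*x)
    have b := pP_nonneg (-(h*x))
    have : (k*Pz (-(h*x))/(h * Pz (k*x) + k * Pz (-(h*x)))) ≤ 1 := by
      rw [div_le_one (by linarith)]
      have : 0 ≤ h*Pz (k*x) := by positivity
      linarith
    have := mul_le_mul_of_nonneg_left this (mul_nonneg a b)
    have := one_le_Dz (k*x)
    have := one_le_Dz (h*x)
    unfold fD1
    linarith
  · intro x _ _
    exact mul_le_mul (pP_le _) (pP_le' _) (pP_nonneg _) (Dz_nonneg _)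
  · intro x _ _
    refine (pp_le (h := h) (k := k) (Pz_pos _) (Pz_pos _) (dXY h k h1 k1 x)).trans ?_
    gcongr
    · exact pP_le' _
    · exact pP_le _

lemma gdI1 (h1 : 1 ≤ h) (k1 : 1 ≤ k) : Gd h k 16 (fI1 h k) := by
  have hh0 : (0:ℝ) < h := by exact_mod_cast h1
  have hk0 : (0:ℝ) < k := by exact_mod_cast k1
  refine mkGd h1 k1 (M := fun x => pz (Pz (k*x)) * pz (Pz (-(h*x)))) ?_ ?_ ?_ ?_ ?_
  · unfold fI1
    exact (((pz_meas.comp (mX k)).mul (pz_meas.comp (mY h))).mul (((mX k).const_mul _).div (((mX k).const_mul _).add ((mY h).const_mul _))))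
  · intro x
    have := dXY h k h1 k1 x
    have := Pz_pos (k*x)
    have := pP_nonneg (k*x)
    have := pP_nonneg (-(h*x))
    unfold fI1
    have : 0 ≤ (h*Pz (k*x)/(h * Pz (k*x) + k * Pz (-(h*x)))) := div_nonneg (by positivity) (by linarith)
    positivity
  · intro x _ _
    have := dXY h k h1 k1 x
    have := Pz_pos (-(h*x))
    have := Pz_pos (k*x)
    have a := pP_nonneg (k*x)
    have b := pP_nonneg (-(h*x))
    have : (h*Pz (k*x)/(h * Pz (k*x) + k * Pz (-(h*x)))) ≤ 1 := by
      rw [div_le_one (by linarith)]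
      have : 0 ≤ k*Pz (-(h*x)) := by positivity
      linarith
    have := mul_le_mul_of_nonneg_left this (mul_nonneg a b)
    have := one_le_Dz (k*x)
    have := one_le_Dz (h*x)
    unfold fI1
    linarith
  · intro x _ _
    exact mul_le_mul (pP_le _) (pP_le' _) (pP_nonneg _) (Dz_nonneg _)
  · intro x _ _
    refine (pp_le (h := h) (k := k) (Pz_pos _) (Pz_pos _) (dXY h k h1 k1 x)).trans ?_
    gcongr
    · exact pP_le' _
    · exact pP_le _

lemma gdD2 (h1 : 1 ≤ h) (k1 : 1 ≤ k) : Gd h k 16 (fD2 h k) := by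
  refine mkGd h1 k1 (M := fun x => 0) ?_ ?_ ?_ ?_ ?_
  · unfold fD2
    exact ((pz_meas.comp (mX k)).mul (Bz_meas.comp (mY h))).add ((measurable_const.sub (Bz_meas.comp (mX k))).mul (Bz_meas.comp (mY h)))
  · intro x
    have := BP_nonneg (-(h*x))
    have := pP_nonneg (k*x)
    have := sub_nonneg.2 (BP_le (k*x))
    unfold fD2
    positivity
  · intro x _ _
    have a := BP_le (-(h*x))
    have b := BP_nonneg (-(h*x))
    have c := pP_nonneg (k*x)
    have d := BP_le (k*x)
    have e := BP_nonneg (k*x)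
    have f := pP_le (k*x)
    have := one_le_Dz (h*x)
    unfold fD2
    nlinarith
  · intro x _ _
    exact mul_nonneg (Dz_nonneg _) (Dz_nonneg _)
  · intro x _ _
    exact add_nonneg (mul_nonneg (Real.sqrt_nonneg _) (Dz_nonneg _)) (mul_nonneg (Real.sqrt_nonneg _) (Dz_nonneg _))

lemma gdI2 (h1 : 1 ≤ h) (k1 : 1 ≤ k) : Gd h k 16 (fI2 h k) := by
  refine mkGd h1 k1 (M := fun x => 0) ?_ ?_ ?_ ?_ ?_
  · unfold fI2
    exact ((Bz_meas.comp (mX k)).mul (pz_meas.comp (mY h)))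
  · intro x
    exact mul_nonneg (BP_nonneg _) (pP_nonneg _)
  · intro x _ _
    have c := pP_nonneg (-(h*x))
    have d := BP_le (k*x)
    have e := BP_nonneg (k*x)
    have f := pP_le' (h*x)
    have := one_le_Dz (h*x)
    have := one_le_Dz (k*x)
    unfold fI2
    nlinarith
  · intro x _ _
    exact mul_nonneg (Dz_nonneg _) (Dz_nonneg _)
  · intro x _ _
    exact add_nonneg (mul_nonneg (Real.sqrt_nonneg _) (Dz_nonneg _)) (mul_nonneg (Real.sqrt_nonneg _) (Dz_nonneg _))

lemma gap_data {h k : ℕ} {x y : ℝ} {i j : ℤ} (hxy : x ≤ y)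
    (a1 : (i:ℝ) < k*x) (a2 : k*y < i+1) (a3 : (j:ℝ) < h*x) (a4 : h*y < j+1) :
    Pz (k*x) ≤ Pz (k*y) ∧ Pz (h*x) ≤ Pz (h*y) ∧ Pz (-(h*y)) ≤ Pz (-(h*x)) ∧
    h * Pz (k*x) + k * Pz (-(h*x)) = h * Pz (k*y) + k * Pz (-(h*y)) := by
  have e1 : (k:ℝ)*x ≤ k*y := by gcongr
  have e2 : (h:ℝ)*x ≤ h*y := by gcongr
  rw [Pz_eq a1 (by linarith), Pz_eq (i := i) (x := k*y) (by linarith) a2.le, Pz_eq a3 (by linarith),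
    Pz_eq (i := j) (x := h*y) (by linarith) a4.le, Pz_neg_eq a3 (by linarith), Pz_neg_eq (i := j) (x := h*y) (by linarith) a4]
  refine ⟨by linarith, by linarith, by linarith, by ring⟩

lemma pz_mul_self {Y : ℝ} (hY : 0 < Y) : pz Y * Y = √Y := by
  unfold pz
  have := Real.mul_self_sqrt hY.le
  have s := Real.sqrt_pos.2 hY
  rw [one_div, inv_mul_eq_div, div_eq_iff s.ne']; exact this.symm

lemma decD1 (h1 : 1 ≤ h) (k1 : 1 ≤ k) : Dec h k (fD1 h k) := by
  intro x y i j hx hxy hy a1 a2 a3 a4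
  obtain ⟨g1, _, g3, g4⟩ := gap_data hxy a1 a2 a3 a4
  have d := dXY h k h1 k1 x
  unfold fD1
  rw [← g4]
  have e : ∀ X Y d : ℝ, 0 < Y → pz X * pz Y * (k*Y/d) = k/d * (pz X * √Y) := by
    intro X Y d hY; rw [← pz_mul_self hY]; ring
  rw [e _ _ _ (Pz_pos _), e _ _ _ (Pz_pos _)]
  have := pz_anti (Pz_pos (k*x)) g1
  have := Real.sqrt_le_sqrt g3
  have := Bz_mono (Pz_pos (-(h*y))).le g3
  have := pP_nonneg (k*x)
  gcongr

lemma incI1 (h1 : 1 ≤ h) (k1 : 1 ≤ k) : Inc h k (fI1 h k) := by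
  intro x y i j hx hxy hy a1 a2 a3 a4
  obtain ⟨g1, _, g3, g4⟩ := gap_data hxy a1 a2 a3 a4
  have d := dXY h k h1 k1 x
  unfold fI1
  rw [← g4]
  have e : ∀ X Y d : ℝ, 0 < X → pz X * pz Y * (h*X/d) = h/d * (pz Y * √X) := by
    intro X Y d hY; rw [← pz_mul_self hY]; ring
  rw [e _ _ _ (Pz_pos _), e _ _ _ (Pz_pos _)]
  have := pz_anti (Pz_pos (-(h*y))) g3
  have := Real.sqrt_le_sqrt g1
  have := pP_nonneg (-(h*y))
  gcongr

lemma decD2 : Dec h k (fD2 h k) := by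
  intro x y i j hx hxy hy a1 a2 a3 a4
  obtain ⟨g1, _, g3, g4⟩ := gap_data hxy a1 a2 a3 a4
  unfold fD2
  have := pz_anti (Pz_pos (k*x)) g1
  have := Bz_mono (Pz_pos (-(h*y))).le g3
  have := Bz_mono (Pz_pos (k*x)).le g1
  have := pP_nonneg (k*x)
  have := BP_nonneg (-(h*y))
  have := sub_nonneg.2 (BP_le (k*x))
  gcongr

lemma incI2 : Inc h k (fI2 h k) := by
  intro x y i j hx hxy hy a1 a2 a3 a4
  obtain ⟨g1, _, g3, g4⟩ := gap_data hxy a1 a2 a3 a4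
  unfold fI2
  have := pz_anti (Pz_pos (-(h*y))) g3
  have := Bz_mono (Pz_pos (k*x)).le g1
  have := pP_nonneg (-(h*x))
  have := BP_nonneg (k*y)
  gcongr

lemma minus_split (h1 : 1 ≤ h) (k1 : 1 ≤ k) (x : ℝ) :
    ph (k*x) * ph (-(h*x)) = fD1 h k x - fD2 h k x + fI1 h k x - fI2 h k x := by
  have d := dXY h k h1 k1 x
  have e : k*Pz (-(h*x))/(h * Pz (k*x) + k * Pz (-(h*x))) + h*Pz (k*x)/(h * Pz (k*x) + k * Pz (-(h*x))) = 1 := by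
    rw [← add_div, add_comm, div_self (by linarith)]
  rw [ph_def, ph_def]
  unfold fD1 fD2 fI1 fI2
  linear_combination (-(pz (Pz (k*x)) * pz (Pz (-(h*x))))) * e

lemma Tminus {q : ℕ} (hq : q.Prime) (h1 : 1 ≤ h) (hhq : h < q) (k1 : 1 ≤ k) (hkq : k < q)
    (hc : Nat.Coprime h k) (h4 : 4*h*k ≤ q) :
    |∑ n ∈ Finset.Ico 1 q, ph (k * ((n:ℝ)/q)) * ph (-(h * ((n:ℝ)/q))) - q * ∫ x in (0:ℝ)..1, ph (k*x) * ph (-(h*x))| ≤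
      8960*(√(q*(h+k)) * (1 + Real.log q)) := by
  have r1 := Edec hq h1 hhq k1 hkq hc h4 (by norm_num) (gdD1 h1 k1) (decD1 h1 k1)
  have r2 := Edec hq h1 hhq k1 hkq hc h4 (by norm_num) (gdD2 h1 k1) decD2
  have r3 := Einc hq h1 hhq k1 hkq hc h4 (by norm_num) (gdI1 h1 k1) (incI1 h1 k1)
  have r4 := Einc hq h1 hhq k1 hkq hc h4 (by norm_num) (gdI2 h1 k1) incI2
  have i1 := (gdD1 h1 k1).ii h1 k1
  have i2 := (gdD2 h1 k1).ii h1 k1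
  have i3 := (gdI1 h1 k1).ii h1 k1
  have i4 := (gdI2 h1 k1).ii h1 k1
  simp_rw [minus_split h1 k1]
  rw [intervalIntegral.integral_sub ((i1.sub i2).add i3) i4, intervalIntegral.integral_add (i1.sub i2) i3,
    intervalIntegral.integral_sub i1 i2]
  rw [Finset.sum_sub_distrib, Finset.sum_add_distrib, Finset.sum_sub_distrib]
  rw [abs_le] at *
  constructor <;> linarith [r1.1, r1.2, r2.1, r2.2, r3.1, r3.2, r4.1, r4.2]

lemma ii_minus (h1 : 1 ≤ h) (k1 : 1 ≤ k) : IntervalIntegrable (fun x => ph (k*x) * ph (-(h*x))) volume 0 1 := by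
  have i1 := (gdD1 h1 k1).ii h1 k1
  have i2 := (gdD2 h1 k1).ii h1 k1
  have i3 := (gdI1 h1 k1).ii h1 k1
  have i4 := (gdI2 h1 k1).ii h1 k1
  simp_rw [minus_split h1 k1]
  exact ((i1.sub i2).add i3).sub i4

end minus

end TT

namespace TT
open MeasureTheory intervalIntegral

section plus
variable (h k : ℕ)

noncomputable def cz (x : ℝ) : ℝ := 3 - Bz (Pz x)
noncomputable def gz (x : ℝ) : ℝ := pz (Pz x) + cz x

lemma cz_nonneg (x : ℝ) : 0 ≤ cz x := sub_nonneg.2 (BP_le x)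
lemma cz_le (x : ℝ) : cz x ≤ 3 := by unfold cz; linarith [BP_nonneg x]
lemma gz_eq (x : ℝ) : gz x = ph x + 3 := by rw [ph_def]; unfold gz cz; ring
lemma cz_meas : Measurable cz := measurable_const.sub (Bz_meas.comp Pz_meas)
lemma gz_meas : Measurable gz := (pz_meas.comp Pz_meas).add cz_meas
lemma gz_nonneg (x : ℝ) : 0 ≤ gz x := add_nonneg (pP_nonneg x) (cz_nonneg x)

open scoped Classical in
noncomputable def Wc (x : ℝ) : ℝ := if k*x<1 ∧ h*x<1 then pz (Pz (k*x)) * pz (Pz (h*x)) else 0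
noncomputable def Wz (x : ℝ) : ℝ := gz (k*x) * gz (h*x) - Wc h k x

variable {h k}

lemma Wc_meas : Measurable (Wc h k) := by
  unfold Wc
  refine Measurable.ite ?_ ?_ measurable_const
  · exact (measurableSet_lt (measurable_const.mul measurable_id) measurable_const).inter (measurableSet_lt (measurable_const.mul measurable_id) measurable_const)
  · exact (pz_meas.comp (mX k)).mul (pz_meas.comp (mX h))

lemma Wc_nonneg (x : ℝ) : 0 ≤ Wc h k x := by
  unfold Wc; split_ifs
  · exact mul_nonneg (pP_nonneg _) (pP_nonneg _)
  · exact le_rfl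

lemma Wc_le (x : ℝ) : Wc h k x ≤ pz (Pz (k*x)) * pz (Pz (h*x)) := by
  unfold Wc; split_ifs
  · exact le_rfl
  · exact mul_nonneg (pP_nonneg _) (pP_nonneg _)

lemma Wz_eq (x : ℝ) : Wz h k x = (pz (Pz (k*x)) * pz (Pz (h*x)) - Wc h k x) + pz (Pz (k*x)) * cz (h*x) +
    cz (k*x) * pz (Pz (h*x)) + cz (k*x) * cz (h*x) := by
  unfold Wz gz; ring

lemma pz_one : pz 1 = 1 := by unfold pz; simp

lemma pz_le_sqrt {h : ℕ} {X : ℝ} (hX : 0 < X) (hd : 1 ≤ h*X) : pz X ≤ √h := by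
  unfold pz
  rw [div_le_iff₀ (Real.sqrt_pos.2 hX), ← Real.sqrt_mul (by positivity)]
  exact Real.one_le_sqrt.2 hd

lemma M_bound (h1 : 1 ≤ h) (k1 : 1 ≤ k) (hc : Nat.Coprime h k) {x : ℝ} (h0 : 0 < x) (hx1 : x < 1) :
    pz (Pz (k*x)) * pz (Pz (h*x)) - Wc h k x ≤ √h * pz (Pz (h*x)) + √k * pz (Pz (k*x)) := by
  have s1 : 1 ≤ √(h:ℝ) := by rw [Real.one_le_sqrt]; exact_mod_cast h1
  have s2 : 1 ≤ √(k:ℝ) := by rw [Real.one_le_sqrt]; exact_mod_cast k1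
  have hh0 : (0:ℝ) < h := by exact_mod_cast h1
  have hk0 : (0:ℝ) < k := by exact_mod_cast k1
  have P := pP_nonneg (k*x)
  have P' := pP_nonneg (h*x)
  by_cases hC : k*x<1 ∧ h*x<1
  · have : Wc h k x = pz (Pz (k*x)) * pz (Pz (h*x)) := by unfold Wc; rw [if_pos hC]
    rw [this]
    have : 0 ≤ √h * pz (Pz (h*x)) + √k * pz (Pz (k*x)) := by positivity
    linarith
  have hW := Wc_nonneg (h := h) (k := k) x
  suffices hs : pz (Pz (k*x)) ≤ √h ∨ pz (Pz (h*x)) ≤ √k by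
    rcases hs with hs | hs
    · have := mul_le_mul_of_nonneg_right hs P'
      have : 0 ≤ √k * pz (Pz (k*x)) := by positivity
      linarith
    · have := mul_le_mul_of_nonneg_left hs P
      have : 0 ≤ √h * pz (Pz (h*x)) := by positivity
      linarith
  obtain ⟨i, hi⟩ := Pz_int (k*x)
  obtain ⟨j, hj⟩ := Pz_int (h*x)
  have p1 := Pz_pos (k*x)
  have p2 := Pz_pos (h*x)
  have q1 := Pz_le (k*x)
  have q2 := Pz_le (h*x)
  by_cases hz : h*i = k*j
  · have hkx : 0 < k*x := by positivity
    have hkx2 : k*x < k := by nlinarith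
    have i0 : 0 ≤ i := by
      have : (-1:ℝ) < i := by linarith
      have : (-1:ℤ) < i := by exact_mod_cast this
      omega
    have ik : i < k := by
      have : (i:ℝ) < k := by linarith
      exact_mod_cast this
    have hdv : (k:ℤ) ∣ i := by
      have : (k:ℤ) ∣ h*i := ⟨j, hz⟩
      exact (Int.isCoprime_iff_gcd_eq_one.2 (by simpa [Int.gcd, Nat.gcd_comm] using hc)).dvd_of_dvd_mul_left (this)
    have iz : i = 0 := Int.eq_zero_of_dvd_of_nonneg_of_lt i0 ik hdv
    have jz : j = 0 := by
      subst iz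
      have : (k:ℤ) ≠ 0 := by exact_mod_cast (show k ≠ 0 by omega)
      rcases mul_eq_zero.1 (show (k:ℤ)*j = 0 by rw [← hz, mul_zero]) with h | h
      · exact absurd h this
      · exact h
    subst iz jz
    simp only [Int.cast_zero, sub_zero] at hi hj
    rw [not_and_or, not_lt, not_lt] at hC
    rcases hC with hC | hC
    · left
      have : Pz (k*x) = 1 := by linarith
      rw [this, pz_one]; exact s1
    · right
      have : Pz (h*x) = 1 := by linarith
      rw [this, pz_one]; exact s2
  · have e : h * Pz (k*x) - k * Pz (h*x) = ((k*j - h*i : ℤ) : ℝ) := by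
      rw [hi, hj]; push_cast; ring
    rcases lt_or_gt_of_ne hz with hl | hl
    · left
      apply pz_le_sqrt p1
      have : (1:ℤ) ≤ k*j - h*i := by omega
      have : (1:ℝ) ≤ ((k*j - h*i : ℤ) : ℝ) := by exact_mod_cast this
      have : 0 < k * Pz (h*x) := by positivity
      linarith
    · right
      apply pz_le_sqrt p2
      have : k*j - h*i ≤ (-1:ℤ) := by omega
      have : ((k*j - h*i : ℤ) : ℝ) ≤ (-1:ℝ) := by exact_mod_cast this
      have : 0 < h * Pz (k*x) := by positivity
      linarith

lemma gdW (h1 : 1 ≤ h) (k1 : 1 ≤ k) (hc : Nat.Coprime h k) : Gd h k 16 (Wz h k) := by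
  refine mkGd h1 k1 (M := fun x => pz (Pz (k*x)) * pz (Pz (h*x)) - Wc h k x) ?_ ?_ ?_ ?_ ?_
  · unfold Wz
    exact ((gz_meas.comp (measurable_const.mul measurable_id)).mul (gz_meas.comp (measurable_const.mul measurable_id))).sub Wc_meas
  · intro x
    rw [Wz_eq]
    have := sub_nonneg.2 (Wc_le (h := h) (k := k) x)
    have := pP_nonneg (k*x)
    have := pP_nonneg (h*x)
    have := cz_nonneg (k*x)
    have := cz_nonneg (h*x)
    positivity
  · intro x _ _
    rw [Wz_eq]
    have a := pP_nonneg (k*x)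
    have a' := pP_nonneg (h*x)
    have b := cz_nonneg (k*x)
    have b' := cz_nonneg (h*x)
    have c := cz_le (k*x)
    have c' := cz_le (h*x)
    have d := pP_le (k*x)
    have d' := pP_le (h*x)
    nlinarith
  · intro x _ _
    refine (sub_le_self _ (Wc_nonneg x)).trans ?_
    exact mul_le_mul (pP_le _) (pP_le _) (pP_nonneg _) (Dz_nonneg _)
  · intro x h0 hx
    refine (M_bound h1 k1 hc h0 hx).trans ?_
    gcongr
    · exact pP_le _
    · exact pP_le _

lemma gdg1 (h1 : 1 ≤ h) (k1 : 1 ≤ k) : Gd h k 16 (fun x => gz (k*x)) := by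
  refine mkGd h1 k1 (M := fun x => 0) ?_ ?_ ?_ ?_ ?_
  · exact gz_meas.comp (measurable_const.mul measurable_id)
  · intro x; exact gz_nonneg _
  · intro x _ _
    have c := cz_le (k*x)
    have d := pP_le (k*x)
    have := one_le_Dz (h*x)
    have := one_le_Dz (k*x)
    unfold gz
    linarith
  · intro x _ _
    exact mul_nonneg (Dz_nonneg _) (Dz_nonneg _)
  · intro x _ _
    exact add_nonneg (mul_nonneg (Real.sqrt_nonneg _) (Dz_nonneg _)) (mul_nonneg (Real.sqrt_nonneg _) (Dz_nonneg _))

lemma gdg2 (h1 : 1 ≤ h) (k1 : 1 ≤ k) : Gd h k 16 (fun x => gz (h*x)) := (gdg1 k1 h1).swap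

lemma gap2 {x y : ℝ} {i j : ℤ} (hxy : x ≤ y)
    (a1 : (i:ℝ) < k*x) (a2 : k*y < i+1) (a3 : (j:ℝ) < h*x) (a4 : h*y < j+1) :
    pz (Pz (k*y)) ≤ pz (Pz (k*x)) ∧ pz (Pz (h*y)) ≤ pz (Pz (h*x)) ∧ cz (k*y) ≤ cz (k*x) ∧ cz (h*y) ≤ cz (h*x) := by
  obtain ⟨g1, g2, _, _⟩ := gap_data hxy a1 a2 a3 a4
  refine ⟨pz_anti (Pz_pos _) g1, pz_anti (Pz_pos _) g2, ?_, ?_⟩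
  · unfold cz; linarith [Bz_mono (Pz_pos _).le g1]
  · unfold cz; linarith [Bz_mono (Pz_pos _).le g2]

lemma decW : Dec h k (Wz h k) := by
  intro x y i j hx hxy hy a1 a2 a3 a4
  obtain ⟨b1, b2, b3, b4⟩ := gap2 hxy a1 a2 a3 a4
  have e1 : (k:ℝ)*x ≤ k*y := by gcongr
  have e2 : (h:ℝ)*x ≤ h*y := by gcongr
  rw [Wz_eq, Wz_eq]
  have P := pP_nonneg (k*x)
  have P' := pP_nonneg (h*y)
  have P1 := cz_nonneg (h*y)
  have P2 := cz_nonneg (k*x)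
  have t1 : pz (Pz (k*y)) * cz (h*y) ≤ pz (Pz (k*x)) * cz (h*x) := by gcongr
  have t2 : cz (k*y) * pz (Pz (h*y)) ≤ cz (k*x) * pz (Pz (h*x)) := by gcongr
  have t3 : cz (k*y) * cz (h*y) ≤ cz (k*x) * cz (h*x) := by gcongr
  have t4 : pz (Pz (k*y)) * pz (Pz (h*y)) ≤ pz (Pz (k*x)) * pz (Pz (h*x)) := by gcongr
  have key : ∀ (i : ℤ) (u v : ℝ), u ≤ v → (i:ℝ) < u → v < i+1 → u < 1 → v < 1 := by
    intro i u v _ p1 p2 p3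
    have : (i:ℝ) < 1 := by linarith
    have : i < 1 := by exact_mod_cast this
    have : i ≤ 0 := by omega
    have : (i:ℝ) ≤ 0 := by exact_mod_cast this
    linarith
  have : (k*x<1 ∧ h*x<1) ↔ (k*y<1 ∧ h*y<1) := by
    constructor
    · rintro ⟨u, v⟩; exact ⟨key i _ _ e1 a1 a2 u, key j _ _ e2 a3 a4 v⟩
    · rintro ⟨u, v⟩; exact ⟨by linarith, by linarith⟩
  have : pz (Pz (k*y)) * pz (Pz (h*y)) - Wc h k y ≤ pz (Pz (k*x)) * pz (Pz (h*x)) - Wc h k x := by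
    unfold Wc
    simp only [this]
    split_ifs
    · simp
    · simpa using t4
  linarith

lemma decg1 : Dec h k (fun x => gz (k*x)) := by
  intro x y i j hx hxy hy a1 a2 a3 a4
  obtain ⟨b1, b2, b3, b4⟩ := gap2 hxy a1 a2 a3 a4
  simp only [gz]; linarith

lemma decg2 : Dec h k (fun x => gz (h*x)) := by
  intro x y i j hx hxy hy a1 a2 a3 a4
  obtain ⟨b1, b2, b3, b4⟩ := gap2 hxy a1 a2 a3 a4
  simp only [gz]; linarith

lemma plus_split (x : ℝ) :
    ph (k*x) * ph (h*x) - Wc h k x = Wz h k x - 3 * gz (k*x) - 3 * gz (h*x) + 9 := by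
  unfold Wz; rw [gz_eq, gz_eq]; ring

lemma Wc_pos (h1 : 1 ≤ h) (k1 : 1 ≤ k) {x : ℝ} (hx : 0 < x) : Wc h k x = if k*x<1 ∧ h*x<1 then (1/(√h*√k))/x else 0 := by
  have hh0 : (0:ℝ) < h := by exact_mod_cast h1
  have hk0 : (0:ℝ) < k := by exact_mod_cast k1
  unfold Wc
  split_ifs with hC
  · have e1 : Pz (k*x) = k*x := by
      rw [Pz_eq (i := 0) (by push_cast; positivity) (by push_cast; linarith [hC.1])]; simp
    have e2 : Pz (h*x) = h*x := by
      rw [Pz_eq (i := 0) (by push_cast; positivity) (by push_cast; linarith [hC.2])]; simp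
    rw [e1, e2]
    unfold pz
    rw [Real.sqrt_mul hh0.le, Real.sqrt_mul hk0.le]
    have := Real.mul_self_sqrt hx.le
    have s := Real.sqrt_pos.2 hx
    have s1 := Real.sqrt_pos.2 hh0
    have s2 := Real.sqrt_pos.2 hk0
    rw [div_div, div_mul_div_comm]
    congr 1
    · ring
    · linear_combination (√(h:ℝ)*√k) * this
  · rfl

lemma ii_plus (h1 : 1 ≤ h) (k1 : 1 ≤ k) (hc : Nat.Coprime h k) :
    IntervalIntegrable (fun x => ph (k*x) * ph (h*x) - Wc h k x) volume 0 1 := by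
  have i1 := (gdW h1 k1 hc).ii h1 k1
  have i2 := (gdg1 h1 k1).ii h1 k1
  have i3 := (gdg2 h1 k1).ii h1 k1
  simp_rw [plus_split]
  exact ((i1.sub (i2.const_mul 3)).sub (i3.const_mul 3)).add intervalIntegrable_const

lemma Tplus {q : ℕ} (hq : q.Prime) (h1 : 1 ≤ h) (hhq : h < q) (k1 : 1 ≤ k) (hkq : k < q)
    (hc : Nat.Coprime h k) (h4 : 4*h*k ≤ q) :
    |∑ n ∈ Finset.Ico 1 q, ph (k * ((n:ℝ)/q)) * ph (h * ((n:ℝ)/q)) - ∑ n ∈ Finset.Ico 1 q, Wc h k ((n:ℝ)/q)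
      - q * ∫ x in (0:ℝ)..1, (ph (k*x) * ph (h*x) - Wc h k x)| ≤
      15680*(√(q*(h+k)) * (1 + Real.log q)) + 9 := by
  have r1 := Edec hq h1 hhq k1 hkq hc h4 (by norm_num) (gdW h1 k1 hc) decW
  have r2 := Edec hq h1 hhq k1 hkq hc h4 (by norm_num) (gdg1 h1 k1) decg1
  have r3 := Edec hq h1 hhq k1 hkq hc h4 (by norm_num) (gdg2 h1 k1) decg2
  have i1 := (gdW h1 k1 hc).ii h1 k1
  have i2 := (gdg1 h1 k1).ii h1 k1
  have i3 := (gdg2 h1 k1).ii h1 k1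
  rw [← Finset.sum_sub_distrib]
  simp_rw [plus_split]
  rw [intervalIntegral.integral_add ((i1.sub (i2.const_mul 3)).sub (i3.const_mul 3)) intervalIntegrable_const,
    intervalIntegral.integral_sub (i1.sub (i2.const_mul 3)) (i3.const_mul 3), intervalIntegral.integral_sub i1 (i2.const_mul 3),
    intervalIntegral.integral_const_mul, intervalIntegral.integral_const_mul]
  rw [Finset.sum_add_distrib, Finset.sum_sub_distrib, Finset.sum_sub_distrib, ← Finset.mul_sum, ← Finset.mul_sum]
  simp only [Finset.sum_const, Nat.card_Ico, intervalIntegral.integral_const, sub_zero, one_smul, nsmul_eq_mul]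
  rw [Nat.cast_sub hq.one_lt.le, Nat.cast_one]
  rw [abs_le] at *
  constructor <;> linarith [r1.1, r1.2, r2.1, r2.2, r3.1, r3.2]

end plus

end TT

namespace TT
open MeasureTheory intervalIntegral

lemma ph_dist_base {k : ℕ} (k1 : 1 ≤ k) (z : ℝ) (u : ℤ) (hc : IsCoprime u (k:ℤ)) :
    ∑ j ∈ Finset.range k, ph ((z + u*j)/k) = √k * ph z := by
  have : NeZero k := ⟨by omega⟩
  have hk0 : (0:ℝ) < k := by exact_mod_cast k1
  obtain ⟨m, hm⟩ := Pz_int z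
  set w := Pz z with hw
  have w0 : 0 < w := Pz_pos z
  have w1 : w ≤ 1 := Pz_le z
  have hz : z = w + m := by linarith
  let g : ZMod k → ℝ := fun a => ph ((w + (a.val:ℝ))/k)
  have hg : ∀ n : ℤ, ph ((w + n)/k) = g (n : ZMod k) := by
    intro n
    simp only [g]
    have : (((n : ZMod k).val : ℤ)) = n % k := ZMod.val_intCast n
    have e : ((((n : ZMod k).val : ℕ) : ℝ)) = ((n % k : ℤ) : ℝ) := by
      rw [← this]; norm_cast
    rw [e]
    have e2 : (n:ℝ) = ((n % k : ℤ) : ℝ) + k * ((n / k : ℤ) : ℝ) := by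
      exact_mod_cast (Int.emod_add_mul_ediv n k).symm
    rw [e2]
    have : (w + (((n % k : ℤ) : ℝ) + k * ((n / k : ℤ) : ℝ)))/k = (w + ((n % k : ℤ) : ℝ))/k + ((n/k : ℤ):ℝ) := by
      field_simp; ring
    rw [this, ph_add_int]
  have hu : IsUnit (u : ZMod k) := by
    obtain ⟨a, b, hab⟩ := hc
    have : ((a*u + b*k : ℤ) : ZMod k) = 1 := by rw [hab]; simp
    push_cast at this
    rw [ZMod.natCast_self, mul_zero, add_zero] at this
    exact IsUnit.of_mul_eq_one _ (by rw [mul_comm]; exact this)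
  have sumZ : ∀ G : ZMod k → ℝ, ∑ j ∈ Finset.range k, G (j : ZMod k) = ∑ a : ZMod k, G a := by
    intro G
    refine Finset.sum_bij (fun j _ => (j : ZMod k)) (fun _ _ => Finset.mem_univ _) ?_ ?_ ?_
    · intro a ha b hb hab
      rw [Finset.mem_range] at ha hb
      rw [ZMod.natCast_eq_natCast_iff] at hab
      exact Nat.ModEq.eq_of_lt_of_lt hab ha hb
    · intro a _
      exact ⟨a.val, Finset.mem_range.2 (ZMod.val_lt a), ZMod.natCast_zmod_val a⟩
    · intros; rfl
  have e1 : ∑ j ∈ Finset.range k, ph ((z + u*j)/k) = ∑ a : ZMod k, g (m + u * a) := by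
    rw [← sumZ]
    refine Finset.sum_congr rfl fun j _ => ?_
    have := hg (m + u*j)
    push_cast at this
    rw [← this]; congr 2; rw [hz]; ring
  have e2 : ∑ a : ZMod k, g (m + u * a) = ∑ a : ZMod k, g a := by
    obtain ⟨v, hv⟩ := hu
    rw [← hv]
    exact Equiv.sum_comp ((Units.mulLeft v).trans (Equiv.addLeft (m : ZMod k))) g
  rw [e1, e2, ← sumZ]
  have e3 : ∀ j ∈ Finset.range k, g (j : ZMod k) = fz ((w + j)/k) := by
    intro j hj
    rw [Finset.mem_range] at hj
    have := hg j
    push_cast at this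
    rw [← this, ph_eq (by positivity)]
    rw [div_le_one hk0]
    have : (j:ℝ) + 1 ≤ k := by exact_mod_cast hj
    linarith
  rw [Finset.sum_congr rfl e3, fz_dist w0 (by omega), hz, ph_add_int, ph_eq w0 w1]

lemma dist_int {k u : ℕ} (k1 : 1 ≤ k) {f1 f2 : ℝ → ℝ} (p1 : Function.Periodic f1 1) (p2 : Function.Periodic f2 1)
    (hd : ∀ y : ℝ, ∑ j ∈ Finset.range k, f2 ((y + u*j)/k) = √k * f2 y)
    (hi : IntervalIntegrable (fun x => f1 (k*x) * f2 (u*x)) volume 0 1) :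
    ∫ x in (0:ℝ)..1, f1 (k*x) * f2 (u*x) = 1/√k * ∫ x in (0:ℝ)..1, f1 x * f2 (u*x) := by
  have hk0 : (0:ℝ) < k := by exact_mod_cast k1
  have sk := Real.sqrt_pos.2 hk0
  have n1 : ∀ (m : ℕ) x, f1 (x + m) = f1 x := fun m x => by simpa using p1.nat_mul m x
  have n2 : ∀ (m : ℕ) x, f2 (x + m) = f2 x := fun m x => by simpa using p2.nat_mul m x
  set F := fun x : ℝ => f1 (k*x) * f2 (u*x) with hF
  have pF : Function.Periodic F 1 := by
    intro x; simp only [hF]; rw [mul_add, mul_add, mul_one, mul_one, n1, n2]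
  have iF : ∀ a b, IntervalIntegrable F volume a b := pF.intervalIntegrable₀ one_ne_zero hi
  have sh : ∀ j : ℕ, IntervalIntegrable (fun x => F (x + (j:ℝ)/k)) volume 0 1 ∧ ∫ x in (0:ℝ)..1, F (x + (j:ℝ)/k) = ∫ x in (0:ℝ)..1, F x := by
    intro j
    constructor
    · have := (iF (0 + (j:ℝ)/k) (1 + (j:ℝ)/k)).comp_add_right ((j:ℝ)/k)
      simpa using this
    · rw [intervalIntegral.integral_comp_add_right F]
      have := pF.intervalIntegral_add_eq (0 + (j:ℝ)/k) 0
      rw [show (0:ℝ) + 1 = 1 by norm_num] at this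
      rw [← this]; congr 1; ring
  set G := fun y : ℝ => f1 y * f2 (u*y) with hG
  have pG : Function.Periodic G 1 := by
    intro x; simp only [hG]; rw [mul_add, mul_one, n2, p1]
  have hsum : ∀ x : ℝ, ∑ j ∈ Finset.range k, F (x + (j:ℝ)/k) = √k * G (k*x) := by
    intro x
    simp only [hF, hG]
    have : ∀ j ∈ Finset.range k, f1 (k*(x + (j:ℝ)/k)) * f2 (u*(x + (j:ℝ)/k)) = f1 (k*x) * f2 ((u*(k*x) + u*j)/k) := by
      intro j _
      rw [mul_add, mul_div_cancel₀ _ hk0.ne', n1]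
      congr 2; field_simp
    rw [Finset.sum_congr rfl this, ← Finset.mul_sum, hd]; ring
  have tot : (k:ℝ) * ∫ x in (0:ℝ)..1, F x = √k * ∫ x in (0:ℝ)..1, G (k*x) := by
    rw [← intervalIntegral.integral_const_mul (√(k:ℝ))]
    rw [show (fun x : ℝ => √(k:ℝ) * G (k*x)) = fun x => ∑ j ∈ Finset.range k, F (x + (j:ℝ)/k) from funext fun x => (hsum x).symm]
    rw [intervalIntegral.integral_finsetSum (fun j _ => (sh j).1)]
    rw [Finset.sum_congr rfl (fun j _ => (sh j).2)]
    simp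
  have iGk : IntervalIntegrable (fun x => G (k*x)) volume 0 1 := by
    have : IntervalIntegrable (fun x => (1/√k) * ∑ j ∈ Finset.range k, F (x + (j:ℝ)/k)) volume 0 1 := by
      apply IntervalIntegrable.const_mul
      have := IntervalIntegrable.sum (Finset.range k) (f := fun (j:ℕ) x => F (x + (j:ℝ)/k)) (fun j _ => (sh j).1)
      have e : (∑ j ∈ Finset.range k, fun x => F (x + (j:ℝ)/k)) = fun x => ∑ j ∈ Finset.range k, F (x + (j:ℝ)/k) := by
        ext x; simp
      rw [← e]; exact this
    simp_rw [hsum] at this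
    convert this using 2
    field_simp
  have iG : IntervalIntegrable G volume 0 1 := by
    have : IntervalIntegrable G volume 0 k := by
      have := iGk.comp_mul_left (c := ((k:ℝ)⁻¹))
      simp only [div_inv_eq_mul] at this
      convert this using 2 
      · rw [mul_inv_cancel_left₀ hk0.ne']
      all_goals simp
    refine this.mono_set ?_
    rw [Set.uIcc_of_le (by norm_num), Set.uIcc_of_le hk0.le]
    exact Set.Icc_subset_Icc_right (by exact_mod_cast k1)
  have iG' := pG.intervalIntegrable₀ one_ne_zero iG
  have e := pG.intervalIntegral_add_zsmul_eq k 0 iG'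
  have e2 : ∫ x in (0:ℝ)..1, G (k*x) = ∫ x in (0:ℝ)..1, G x := by
    rw [intervalIntegral.integral_comp_mul_left G hk0.ne']
    simp only [zero_add, zsmul_eq_mul, mul_one, mul_zero, smul_eq_mul] at e ⊢
    push_cast at e
    rw [e]; field_simp
  rw [e2] at tot
  have s2 := Real.mul_self_sqrt hk0.le
  have : √(k:ℝ) * (√k * ∫ x in (0:ℝ)..1, F x) = √k * ∫ x in (0:ℝ)..1, G x := by
    rw [← tot, ← mul_assoc, s2]
  have := mul_left_cancel₀ sk.ne' this
  change ∫ x in (0:ℝ)..1, F x = 1/√k * ∫ x in (0:ℝ)..1, G x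
  rw [← this]; field_simp

lemma ph_meas : Measurable ph := by
  have : ph = fun x => pz (Pz x) - Bz (Pz x) := funext ph_def
  rw [this]; exact (pz_meas.comp Pz_meas).sub (Bz_meas.comp Pz_meas)

lemma ph_neg_periodic : Function.Periodic (fun x => ph (-x)) 1 := by
  intro x
  have := ph_add_int (-x) (-1)
  simp only
  rw [← this]; congr 1; push_cast; ring

lemma minus_int {h k : ℕ} (h1 : 1 ≤ h) (k1 : 1 ≤ k) (hc : Nat.Coprime h k) :
    ∫ x in (0:ℝ)..1, ph (k*x) * ph (-(h*x)) = 1/(√h*√k) * ∫ x in (0:ℝ)..1, ph x * ph (-x) := by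
  have r1 := dist_int (u := h) k1 ph_periodic ph_neg_periodic (fun y => by
    have := ph_dist_base k1 (-y) (-h) (by
      rw [IsCoprime.neg_left_iff]; exact Nat.isCoprime_iff_coprime.2 hc)
    rw [← this]
    refine Finset.sum_congr rfl fun j _ => ?_
    congr 1; push_cast; ring) (ii_minus h1 k1)
  have r2 := dist_int (u := 1) (f1 := fun x => ph (-x)) (f2 := ph) h1 ph_neg_periodic ph_periodic (fun y => by
    have := ph_dist_base h1 y 1 isCoprime_one_left
    simpa using this) (by
      have := ii_minus (k := 1) h1 le_rfl
      simpa [mul_comm] using this)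
  rw [r1]
  have e1 : ∫ x in (0:ℝ)..1, ph x * ph (-(h*x)) = ∫ x in (0:ℝ)..1, ph (-(h*x)) * ph ((1:ℕ)*x) := by
    congr 1; ext x; simp [mul_comm]
  have e2 : ∫ x in (0:ℝ)..1, ph x * ph (-x) = ∫ x in (0:ℝ)..1, ph (-x) * ph ((1:ℕ)*x) := by
    congr 1; ext x; simp [mul_comm]
  rw [e1, e2, r2, ← mul_assoc]; congr 1; field_simp

end TT

namespace TT
open MeasureTheory intervalIntegral Filter Topology

noncomputable def Vz (h k : ℕ) : ℝ :=
  (∫ x in (0:ℝ)..1, (ph (k*x) * ph (h*x) - Wc h k x)) - (1/(√h*√k)) * Real.log ((max h k : ℕ) : ℝ)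

open scoped Classical in
noncomputable def ctz (a y : ℝ) : ℝ := if a ≤ Pz y then ph y else 0

lemma Pz_periodic (x : ℝ) : Pz (x+1) = Pz x := by
  unfold Pz; rw [neg_add, ← sub_eq_add_neg, Int.fract_sub_one]

lemma ctz_periodic (a : ℝ) : Function.Periodic (ctz a) 1 := by
  intro x; unfold ctz; rw [Pz_periodic, ph_periodic]

noncomputable def Iz (h k : ℕ) (δ : ℝ) : ℝ := ∫ x in (0:ℝ)..1, ctz (k*δ) (k*x) * ph (h*x)

open scoped Classical in
noncomputable def c1z (h k : ℕ) (δ x : ℝ) : ℝ := if k*δ ≤ Pz (k*x) then (ph (k*x) * ph (h*x) - Wc h k x) else 0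
open scoped Classical in
noncomputable def c2z (h k : ℕ) (δ x : ℝ) : ℝ := if k*δ ≤ Pz (k*x) then Wc h k x else 0

lemma ctz_split (h k : ℕ) (δ x : ℝ) : ctz (k*δ) (k*x) * ph (h*x) = c1z h k δ x + c2z h k δ x := by
  unfold ctz c1z c2z; split_ifs <;> ring

variable {h k : ℕ}

lemma ii_c1 (h1 : 1 ≤ h) (k1 : 1 ≤ k) (hc : Nat.Coprime h k) (δ : ℝ) :
    IntervalIntegrable (c1z h k δ) volume 0 1 := by
  refine (ii_plus h1 k1 hc).mono_fun ?_ ?_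
  · apply Measurable.aestronglyMeasurable
    unfold c1z
    exact Measurable.ite (measurableSet_le measurable_const (mX k))
      (((ph_meas.comp (measurable_const.mul measurable_id)).mul (ph_meas.comp (measurable_const.mul measurable_id))).sub Wc_meas) measurable_const
  · refine Filter.Eventually.of_forall fun x => ?_
    simp only [c1z]; split_ifs
    · exact le_rfl
    · simp

lemma c2_eq (h1 : 1 ≤ h) (k1 : 1 ≤ k) {δ x : ℝ} (hx : 0 < x) :
    c2z h k δ x = (Set.Ico δ (1/((max h k : ℕ) : ℝ))).indicator (fun x => (1/(√h*√k)) * (1/x)) x := by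
  have hh0 : (0:ℝ) < h := by exact_mod_cast h1
  have hk0 : (0:ℝ) < k := by exact_mod_cast k1
  have hC : (k*x<1 ∧ h*x<1) ↔ x < 1/((max h k : ℕ) : ℝ) := by
    rw [Nat.cast_max, lt_div_iff₀ (lt_max_of_lt_left hh0)]
    rw [mul_max_of_nonneg _ _ hx.le, max_lt_iff, mul_comm x, mul_comm x]; tauto
  unfold c2z
  rw [Wc_pos h1 k1 hx]
  simp only [hC]
  by_cases hx2 : x < 1/((max h k : ℕ) : ℝ)
  · rw [if_pos hx2]
    have e1 : Pz (k*x) = k*x := by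
      rw [Pz_eq (i := 0) (by push_cast; positivity) (by push_cast; linarith [(hC.2 hx2).1])]; simp
    rw [e1]
    by_cases hd : δ ≤ x
    · rw [if_pos (by gcongr), Set.indicator_of_mem (show x ∈ Set.Ico _ _ from ⟨hd, hx2⟩)]; ring
    · rw [if_neg, Set.indicator_of_notMem (fun hm => hd hm.1)]
      rw [mul_le_mul_iff_right₀ hk0]; exact hd
  · rw [if_neg hx2, Set.indicator_of_notMem (fun hm => hx2 hm.2)]; simp

lemma int_c2 (h1 : 1 ≤ h) (k1 : 1 ≤ k) {δ : ℝ} (hδ : 0 < δ) (hδ2 : δ < 1/((max h k : ℕ) : ℝ)) :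
    IntervalIntegrable (c2z h k δ) volume 0 1 ∧
    ∫ x in (0:ℝ)..1, c2z h k δ x = (1/(√h*√k)) * (- Real.log ((max h k : ℕ) : ℝ) - Real.log δ) := by
  set H : ℝ := ((max h k : ℕ) : ℝ) with hH
  have H1 : 1 ≤ H := by rw [hH]; exact_mod_cast le_max_of_le_left h1
  have H0 : 0 < H := by linarith
  have hle : 1/H ≤ 1 := by rw [div_le_one H0]; exact H1
  set g : ℝ → ℝ := fun x => (1/(√h*√k)) * (1/x) with hg
  have hsub : Set.Ioc (0:ℝ) 1 ∩ Set.Ico δ (1/H) = Set.Ico δ (1/H) := by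
    apply Set.inter_eq_right.2
    intro x hx; exact ⟨by linarith [hx.1], by linarith [hx.2]⟩
  have gi : IntervalIntegrable g volume δ (1/H) := by
    apply ContinuousOn.intervalIntegrable
    rw [Set.uIcc_of_le hδ2.le]
    apply ContinuousOn.mul continuousOn_const
    apply ContinuousOn.div continuousOn_const continuousOn_id
    intro x hx; have := hx.1; simp only [id]; linarith
  have eqon : Set.EqOn (c2z h k δ) ((Set.Ico δ (1/H)).indicator g) (Set.Ioc 0 1) := by
    intro x hx; exact c2_eq h1 k1 hx.1
  constructor
  · rw [intervalIntegrable_iff_integrableOn_Ioc_of_le zero_le_one, integrableOn_congr_fun eqon measurableSet_Ioc]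
    apply Integrable.integrableOn
    rw [integrable_indicator_iff measurableSet_Ico, integrableOn_Ico_iff_integrableOn_Ioo]
    rw [intervalIntegrable_iff_integrableOn_Ioo_of_le hδ2.le] at gi
    exact gi
  · rw [intervalIntegral.integral_of_le zero_le_one, setIntegral_congr_fun measurableSet_Ioc eqon,
      setIntegral_indicator measurableSet_Ico, hsub, integral_Ico_eq_integral_Ioc, ← intervalIntegral.integral_of_le hδ2.le]
    rw [hg, intervalIntegral.integral_const_mul, integral_one_div_of_pos hδ (by positivity)]
    congr 1
    rw [Real.log_div (by positivity) hδ.ne', one_div, Real.log_inv]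

lemma ii_ct (h1 : 1 ≤ h) (k1 : 1 ≤ k) (hc : Nat.Coprime h k) {δ : ℝ} (hδ : 0 < δ) (hδ2 : δ < 1/((max h k : ℕ) : ℝ)) :
    IntervalIntegrable (fun x => ctz (k*δ) (k*x) * ph (h*x)) volume 0 1 := by
  simp_rw [ctz_split]
  exact (ii_c1 h1 k1 hc δ).add (int_c2 h1 k1 hδ hδ2).1

lemma Iz_eq (h1 : 1 ≤ h) (k1 : 1 ≤ k) (hc : Nat.Coprime h k) {δ : ℝ} (hδ : 0 < δ) (hδ2 : δ < 1/((max h k : ℕ) : ℝ)) :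
    Iz h k δ + (1/(√h*√k)) * Real.log δ = (∫ x in (0:ℝ)..1, c1z h k δ x) - (1/(√h*√k)) * Real.log ((max h k : ℕ) : ℝ) := by
  unfold Iz
  simp_rw [ctz_split]
  rw [intervalIntegral.integral_add (ii_c1 h1 k1 hc δ) (int_c2 h1 k1 hδ hδ2).1, (int_c2 h1 k1 hδ hδ2).2]
  ring

lemma ev_small (h1 : 1 ≤ h) : ∀ᶠ δ : ℝ in 𝓝[>] 0, 0 < δ ∧ δ < 1/((max h k : ℕ) : ℝ) := by
  have H0 : (0:ℝ) < ((max h k : ℕ) : ℝ) := by exact_mod_cast lt_max_of_lt_left h1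
  exact Ioo_mem_nhdsGT (by positivity)

lemma Iz_lim (h1 : 1 ≤ h) (k1 : 1 ≤ k) (hc : Nat.Coprime h k) :
    Tendsto (fun δ => Iz h k δ + (1/(√h*√k)) * Real.log δ) (𝓝[>] 0) (𝓝 (Vz h k)) := by
  have hk0 : (0:ℝ) < k := by exact_mod_cast k1
  have T : Tendsto (fun δ => (∫ x in (0:ℝ)..1, c1z h k δ x) - (1/(√h*√k)) * Real.log ((max h k : ℕ) : ℝ)) (𝓝[>] 0) (𝓝 (Vz h k)) := by
    apply Tendsto.sub_const
    refine intervalIntegral.tendsto_integral_filter_of_dominated_convergence (fun x => ‖ph (k*x) * ph (h*x) - Wc h k x‖) ?_ ?_ ?_ ?_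
    · refine Filter.Eventually.of_forall fun δ => ?_
      have := (ii_c1 h1 k1 hc δ).def'
      exact this.aestronglyMeasurable
    · refine Filter.Eventually.of_forall fun δ => Filter.Eventually.of_forall fun x _ => ?_
      unfold c1z; split_ifs
      · exact le_rfl
      · simp
    · exact (ii_plus h1 k1 hc).norm
    · refine Filter.Eventually.of_forall fun x _ => ?_
      apply tendsto_nhds_of_eventually_eq
      have : ∀ᶠ δ : ℝ in 𝓝[>] 0, δ ∈ Set.Ioo 0 (Pz (k*x)/k) := Ioo_mem_nhdsGT (div_pos (Pz_pos _) hk0)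
      filter_upwards [this] with δ hδ
      unfold c1z
      rw [if_pos]
      have := hδ.2
      rw [lt_div_iff₀ hk0] at this
      linarith
  refine T.congr' ?_
  filter_upwards [ev_small h1] with δ hδ
  exact (Iz_eq h1 k1 hc hδ.1 hδ.2).symm

lemma Vz_step (h1 : 1 ≤ h) (k1 : 1 ≤ k) (hc : Nat.Coprime h k) :
    Vz h k = 1/√k * Vz h 1 - 1/(√h*√k) * Real.log k := by
  have hk0 : (0:ℝ) < k := by exact_mod_cast k1
  have L1 := Iz_lim h1 k1 hc
  have L2 := Iz_lim h1 le_rfl (Nat.coprime_one_right h)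
  have tk : Tendsto (fun δ : ℝ => k * δ) (𝓝[>] 0) (𝓝[>] 0) := by
    apply tendsto_nhdsWithin_of_tendsto_nhds_of_eventually_within
    · have : Tendsto (fun δ : ℝ => k * δ) (𝓝 0) (𝓝 (k * 0)) := (continuous_const.mul continuous_id).tendsto 0
      rw [mul_zero] at this
      exact this.mono_left nhdsWithin_le_nhds
    · filter_upwards [self_mem_nhdsWithin] with δ hδ
      have : 0 < δ := hδ
      exact mul_pos hk0 this
  have L3 := ((L2.comp tk).const_mul (1/√k)).sub_const (1/(√h*√k) * Real.log k)
  refine tendsto_nhds_unique L1 (L3.congr' ?_)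
  filter_upwards [ev_small (k := k) h1] with δ hδ
  have e := dist_int (u := h) (f1 := ctz (k*δ)) (f2 := ph) k1 (ctz_periodic _) ph_periodic (fun y => by
    have := ph_dist_base k1 y h (Nat.isCoprime_iff_coprime.2 hc)
    simpa using this) (ii_ct h1 k1 hc hδ.1 hδ.2)
  have e' : Iz h k δ = 1/√k * Iz h 1 (k*δ) := by
    unfold Iz; rw [e]; simp
  simp only [Function.comp_apply]
  rw [e', Real.log_mul hk0.ne' hδ.1.ne']
  simp only [Nat.cast_one, Real.sqrt_one, mul_one]
  have s1 : √(k:ℝ) ≠ 0 := (Real.sqrt_pos.2 hk0).ne'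
  have s2 : √(h:ℝ) ≠ 0 := (Real.sqrt_pos.2 (by exact_mod_cast h1)).ne'
  field_simp
  ring

lemma Vz_symm (h k : ℕ) : Vz h k = Vz k h := by
  unfold Vz
  rw [max_comm, mul_comm (√(h:ℝ))]
  congr 2; ext x
  unfold Wc
  simp only [and_comm (a := (k:ℝ)*x < 1), mul_comm (ph (k*x)), mul_comm (pz (Pz (k*x)))]

lemma Vz_eq (h1 : 1 ≤ h) (k1 : 1 ≤ k) (hc : Nat.Coprime h k) :
    Vz h k = 1/(√h*√k) * (Vz 1 1 - Real.log (h*k)) := by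
  have hk0 : (0:ℝ) < k := by exact_mod_cast k1
  have hh0 : (0:ℝ) < h := by exact_mod_cast h1
  rw [Vz_step h1 k1 hc, Vz_symm h 1, Vz_step le_rfl h1 (Nat.coprime_one_left h), Real.log_mul hh0.ne' hk0.ne']
  have s1 : √(k:ℝ) ≠ 0 := (Real.sqrt_pos.2 hk0).ne'
  have s2 : √(h:ℝ) ≠ 0 := (Real.sqrt_pos.2 (by exact_mod_cast h1)).ne'
  simp only [Nat.cast_one, Real.sqrt_one, one_mul]
  field_simp
  ring

lemma harm_bound {N : ℕ} {Q H : ℝ} (hN : 1 ≤ N) (hH : 0 < H) (hQ : 0 < Q) (a : N*H ≤ Q) (b : Q ≤ (N+1)*H) :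
    |∑ n ∈ Finset.Ico 1 (N+1), 1/(n:ℝ) - (Real.log (Q/H) + Real.eulerMascheroniConstant)| ≤ 2*H/Q := by
  have e : ((harmonic N : ℚ) : ℝ) = ∑ n ∈ Finset.Ico 1 (N+1), 1/(n:ℝ) := by
    rw [harmonic_eq_sum_Icc]; push_cast
    refine Finset.sum_congr ?_ fun n _ => by simp
    ext x; simp [Nat.lt_succ_iff]
  rw [← e]
  have N0 : (0:ℝ) < N := by exact_mod_cast hN
  have u1 := Real.eulerMascheroniSeq_lt_eulerMascheroniConstant N
  have u2 := Real.eulerMascheroniConstant_lt_eulerMascheroniSeq' N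
  unfold Real.eulerMascheroniSeq at u1
  unfold Real.eulerMascheroniSeq' at u2
  rw [if_neg (by omega)] at u2
  have l1 : Real.log N ≤ Real.log (Q/H) := Real.log_le_log N0 (by rw [le_div_iff₀ hH]; exact a)
  have l2 : Real.log (Q/H) ≤ Real.log (N+1) := Real.log_le_log (by positivity) (by rw [div_le_iff₀ hH]; exact b)
  have l3 : Real.log (N+1) - Real.log N ≤ 1/N := by
    rw [← Real.log_div (by positivity) N0.ne']
    have := Real.log_le_sub_one_of_pos (show (0:ℝ) < (N+1)/N by positivity)
    have e : ((N:ℝ)+1)/N = 1 + 1/N := by field_simp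
    rw [e] at this ⊢; linarith
  have l4 : 1/(N:ℝ) ≤ 2*H/Q := by
    rw [div_le_div_iff₀ N0 hQ]
    have : (1:ℝ) ≤ N := by exact_mod_cast hN
    nlinarith
  rw [abs_le]; constructor <;> linarith

lemma sumWc {q : ℕ} (h1 : 1 ≤ h) (hhq : h < q) (k1 : 1 ≤ k) (hkq : k < q) :
    |∑ n ∈ Finset.Ico 1 q, Wc h k ((n:ℝ)/q) - q/(√h*√k) * (Real.log q - Real.log ((max h k : ℕ) : ℝ) + Real.eulerMascheroniConstant)| ≤ 2*√((h:ℝ)+k) := by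
  set H := max h k with hH
  have H1 : 1 ≤ H := le_max_of_le_left h1
  have Hq : H < q := max_lt hhq hkq
  set N := (q-1)/H with hN
  have N1 : 1 ≤ N := by rw [hN, Nat.le_div_iff_mul_le (by omega)]; omega
  have Na : N*H ≤ q - 1 := Nat.div_mul_le_self _ _
  have Nb : q - 1 < (N+1)*H := by
    have := Nat.lt_div_mul_add (a := q-1) (show 0 < H by omega)
    rw [← hN] at this
    nlinarith
  have q0 : (0:ℝ) < q := by exact_mod_cast (show 0 < q by omega)
  have H0 : (0:ℝ) < H := by exact_mod_cast H1
  have hh0 : (0:ℝ) < h := by exact_mod_cast h1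
  have hk0 : (0:ℝ) < k := by exact_mod_cast k1
  have s1 : 0 < √(k:ℝ) := Real.sqrt_pos.2 hk0
  have s2 : 0 < √(h:ℝ) := Real.sqrt_pos.2 hh0
  have hb := harm_bound (N := N) (Q := q) (H := H) N1 H0 q0 (by exact_mod_cast (by omega : N*H ≤ q)) (by exact_mod_cast (by omega : q ≤ (N+1)*H))
  rw [Real.log_div q0.ne' H0.ne'] at hb
  have es : ∑ n ∈ Finset.Ico 1 q, Wc h k ((n:ℝ)/q) = q/(√h*√k) * ∑ n ∈ Finset.Ico 1 (N+1), 1/(n:ℝ) := by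
    rw [Finset.mul_sum]
    have hsub : Finset.Ico 1 (N+1) ⊆ Finset.Ico 1 q := by
      apply Finset.Ico_subset_Ico_right
      have : N ≤ q - 1 := Nat.div_le_self _ _
      omega
    rw [← Finset.sum_subset hsub]
    · refine Finset.sum_congr rfl fun n hn => ?_
      rw [Finset.mem_Ico] at hn
      have n0 : (0:ℝ) < n := by exact_mod_cast hn.1
      have hnH : n*H < q := by
        have : n*H ≤ N*H := Nat.mul_le_mul_right _ (by omega)
        omega
      rw [Wc_pos h1 k1 (by positivity), if_pos]
      · field_simp
      · have a1 : n*k < q := lt_of_le_of_lt (Nat.mul_le_mul_left _ (le_max_right h k)) hnH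
        have a2 : n*h < q := lt_of_le_of_lt (Nat.mul_le_mul_left _ (le_max_left h k)) hnH
        have a1' : (n:ℝ)*k < q := by exact_mod_cast a1
        have a2' : (n:ℝ)*h < q := by exact_mod_cast a2
        constructor
        · rw [← mul_div_assoc, div_lt_one q0]; linarith
        · rw [← mul_div_assoc, div_lt_one q0]; linarith
    · intro n hn hn2
      rw [Finset.mem_Ico] at hn hn2
      have n0 : (0:ℝ) < n := by exact_mod_cast hn.1
      rw [Wc_pos h1 k1 (by positivity), if_neg]
      rintro ⟨a1, a2⟩
      rw [← mul_div_assoc, div_lt_one q0] at a1 a2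
      have a1' : k*n < q := by exact_mod_cast a1
      have a2' : h*n < q := by exact_mod_cast a2
      have : H*n < q := by
        rcases max_cases h k with ⟨e, _⟩ | ⟨e, _⟩
        · rw [hH, e]; exact a2'
        · rw [hH, e]; exact a1'
      have : (N+1)*H ≤ n*H := Nat.mul_le_mul_right _ (by omega)
      rw [mul_comm n H] at this
      omega
  rw [es, ← mul_sub, abs_mul, abs_of_nonneg (by positivity)]
  refine (mul_le_mul_of_nonneg_left hb (by positivity)).trans ?_
  have : (q:ℝ)/(√h*√k) * (2*H/q) = 2 * (H/(√h*√k)) := by field_simp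
  rw [this]
  gcongr
  rw [div_le_iff₀ (by positivity), ← Real.sqrt_mul hh0.le, ← Real.sqrt_mul (by positivity)]
  apply Real.le_sqrt_of_sq_le
  have h1' : (1:ℝ) ≤ h := by exact_mod_cast h1
  have k1' : (1:ℝ) ≤ k := by exact_mod_cast k1
  rcases max_cases h k with ⟨e, _⟩ | ⟨e, _⟩
  · rw [hH, e]
    nlinarith [mul_nonneg hh0.le hk0.le, mul_nonneg (mul_nonneg hh0.le hh0.le) (sub_nonneg.2 k1'), mul_nonneg hh0.le (mul_nonneg hk0.le hk0.le)]
  · rw [hH, e]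
    nlinarith [mul_nonneg hh0.le hk0.le, mul_nonneg (mul_nonneg hk0.le hk0.le) (sub_nonneg.2 h1'), mul_nonneg hk0.le (mul_nonneg hh0.le hh0.le)]

/-- combined asymptotics of the plus sum -/
lemma Tplus' {q : ℕ} (hq : q.Prime) (h1 : 1 ≤ h) (hhq : h < q) (k1 : 1 ≤ k) (hkq : k < q)
    (hc : Nat.Coprime h k) (h4 : 4*h*k ≤ q) :
    |∑ n ∈ Finset.Ico 1 q, ph (k * ((n:ℝ)/q)) * ph (h * ((n:ℝ)/q)) -
      q/(√h*√k) * (Real.log q - Real.log (h*k) + Real.eulerMascheroniConstant + Vz 1 1)| ≤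
      15680*(√(q*(h+k)) * (1 + Real.log q)) + 9 + 2*√((h:ℝ)+k) := by
  have a := Tplus hq h1 hhq k1 hkq hc h4
  have b := sumWc (q := q) h1 hhq k1 hkq
  have c := Vz_eq h1 k1 hc
  have d : ∫ x in (0:ℝ)..1, (ph (k*x) * ph (h*x) - Wc h k x) = 1/(√h*√k) * (Vz 1 1 - Real.log (h*k)) + (1/(√h*√k)) * Real.log ((max h k : ℕ) : ℝ) := by
    rw [← c]; unfold Vz; ring
  rw [d] at a
  rw [abs_le] at *
  have e : q/(√h*√k) * (Real.log q - Real.log (h*k) + Real.eulerMascheroniConstant + Vz 1 1) =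
    q/(√h*√k) * (Real.log q - Real.log ((max h k : ℕ) : ℝ) + Real.eulerMascheroniConstant) +
    q * (1/(√h*√k) * (Vz 1 1 - Real.log (h*k)) + (1/(√h*√k)) * Real.log ((max h k : ℕ) : ℝ)) := by ring
  rw [e]
  constructor <;> linarith [a.1, a.2, b.1, b.2]

end TT

namespace TT
open MeasureTheory intervalIntegral Filter Topology

lemma int_cgr {a b : ℝ} (hab : a ≤ b) {f g : ℝ → ℝ} (hfg : ∀ x, a < x → x < b → f x = g x) :
    ∫ x in a..b, f x = ∫ x in a..b, g x := by
  rw [intervalIntegral.integral_of_le hab, intervalIntegral.integral_of_le hab, integral_Ioc_eq_integral_Ioo, integral_Ioc_eq_integral_Ioo]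
  exact setIntegral_congr_fun measurableSet_Ioo fun x hx => hfg x hx.1 hx.2

lemma ii_cgr {a b : ℝ} (hab : a ≤ b) {f g : ℝ → ℝ} (hfg : ∀ x, a < x → x < b → f x = g x)
    (hg : IntervalIntegrable g volume a b) : IntervalIntegrable f volume a b := by
  rw [intervalIntegrable_iff_integrableOn_Ioo_of_le hab] at *
  exact hg.congr_fun (fun x hx => (hfg x hx.1 hx.2).symm) measurableSet_Ioo

lemma ii_dom {a b : ℝ} (hab : a ≤ b) {f g : ℝ → ℝ} (hm : Measurable f) (hfg : ∀ x, a < x → x < b → |f x| ≤ g x)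
    (hg : IntervalIntegrable g volume a b) : IntervalIntegrable f volume a b := by
  rw [intervalIntegrable_iff_integrableOn_Ioo_of_le hab] at *
  refine Integrable.mono' hg hm.aestronglyMeasurable ?_
  rw [ae_restrict_iff' measurableSet_Ioo]
  exact Eventually.of_forall fun x hx => hfg x hx.1 hx.2

lemma int_le {a b : ℝ} (hab : a ≤ b) {f g : ℝ → ℝ} (hf : IntervalIntegrable f volume a b) (hg : IntervalIntegrable g volume a b)
    (hfg : ∀ x, a < x → x < b → f x ≤ g x) : ∫ x in a..b, f x ≤ ∫ x in a..b, g x := by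
  rw [intervalIntegrable_iff_integrableOn_Ioo_of_le hab] at *
  rw [intervalIntegral.integral_of_le hab, intervalIntegral.integral_of_le hab, integral_Ioc_eq_integral_Ioo, integral_Ioc_eq_integral_Ioo]
  exact setIntegral_mono_on hf hg measurableSet_Ioo fun x hx => hfg x hx.1 hx.2

lemma beta_int {N c : ℝ} (hN : 0 < N) (hc : 0 ≤ c) :
    IntervalIntegrable (fun y => pz (N-y) * pz (y+c)) volume 0 N ∧
    ∫ y in (0:ℝ)..N, pz (N-y) * pz (y+c) = π/2 - Real.arcsin ((c-N)/(N+c)) := by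
  have hM : 0 < N + c := by linarith
  set F : ℝ → ℝ := fun y => Real.arcsin ((2*y+c-N)/(N+c)) with hF
  have hcont : ContinuousOn F (Set.Icc 0 N) := by
    apply Continuous.continuousOn
    exact Real.continuous_arcsin.comp (by fun_prop)
  have hder : ∀ y ∈ Set.Ioo 0 N, HasDerivAt F (pz (N-y) * pz (y+c)) y := by
    intro y hy
    have y0 : 0 < y := hy.1
    have y1 : y < N := hy.2
    have h1 : -1 < (2*y+c-N)/(N+c) := by rw [lt_div_iff₀ hM]; linarith
    have h2 : (2*y+c-N)/(N+c) < 1 := by rw [div_lt_one hM]; linarith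
    have d1 : HasDerivAt (fun y : ℝ => (2*y+c-N)/(N+c)) (2/(N+c)) y := by
      have := ((((hasDerivAt_id y).const_mul 2).add_const c).sub_const N).div_const (N+c)
      simpa using this
    have d2 := (Real.hasDerivAt_arcsin h1.ne' h2.ne).comp y d1
    have s1 := Real.sqrt_pos.2 (show 0 < N - y by linarith)
    have s2 := Real.sqrt_pos.2 (show 0 < y + c by linarith)
    have e : 1 - ((2*y+c-N)/(N+c))^2 = (2/(N+c))^2*((N-y)*(y+c)) := by
      field_simp; ring
    have e2 : √(1 - ((2*y+c-N)/(N+c))^2) = 2/(N+c)*(√(N-y)*√(y+c)) := by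
      rw [e, Real.sqrt_mul (by positivity), Real.sqrt_sq (by positivity), Real.sqrt_mul (by linarith)]
    rw [e2] at d2
    have e3 : pz (N-y)*pz (y+c) = 1/(2/(N+c)*(√(N-y)*√(y+c))) * (2/(N+c)) := by unfold pz; field_simp
    rw [e3]; exact d2
  have hii : IntervalIntegrable (fun y => pz (N-y) * pz (y+c)) volume 0 N := by
    rw [intervalIntegrable_iff_integrableOn_Ioc_of_le hN.le]
    exact integrableOn_deriv_of_nonneg hcont hder fun x _ => mul_nonneg (pz_nonneg _) (pz_nonneg _)
  refine ⟨hii, ?_⟩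
  rw [integral_eq_sub_of_hasDerivAt_of_le hN.le hcont hder hii]
  simp only [hF]
  have : (2*N+c-N)/(N+c) = 1 := by rw [div_eq_one_iff_eq hM.ne']; ring
  rw [this, Real.arcsin_one]; congr 3; ring

lemma beta0 {N : ℝ} (hN : 0 < N) : IntervalIntegrable (fun y => pz y * pz (N-y)) volume 0 N ∧
    ∫ y in (0:ℝ)..N, pz y * pz (N-y) = π := by
  have := beta_int hN (le_refl 0)
  have e : (0-N)/(N+0) = -1 := by field_simp; ring
  rw [e, Real.arcsin_neg, Real.arcsin_one] at this
  simp only [add_zero] at this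
  simp_rw [mul_comm (pz _) (pz (N-_))]
  exact ⟨this.1, by rw [this.2]; ring⟩

lemma vz_pz (x : ℝ) : vz x = pz x - pz (x+1) := rfl

lemma ez_meas : Measurable ez := by
  have : ez = fun x => fz x - (-2*√x + 1/(2*√x)) := by ext x; unfold fz; ring
  rw [this]
  exact fz_meas.sub (by fun_prop)

/-- bounds for products against pz -/
lemma beta_dom {N C : ℝ} (hN : 0 < N) {φ : ℝ → ℝ} (hm : Measurable φ) (hb : ∀ y, 0 < y → y < N → |φ y| ≤ C * pz y) :
    IntervalIntegrable (fun y => pz y * φ (N-y)) volume 0 N := by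
  refine ii_dom hN.le (g := fun y => C * (pz y * pz (N-y))) (pz_meas.mul (hm.comp (measurable_const.sub measurable_id))) ?_ ((beta0 hN).1.const_mul C)
  intro x h0 h1
  rw [abs_mul, abs_of_nonneg (pz_nonneg _)]
  have := mul_le_mul_of_nonneg_left (hb (N-x) (by linarith) (by linarith)) (pz_nonneg x)
  linarith

lemma beta_sqrt {N : ℝ} (hN : 0 < N) : IntervalIntegrable (fun y => pz y * √(N-y)) volume 0 N ∧
    ∫ y in (0:ℝ)..N, pz y * √(N-y) = N*π/2 := by
  have i1 : IntervalIntegrable (fun y => pz y * √(N-y)) volume 0 N := by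
    refine beta_dom (C := N) hN (φ := fun y => √y) (by fun_prop) ?_
    intro y h0 h1
    rw [abs_of_nonneg (Real.sqrt_nonneg _)]
    have := pz_mul_self h0
    rw [← this, mul_comm]
    exact mul_le_mul_of_nonneg_right h1.le (pz_nonneg _)
  have i2 : IntervalIntegrable (fun y => pz (N-y) * √y) volume 0 N := by
    have := (i1.comp_sub_left N).symm
    simpa using this
  refine ⟨i1, ?_⟩
  have e1 : ∫ y in (0:ℝ)..N, pz (N-y) * √y = ∫ y in (0:ℝ)..N, pz y * √(N-y) := by
    have := intervalIntegral.integral_comp_sub_left (a := 0) (b := N) (fun y => pz y * √(N-y)) N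
    simpa using this
  have e2 : ∫ y in (0:ℝ)..N, (pz y * √(N-y) + pz (N-y) * √y) = N * π := by
    rw [← (beta0 hN).2, ← intervalIntegral.integral_const_mul]
    apply int_cgr hN.le
    intro y h0 h1
    rw [← pz_mul_self h0, ← pz_mul_self (show 0 < N - y by linarith)]; ring
  rw [intervalIntegral.integral_add i1 i2, e1] at e2
  linarith

lemma ez_nn_le {y : ℝ} (hy : 0 < y) : |ez y| ≤ 1 * pz y := by
  rw [abs_of_nonneg (ez_nonneg hy)]
  have := ez_le hy
  rw [vz_pz] at this
  linarith [pz_nonneg (y+1)]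

lemma fz_abs {N y : ℝ} (hy : 0 < y) (hyN : y < N) : |fz y| ≤ (2*N+2) * pz y := by
  have h := fz_asymp hy
  have e := pz_mul_self hy
  have e2 : 2/√y = 2*pz y := by unfold pz; ring
  rw [e2] at h
  have : √y ≤ N*pz y := by
    rw [← e, mul_comm]
    exact mul_le_mul_of_nonneg_right hyN.le (pz_nonneg _)
  have p := pz_nonneg y
  have s := Real.sqrt_nonneg y
  rw [abs_le]; constructor <;> nlinarith [h.1, h.2]

noncomputable def az (N : ℕ) : ℝ := ∫ y in (0:ℝ)..N, pz y * fz (N-y)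

lemma az_ii {N : ℝ} (hN : 0 < N) : IntervalIntegrable (fun y => pz y * fz (N-y)) volume 0 N :=
  beta_dom hN fz_meas fun _ h0 h1 => fz_abs h0 h1

lemma az_eq {N : ℕ} (hN : 1 ≤ N) : 0 ≤ az N - (π/2 - N*π) ∧ az N - (π/2 - N*π) ≤ π/2 + Real.arcsin ((1-N)/(N+1)) := by
  have N0 : (0:ℝ) < N := by exact_mod_cast hN
  have i1 := (beta_sqrt N0)
  have i2 := (beta0 N0)
  have i3 : IntervalIntegrable (fun y => pz y * ez (N-y)) volume 0 N :=
    beta_dom N0 ez_meas fun y h0 _ => ez_nn_le h0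
  have i4 := beta_int N0 zero_le_one
  have e : az N = -2 * (∫ y in (0:ℝ)..N, pz y * √(N-y)) + 1/2 * (∫ y in (0:ℝ)..N, pz y * pz (N-y)) + (∫ y in (0:ℝ)..N, pz y * ez (N-y)) := by
    unfold az
    rw [← intervalIntegral.integral_const_mul, ← intervalIntegral.integral_const_mul,
      ← intervalIntegral.integral_add (i1.1.const_mul _) (i2.1.const_mul _),
      ← intervalIntegral.integral_add ((i1.1.const_mul _).add (i2.1.const_mul _)) i3]
    apply int_cgr N0.le
    intro y h0 h1
    have : fz (N-y) = -2*√(N-y) + 1/2*pz (N-y) + ez (N-y) := by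
      unfold fz pz; ring
    rw [this]; ring
  have e0 : 0 ≤ ∫ y in (0:ℝ)..N, pz y * ez (N-y) := by
    have := int_le N0.le (f := fun _ => (0:ℝ)) intervalIntegrable_const i3 (fun x h0 h1 => mul_nonneg (pz_nonneg _) (ez_nonneg (by linarith)))
    simpa using this
  have e1 : ∫ y in (0:ℝ)..N, pz y * ez (N-y) = ∫ y in (0:ℝ)..N, pz (N-y) * ez y := by
    have := intervalIntegral.integral_comp_sub_left (a := 0) (b := N) (fun y => pz y * ez (N-y)) N
    simp only [sub_sub_cancel, sub_self, sub_zero] at this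
    exact this.symm
  have i3' : IntervalIntegrable (fun y => pz (N-y) * ez y) volume 0 N := by
    have := (i3.comp_sub_left N).symm
    simpa using this
  have i2' := beta_int N0 (le_refl 0)
  have e2 : ∫ y in (0:ℝ)..N, pz (N-y) * ez y ≤ ∫ y in (0:ℝ)..N, (pz (N-y) * pz (y+0) - pz (N-y) * pz (y+1)) := by
    refine int_le N0.le i3' (i2'.1.sub i4.1) fun x h0 h1 => ?_
    have := mul_le_mul_of_nonneg_left (ez_le h0) (pz_nonneg (N-x))
    rw [vz_pz] at this
    rw [add_zero]; linarith
  rw [intervalIntegral.integral_sub i2'.1 i4.1, i2'.2, i4.2] at e2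
  have en : ((0:ℝ)-N)/(N+0) = -1 := by field_simp; ring
  rw [en, Real.arcsin_neg, Real.arcsin_one] at e2
  rw [i1.2, i2.2] at e
  constructor <;> linarith

lemma ii_fz : IntervalIntegrable fz volume 0 1 := by
  refine ii_dom zero_le_one (g := fun x => (2*1+2)*pz x) fz_meas (fun x h0 h1 => fz_abs h0 h1) ((ii_pz 0 1).const_mul _)

lemma ii_fz' : IntervalIntegrable (fun x => fz (1-x)) volume 0 1 := by
  have := (ii_fz.comp_sub_left 1).symm
  simpa using this

lemma fz_shift_bd {N : ℕ} (hN : 1 ≤ N) {x : ℝ} (h0 : 0 ≤ x) (h1 : x ≤ 1) : |fz (x+N) + 2*√N| ≤ 3/√N := by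
  have N0 : (0:ℝ) < N := by exact_mod_cast hN
  have h := fz_asymp (y := x+N) (by positivity)
  have sN := Real.sqrt_pos.2 N0
  have s1 : √(N:ℝ) ≤ √(x+N) := Real.sqrt_le_sqrt (by linarith)
  have s2 : √(x+N) ≤ √N + 1/(2*√N) := by
    rw [Real.sqrt_le_left (by positivity)]
    have := Real.mul_self_sqrt N0.le
    have e : (√(N:ℝ) + 1/(2*√N))^2 = √(N:ℝ)*√N + 1 + (1/(2*√N))^2 := by field_simp; ring
    rw [e, this]
    nlinarith [sq_nonneg (1/(2*√(N:ℝ)))]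
  have s3 : 2/√(x+N) ≤ 2/√N := by gcongr
  have e3 : 2*(1/(2*√(N:ℝ))) = 1/√N := by field_simp
  have e4 : 3/√(N:ℝ) = 1/√N + 2/√N := by rw [← add_div]; norm_num
  have : 0 < 1/√(N:ℝ) := by positivity
  have : 0 < 2/√(N:ℝ) := by positivity
  rw [abs_le, e4]; constructor <;> linarith [h.1, h.2]

lemma ii_fzN {N : ℕ} (hN : 1 ≤ N) {φ : ℝ → ℝ} (hm : Measurable φ) (hφ : IntervalIntegrable φ volume 0 1) :
    IntervalIntegrable (fun x => φ x * fz (x+N)) volume 0 1 := by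
  refine ii_dom zero_le_one (g := fun x => (3/√N + 2*√N) * ‖φ x‖) (hm.mul (fz_meas.comp (measurable_id.add_const _))) ?_ (hφ.norm.const_mul _)
  intro x h0 h1
  rw [abs_mul, mul_comm]
  refine mul_le_mul_of_nonneg_right ?_ (abs_nonneg _)
  have := abs_le.1 (fz_shift_bd hN h0.le h1.le)
  have := Real.sqrt_nonneg (N:ℝ)
  rw [abs_le]; constructor <;> linarith

lemma tend3 : Tendsto (fun N : ℕ => 3/√(N:ℝ)) atTop (𝓝 0) := by
  apply Tendsto.div_atTop tendsto_const_nhds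
  exact Real.tendsto_sqrt_atTop.comp tendsto_natCast_atTop_atTop

lemma fzN_bd {N : ℕ} (hN : 1 ≤ N) {φ : ℝ → ℝ} (hm : Measurable φ) (hφ : IntervalIntegrable φ volume 0 1) :
    |(∫ x in (0:ℝ)..1, φ x * fz (x+N)) + 2*√N * ∫ x in (0:ℝ)..1, φ x| ≤ 3/√N * ∫ x in (0:ℝ)..1, |φ x| := by
  have i := ii_fzN hN hm hφ
  rw [← intervalIntegral.integral_const_mul, ← intervalIntegral.integral_add i (hφ.const_mul _), ← intervalIntegral.integral_const_mul]
  refine (intervalIntegral.abs_integral_le_integral_abs zero_le_one).trans ?_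
  refine int_le zero_le_one (i.add (hφ.const_mul _)).norm (hφ.norm.const_mul _) fun x h0 h1 => ?_
  rw [show φ x * fz (x+N) + 2*√N * φ x = (fz (x+N) + 2*√N) * φ x by ring, abs_mul]
  exact mul_le_mul_of_nonneg_right (fz_shift_bd hN h0.le h1.le) (abs_nonneg _)

lemma ii_pzn (n : ℕ) : IntervalIntegrable (fun x => pz (x+n)) volume 0 1 := by
  have := (ii_pz (0+n) (1+n)).comp_add_right (n:ℝ)
  simpa using this

lemma int_fz : ∫ x in (0:ℝ)..1, fz x = 0 := by
  have key : ∀ N : ℕ, 1 ≤ N → |∫ x in (0:ℝ)..1, fz x| ≤ 3/√N := by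
    intro N hN
    have b := fzN_bd hN (φ := fun _ => 1) measurable_const intervalIntegrable_const
    have i := ii_fzN hN (φ := fun _ => 1) measurable_const intervalIntegrable_const
    simp only [one_mul, intervalIntegral.integral_const, sub_zero, smul_eq_mul, mul_one, abs_one] at b i
    have e : ∫ x in (0:ℝ)..1, fz x = ∫ x in (0:ℝ)..1, (∑ n ∈ Finset.range N, pz (x+n) + fz (x+N)) :=
      int_cgr zero_le_one fun x h0 _ => fz_add_nat h0 N
    have isum : IntervalIntegrable (fun x => ∑ n ∈ Finset.range N, pz (x+n)) volume 0 1 := by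
      have := IntervalIntegrable.sum (Finset.range N) (f := fun (n:ℕ) x => pz (x+n)) (fun j _ => ii_pzn j)
      have e : (∑ j ∈ Finset.range N, fun x => pz (x+(j:ℝ))) = fun x => ∑ j ∈ Finset.range N, pz (x+(j:ℝ)) := by
        ext x; simp
      rw [← e]; exact this
    rw [intervalIntegral.integral_add isum i, intervalIntegral.integral_finsetSum (fun j _ => ii_pzn j)] at e
    have e2 : ∀ n ∈ Finset.range N, ∫ x in (0:ℝ)..1, pz (x+n) = 2*√((n+1:ℕ):ℝ) - 2*√(n:ℝ) := by
      intro n _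
      rw [intervalIntegral.integral_comp_add_right pz, int_pz]
      push_cast
      rw [zero_add, add_comm]
    rw [Finset.sum_congr rfl e2, Finset.sum_range_sub (fun n => 2*√(n:ℝ))] at e
    rw [e]
    simp only [Nat.cast_zero, Real.sqrt_zero, mul_zero, sub_zero]
    rw [add_comm]; exact b
  have : |∫ x in (0:ℝ)..1, fz x| ≤ 0 :=
    ge_of_tendsto tend3 (by filter_upwards [eventually_ge_atTop 1] with N hN using key N hN)
  exact abs_eq_zero.1 (le_antisymm this (abs_nonneg _))

lemma int_fz' : ∫ x in (0:ℝ)..1, fz (1-x) = 0 := by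
  have := intervalIntegral.integral_comp_sub_left (a := 0) (b := 1) fz 1
  rw [this]; simpa using int_fz

lemma Rlim {φ : ℝ → ℝ} (hm : Measurable φ) (hφ : IntervalIntegrable φ volume 0 1) (h0 : ∫ x in (0:ℝ)..1, φ x = 0) :
    Tendsto (fun N : ℕ => ∫ x in (0:ℝ)..1, φ x * fz (x+N)) atTop (𝓝 0) := by
  have t := tend3.mul_const (∫ x in (0:ℝ)..1, |φ x|)
  rw [zero_mul] at t
  refine squeeze_zero_norm' ?_ t
  filter_upwards [eventually_ge_atTop 1] with N hN
  have := fzN_bd hN hm hφ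
  rw [h0, mul_zero, add_zero] at this
  exact this

lemma ii_pf (n : ℕ) : IntervalIntegrable (fun x => pz (x+n) * fz (1-x)) volume 0 1 := by
  refine ii_dom zero_le_one (g := fun x => |pz x * fz (1-x)|) ((pz_meas.comp (measurable_id.add_const _)).mul (fz_meas.comp (measurable_const.sub measurable_id))) ?_ (az_ii one_pos).norm
  intro x h0 h1
  rw [abs_mul, abs_mul]
  refine mul_le_mul_of_nonneg_right ?_ (abs_nonneg _)
  rw [abs_of_nonneg (pz_nonneg _), abs_of_nonneg (pz_nonneg _)]
  apply pz_anti h0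
  have : (0:ℝ) ≤ n := by positivity
  linarith

lemma az_rec {N : ℕ} (hN : 1 ≤ N) : az (N+1) = az N - π + ∫ x in (0:ℝ)..1, pz (x+N) * fz (1-x) := by
  have N0 : (0:ℝ) < N := by exact_mod_cast hN
  have i1 := az_ii (N := ((N+1:ℕ):ℝ)) (by positivity)
  have ia : IntervalIntegrable (fun y => pz y * fz (((N+1:ℕ):ℝ)-y)) volume 0 N := by
    refine i1.mono_set ?_
    rw [Set.uIcc_of_le N0.le, Set.uIcc_of_le (by positivity)]
    exact Set.Icc_subset_Icc_right (by push_cast; linarith)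
  have ib : IntervalIntegrable (fun y => pz y * fz (((N+1:ℕ):ℝ)-y)) volume N ((N+1:ℕ):ℝ) := by
    refine i1.mono_set ?_
    rw [Set.uIcc_of_le (by push_cast; linarith), Set.uIcc_of_le (by positivity)]
    exact Set.Icc_subset_Icc_left N0.le
  unfold az
  rw [← intervalIntegral.integral_add_adjacent_intervals ia ib]
  congr 1
  · rw [← (beta0 N0).2, ← intervalIntegral.integral_sub (az_ii N0) (beta0 N0).1]
    apply int_cgr N0.le
    intro y h0 h1
    rw [fz_succ (x := N - y) (by linarith)]
    unfold pz
    rw [show ((N+1:ℕ):ℝ) - y = N - y + 1 by push_cast; ring]; ring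
  · have := intervalIntegral.integral_comp_add_right (a := 0) (b := 1) (fun y => pz y * fz (((N+1:ℕ):ℝ)-y)) (N:ℝ)
    rw [zero_add, show (1:ℝ)+N = ((N+1:ℕ):ℝ) by push_cast; ring] at this
    rw [← this]
    congr 1; ext x; congr 2; push_cast; ring

lemma az_sum {N : ℕ} (hN : 1 ≤ N) : ∑ n ∈ Finset.range N, ∫ x in (0:ℝ)..1, pz (x+n) * fz (1-x) = az N + (N-1)*π := by
  induction N, hN using Nat.le_induction with
  | base => simp [az]
  | succ N hN ih =>
    rw [Finset.sum_range_succ, ih, az_rec hN]; push_cast; ring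

theorem const_minus : ∫ x in (0:ℝ)..1, ph x * ph (-x) = -(π/2) := by
  have e0 : ∫ x in (0:ℝ)..1, ph x * ph (-x) = ∫ x in (0:ℝ)..1, fz x * fz (1-x) := by
    apply int_cgr zero_le_one
    intro x h0 h1
    rw [ph_eq h0 h1.le, ← ph_add_int (-x) 1, ph_eq] <;> push_cast
    · congr 2; ring
    · linarith
    · linarith
  rw [e0]
  have hR := Rlim (φ := fun x => fz (1-x)) (fz_meas.comp (measurable_const.sub measurable_id)) ii_fz' int_fz'
  have harc : Tendsto (fun N : ℕ => π/2 + Real.arcsin ((1-(N:ℝ))/(N+1))) atTop (𝓝 0) := by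
    have t1 : Tendsto (fun N : ℕ => (1-(N:ℝ))/(N+1)) atTop (𝓝 (-1)) := by
      have : Tendsto (fun N : ℕ => -1 + 2 * (1/((N:ℝ)+1))) atTop (𝓝 (-1 + 2*0)) :=
        (tendsto_one_div_add_atTop_nhds_zero_nat.const_mul 2).const_add (-1)
      rw [mul_zero, add_zero] at this
      refine this.congr fun N => ?_
      field_simp; ring
    have := ((Real.continuous_arcsin.tendsto (-1)).comp t1).const_add (π/2)
    rw [Real.arcsin_neg, Real.arcsin_one, add_neg_cancel] at this
    exact this
  have ha : Tendsto (fun N : ℕ => az N - (π/2 - N*π)) atTop (𝓝 0) := by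
    refine tendsto_of_tendsto_of_tendsto_of_le_of_le' tendsto_const_nhds harc ?_ ?_
    · filter_upwards [eventually_ge_atTop 1] with N hN using (az_eq hN).1
    · filter_upwards [eventually_ge_atTop 1] with N hN using (az_eq hN).2
  have tot := (ha.add hR).add_const (-(π/2))
  rw [add_zero, zero_add] at tot
  refine tendsto_nhds_unique (tendsto_const_nhds.congr' ?_) tot
  filter_upwards [eventually_ge_atTop 1] with N hN
  have e : ∫ x in (0:ℝ)..1, fz x * fz (1-x) = ∫ x in (0:ℝ)..1, (∑ n ∈ Finset.range N, pz (x+n) * fz (1-x) + fz (1-x) * fz (x+N)) := by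
    apply int_cgr zero_le_one
    intro x h0 _
    rw [fz_add_nat h0 N, ← Finset.sum_mul]; unfold pz; ring
  have isum : IntervalIntegrable (fun x => ∑ n ∈ Finset.range N, pz (x+n) * fz (1-x)) volume 0 1 := by
    have := IntervalIntegrable.sum (Finset.range N) (f := fun (n:ℕ) x => pz (x+n) * fz (1-x)) (fun j _ => ii_pf j)
    have e : (∑ j ∈ Finset.range N, fun x => pz (x+(j:ℝ)) * fz (1-x)) = fun x => ∑ j ∈ Finset.range N, pz (x+(j:ℝ)) * fz (1-x) := by
      ext x; simp
    rw [← e]; exact this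
  rw [e, intervalIntegral.integral_add isum (ii_fzN (φ := fun x => fz (1-x)) hN (fz_meas.comp (measurable_const.sub measurable_id)) ii_fz'),
    intervalIntegral.integral_finsetSum (fun j _ => ii_pf j), az_sum hN]
  ring

end TT

namespace TT
open MeasureTheory intervalIntegral Filter Topology

lemma pp_int {n N : ℕ} (hN : 1 ≤ N) : IntervalIntegrable (fun x => pz (x+n) * pz (x+N)) volume 0 1 ∧
    ∫ x in (0:ℝ)..1, pz (x+n) * pz (x+N) = 2*Real.log (√((n:ℝ)+1)+√((N:ℝ)+1)) - 2*Real.log (√(n:ℝ)+√(N:ℝ)) := by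
  have N0 : (0:ℝ) < N := by exact_mod_cast hN
  have n0 : (0:ℝ) ≤ n := by positivity
  set F : ℝ → ℝ := fun x => 2*Real.log (√(x+n)+√(x+N)) with hF
  have hcont : ContinuousOn F (Set.Icc 0 1) := by
    apply ContinuousOn.mul continuousOn_const
    apply ContinuousOn.log
    · fun_prop
    · intro x hx
      have := Real.sqrt_pos.2 (show 0 < x + N by linarith [hx.1])
      positivity
  have hder : ∀ x ∈ Set.Ioo (0:ℝ) 1, HasDerivAt F (pz (x+n) * pz (x+N)) x := by
    intro x hx
    have a0 : 0 < x + n := by linarith [hx.1]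
    have b0 : 0 < x + N := by linarith [hx.1]
    have s1 := Real.sqrt_pos.2 a0
    have s2 := Real.sqrt_pos.2 b0
    have d1 := ((hasDerivAt_id x).add_const (n:ℝ)).sqrt a0.ne'
    have d2 := ((hasDerivAt_id x).add_const (N:ℝ)).sqrt b0.ne'
    have d3 := ((d1.add d2).log (by simp only [Pi.add_apply, id]; positivity)).const_mul 2
    have e : pz (x+n) * pz (x+N) = 2*((1/(2*√(id x+n)) + 1/(2*√(id x+N)))/(√(x+n)+√(x+N))) := by
      simp only [id, pz]; field_simp; ring
    rw [e]; exact d3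
  have hii : IntervalIntegrable (fun x => pz (x+n) * pz (x+N)) volume 0 1 := by
    rw [intervalIntegrable_iff_integrableOn_Ioc_of_le zero_le_one]
    exact integrableOn_deriv_of_nonneg hcont hder fun x _ => mul_nonneg (pz_nonneg _) (pz_nonneg _)
  refine ⟨hii, ?_⟩
  rw [integral_eq_sub_of_hasDerivAt_of_le zero_le_one hcont hder hii]
  simp only [hF, zero_add]
  rw [add_comm (1:ℝ) n, add_comm (1:ℝ) N]

noncomputable def sN (N : ℕ) (x : ℝ) : ℝ := ∑ n ∈ Finset.range N, pz (x+n)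
noncomputable def PN (N : ℕ) : ℝ := ∑ n ∈ Finset.range N, Real.log (√(n:ℝ)+√(N:ℝ))

lemma cN {N : ℕ} (hN : 1 ≤ N) : IntervalIntegrable (fun x => sN N x^2 - 1/x) volume 0 1 ∧
    ∫ x in (0:ℝ)..1, (sN N x^2 - 1/x) = 4*PN N - 2*Real.log (N.factorial) + Real.log N := by
  induction N, hN using Nat.le_induction with
  | base =>
    have e : ∀ x : ℝ, 0 < x → x < 1 → sN 1 x^2 - 1/x = 0 := by
      intro x h0 _
      simp only [sN, Finset.sum_range_one, pz, Nat.cast_zero, add_zero, div_pow, one_pow, Real.sq_sqrt h0.le, sub_self]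
    refine ⟨ii_cgr zero_le_one e intervalIntegrable_const, ?_⟩
    rw [int_cgr zero_le_one e]
    simp [PN]
  | succ N hN ih =>
    have N0 : (0:ℝ) < N := by exact_mod_cast hN
    have e : ∀ x : ℝ, 0 < x → x < 1 → sN (N+1) x^2 - 1/x = (sN N x^2 - 1/x) + (2*∑ n ∈ Finset.range N, pz (x+n)*pz (x+N) + pz (x+N)*pz (x+N)) := by
      intro x h0 _
      rw [sN, Finset.sum_range_succ, ← sN, ← Finset.sum_mul, ← sN]; ring
    have isum : IntervalIntegrable (fun x => ∑ n ∈ Finset.range N, pz (x+n) * pz (x+N)) volume 0 1 := by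
      have := IntervalIntegrable.sum (Finset.range N) (f := fun (n:ℕ) x => pz (x+n) * pz (x+N)) (fun j _ => (pp_int hN).1)
      have e : (∑ j ∈ Finset.range N, fun x => pz (x+(j:ℝ)) * pz (x+N)) = fun x => ∑ j ∈ Finset.range N, pz (x+(j:ℝ)) * pz (x+N) := by
        ext x; simp
      rw [← e]; exact this
    have i2 := (isum.const_mul 2).add (pp_int (n := N) hN).1
    refine ⟨ii_cgr zero_le_one e (ih.1.add i2), ?_⟩
    rw [int_cgr zero_le_one e, intervalIntegral.integral_add ih.1 i2, ih.2, intervalIntegral.integral_add (isum.const_mul 2) (pp_int (n := N) hN).1,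
      intervalIntegral.integral_const_mul, intervalIntegral.integral_finsetSum (fun j _ => (pp_int hN).1),
      Finset.sum_congr rfl (fun n _ => (pp_int (n := n) hN).2), (pp_int (n := N) hN).2, Finset.sum_sub_distrib, ← Finset.mul_sum, ← Finset.mul_sum, ← PN]
    have eP : PN (N+1) = ∑ n ∈ Finset.range N, Real.log (√((n:ℝ)+1)+√((N:ℝ)+1)) + 1/2*Real.log ((N:ℝ)+1) := by
      rw [PN, Finset.sum_range_succ']
      push_cast
      rw [Real.sqrt_zero, zero_add, Real.log_sqrt (by positivity)]; ring
    rw [eP, Nat.factorial_succ]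
    have f0 : (0:ℝ) < N.factorial := by exact_mod_cast N.factorial_pos
    push_cast
    have l1 : Real.log (√((N:ℝ)+1) + √((N:ℝ)+1)) = Real.log 2 + 1/2*Real.log ((N:ℝ)+1) := by
      rw [← two_mul, Real.log_mul (by norm_num) (by positivity), Real.log_sqrt (by positivity)]; ring
    have l2 : Real.log (√(N:ℝ) + √(N:ℝ)) = Real.log 2 + 1/2*Real.log N := by
      rw [← two_mul, Real.log_mul (by norm_num) (by positivity), Real.log_sqrt (by positivity)]; ring
    rw [l1, l2, Real.log_mul (by positivity) f0.ne']
    ring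

lemma fz_sq {y : ℝ} (hy : 1 ≤ y) : |fz y^2 - (4*y-2)| ≤ 4/y := by
  have y0 : 0 < y := by linarith
  have s1 : 1 ≤ √y := by rw [Real.one_le_sqrt]; exact hy
  have s0 : 0 < √y := by linarith
  have e0 := ez_nonneg y0
  have e1 := ez_le y0
  rw [vz_eq y0] at e1
  have s2 : √y ≤ √(y+1) := Real.sqrt_le_sqrt (by linarith)
  have e2 : ez y ≤ 1/(2*√y^3) := by
    refine e1.trans ?_
    apply one_div_le_one_div_of_le (by positivity)
    have : √y*√y*(√y+√y) ≤ √y*√(y+1)*(√y+√(y+1)) := by gcongr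
    nlinarith
  have hyy : y = √y^2 := (Real.sq_sqrt y0.le).symm
  set s := √y
  have ef : fz y = -2*s + 1/(2*s) + ez y := rfl
  have k1 : ez y * s ≤ 1/(2*s^2) := by
    have := mul_le_mul_of_nonneg_right e2 s0.le
    refine this.trans_eq ?_
    field_simp
  have k2 : ez y * (1/(2*s)) ≤ 1/(2*s^2) := by
    have : 1/(2*s) ≤ s := by rw [div_le_iff₀ (by positivity)]; nlinarith
    exact (mul_le_mul_of_nonneg_left this e0).trans k1
  have k3 : ez y^2 ≤ 1/(2*s^2) := by
    have : ez y ≤ s := by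
      refine e2.trans ?_
      rw [div_le_iff₀ (by positivity)]
      have : 1 ≤ s^4 := one_le_pow₀ s1
      nlinarith
    rw [sq]
    exact (mul_le_mul_of_nonneg_left this e0).trans k1
  have e : fz y^2 - (4*y-2) = 1/2*(1/(2*s^2)) - 4*(ez y*s) + 2*(ez y*(1/(2*s))) + ez y^2 := by
    rw [ef, hyy]; field_simp; ring
  rw [e, show 4/y = 8*(1/(2*s^2)) by rw [hyy]; field_simp; norm_num]
  have p1 : 0 ≤ ez y*s := by positivity
  have p2 : 0 ≤ ez y*(1/(2*s)) := by positivity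
  have p3 : 0 ≤ 1/(2*s^2) := by positivity
  have p4 : 0 ≤ ez y^2 := by positivity
  rw [abs_le]; constructor <;> linarith

lemma ii_g {N : ℕ} (hN : 1 ≤ N) : IntervalIntegrable (fun x => fz (x+N)) volume 0 1 := by
  have i := ii_fzN hN (φ := fun _ => 1) measurable_const intervalIntegrable_const
  simpa using i

lemma ii_g2 {N : ℕ} (hN : 1 ≤ N) : IntervalIntegrable (fun x => fz (x+N) * fz (x+N)) volume 0 1 :=
  ii_fzN (φ := fun x => fz (x+N)) hN (fz_meas.comp (measurable_id.add_const _)) (ii_g hN)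

lemma int_g2 {N : ℕ} (hN : 1 ≤ N) : |(∫ x in (0:ℝ)..1, fz (x+N) * fz (x+N)) - 4*N| ≤ 4/N := by
  have N1 : (1:ℝ) ≤ N := by exact_mod_cast hN
  have il : IntervalIntegrable (fun x : ℝ => 4*(x+N)-2) volume 0 1 := by
    apply Continuous.intervalIntegrable; fun_prop
  have e : ∫ x in (0:ℝ)..1, (4*(x+N)-2) = 4*(N:ℝ) := by
    have : ∀ x : ℝ, 4*(x+N)-2 = 4*x + (4*N-2) := fun x => by ring
    simp_rw [this]
    rw [intervalIntegral.integral_add (by apply Continuous.intervalIntegrable; fun_prop) intervalIntegrable_const, intervalIntegral.integral_const_mul, integral_id]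
    simp; ring
  rw [← e, ← intervalIntegral.integral_sub (ii_g2 hN) il]
  refine (intervalIntegral.abs_integral_le_integral_abs zero_le_one).trans ?_
  have : ∫ x in (0:ℝ)..1, (4/(N:ℝ)) = 4/N := by simp
  rw [← this]
  refine int_le zero_le_one ((ii_g2 hN).sub il).norm intervalIntegrable_const fun x h0 h1 => ?_
  rw [← sq]
  refine (fz_sq (by linarith)).trans ?_
  gcongr; linarith

/-! Trapezoid for PN -/
noncomputable def Gt (N : ℕ) (t : ℝ) : ℝ := Real.log (√t + √(N:ℝ))
noncomputable def Dt (N : ℕ) (t : ℝ) : ℝ := 1/(2*√t*(√t + √(N:ℝ)))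

lemma Gt_cont {N : ℕ} (hN : 1 ≤ N) : Continuous (Gt N) := by
  have : 0 < √(N:ℝ) := Real.sqrt_pos.2 (by exact_mod_cast hN)
  exact Continuous.log (by fun_prop) (fun x => by positivity)

lemma Gt_bd {N : ℕ} (hN : 1 ≤ N) {a b : ℝ} (ha : 0 < a) (hab : a ≤ b) :
    (b-a)*Dt N b ≤ Gt N b - Gt N a ∧ Gt N b - Gt N a ≤ (b-a)*Dt N a := by
  have n0 : 0 < √(N:ℝ) := Real.sqrt_pos.2 (by exact_mod_cast hN)
  have b0 : 0 < b := by linarith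
  have s1 := Real.sqrt_pos.2 ha
  have s2 := Real.sqrt_pos.2 b0
  have s3 := Real.sqrt_le_sqrt hab
  have ea := Real.sq_sqrt ha.le
  have eb := Real.sq_sqrt b0.le
  unfold Gt Dt
  rw [← ea, ← eb]
  simp only [Real.sqrt_sq s1.le, Real.sqrt_sq s2.le]
  set u := √a
  set v := √b
  set w := √(N:ℝ)
  rw [← Real.log_div (by positivity) (by positivity)]
  constructor
  · have := Real.one_sub_inv_le_log_of_pos (show 0 < (v+w)/(u+w) by positivity)
    refine le_trans ?_ this
    have e : 1 - ((v+w)/(u+w))⁻¹ = (v-u)/(v+w) := by field_simp; ring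
    rw [e, mul_one_div, div_le_div_iff₀ (by positivity) (by positivity)]
    nlinarith [mul_nonneg (mul_nonneg (sub_nonneg.2 s3) (sub_nonneg.2 s3)) (show 0 ≤ v + w by positivity)]
  · have := Real.log_le_sub_one_of_pos (show 0 < (v+w)/(u+w) by positivity)
    refine this.trans ?_
    have e : (v+w)/(u+w) - 1 = (v-u)/(u+w) := by field_simp; ring
    rw [e, mul_one_div, div_le_div_iff₀ (by positivity) (by positivity)]
    nlinarith [mul_nonneg (mul_nonneg (sub_nonneg.2 s3) (sub_nonneg.2 s3)) (show 0 ≤ u + w by positivity)]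

lemma Dt_anti {N : ℕ} (hN : 1 ≤ N) {a b : ℝ} (ha : 0 < a) (hab : a ≤ b) : Dt N b ≤ Dt N a := by
  have n0 : 0 < √(N:ℝ) := Real.sqrt_pos.2 (by exact_mod_cast hN)
  have s1 := Real.sqrt_pos.2 ha
  have s3 := Real.sqrt_le_sqrt hab
  unfold Dt
  gcongr

lemma lin_int (i A B : ℝ) : ∫ t in i..(i+1), (A + (t-i)*B) = A + B/2 := by
  have h := intervalIntegral.integral_comp_sub_right (a := i) (b := i+1) (fun t => A + t*B) i
  simp only [sub_self, add_sub_cancel_left] at h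
  rw [h, intervalIntegral.integral_add intervalIntegrable_const (by apply Continuous.intervalIntegrable; fun_prop), intervalIntegral.integral_mul_const, integral_id]
  simp; ring

lemma cell {N : ℕ} (hN : 1 ≤ N) {i : ℝ} (hi : 0 < i) :
    |(∫ t in i..(i+1), Gt N t) - (Gt N i + Gt N (i+1))/2| ≤ (Dt N i - Dt N (i+1))/2 := by
  have iG : IntervalIntegrable (Gt N) volume i (i+1) := (Gt_cont hN).intervalIntegrable _ _
  have iL : ∀ B, IntervalIntegrable (fun t => Gt N i + (t-i)*B) volume i (i+1) := fun B => by
    apply Continuous.intervalIntegrable; fun_prop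
  have h1 := int_le (by linarith) iG (iL (Dt N i)) (fun t h0 h1 => by
    have := (Gt_bd hN hi h0.le).2; linarith)
  have h2 := int_le (by linarith) (iL (Dt N (i+1))) iG (fun t h0 h1 => by
    have := (Gt_bd hN hi h0.le).1
    have k := mul_le_mul_of_nonneg_left (Dt_anti hN (show 0 < t by linarith) h1.le) (sub_nonneg.2 h0.le)
    linarith)
  rw [lin_int] at h1 h2
  have h3 := Gt_bd hN hi (show i ≤ i+1 by linarith)
  simp only [add_sub_cancel_left, one_mul] at h3
  rw [abs_le]; constructor <;> linarith [h3.1, h3.2]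

lemma cell0 {N : ℕ} (hN : 1 ≤ N) :
    |(∫ t in (0:ℝ)..1, Gt N t) - (Gt N 0 + Gt N 1)/2| ≤ 1/√N := by
  have n0 : 0 < √(N:ℝ) := Real.sqrt_pos.2 (by exact_mod_cast hN)
  have iG : IntervalIntegrable (Gt N) volume 0 1 := (Gt_cont hN).intervalIntegrable _ _
  have hm : ∀ a b : ℝ, a ≤ b → Gt N a ≤ Gt N b := by
    intro a b hab
    unfold Gt
    apply Real.log_le_log (by positivity)
    linarith [Real.sqrt_le_sqrt hab]
  have h1 := int_le zero_le_one iG (g := fun _ => Gt N 1) intervalIntegrable_const (fun t h0 h1 => hm _ _ h1.le)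
  have h2 := int_le zero_le_one (f := fun _ => Gt N 0) intervalIntegrable_const iG (fun t h0 h1 => hm _ _ h0.le)
  simp only [intervalIntegral.integral_const, sub_zero, one_smul] at h1 h2
  have h3 : Gt N 1 - Gt N 0 ≤ 1/√N := by
    unfold Gt
    rw [Real.sqrt_one, Real.sqrt_zero, zero_add, ← Real.log_div (by positivity) (by positivity)]
    refine (Real.log_le_sub_one_of_pos (by positivity)).trans_eq ?_
    field_simp; ring
  have := hm 0 1 zero_le_one
  rw [abs_le]; constructor <;> linarith

lemma int_Gt {N : ℕ} (hN : 1 ≤ N) : ∫ t in (0:ℝ)..N, Gt N t = N/2 + 1/2*(N*Real.log N) := by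
  have N0 : (0:ℝ) < N := by exact_mod_cast hN
  have n0 : 0 < √(N:ℝ) := Real.sqrt_pos.2 N0
  set F : ℝ → ℝ := fun t => (t-N)*Real.log (√t+√N) + √N*√t - t/2 with hF
  have hcont : ContinuousOn F (Set.Icc 0 N) := by
    apply Continuous.continuousOn
    have := Gt_cont hN
    unfold Gt at this
    fun_prop
  have hder : ∀ t ∈ Set.Ioo (0:ℝ) N, HasDerivAt F (Gt N t) t := by
    intro t ht
    have t0 : 0 < t := ht.1
    have s0 := Real.sqrt_pos.2 t0
    have d1 := Real.hasDerivAt_sqrt t0.ne'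
    have d2 := (d1.add_const (√(N:ℝ))).log (by positivity)
    have d3 := ((((hasDerivAt_id t).sub_const (N:ℝ)).mul d2).add (d1.const_mul (√(N:ℝ)))).sub ((hasDerivAt_id t).div_const 2)
    have e : Gt N t = 1*Real.log (√t+√N) + (id t - N)*(1/(2*√t)/(√t+√N)) + √N*(1/(2*√t)) - 1/2 := by
      unfold Gt
      have e1 : (id t - N) = (√t - √N)*(√t+√N) := by
        have a := Real.mul_self_sqrt t0.le
        have b := Real.mul_self_sqrt N0.le
        simp only [id]; linear_combination b - a
      rw [e1]; field_simp; ring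
    rw [e]; exact d3
  rw [integral_eq_sub_of_hasDerivAt_of_le N0.le hcont hder ((Gt_cont hN).intervalIntegrable _ _)]
  simp only [hF, Real.sqrt_zero, zero_add, sub_self, zero_mul, Real.mul_self_sqrt N0.le, mul_zero]
  rw [Real.log_sqrt N0.le]; ring

lemma trap {N : ℕ} (hN : 1 ≤ N) {M : ℕ} (hM : 1 ≤ M) :
    |(∫ t in (0:ℝ)..M, Gt N t) - (∑ i ∈ Finset.range M, Gt N i + (Gt N M - Gt N 0)/2)| ≤ 1/√N + (Dt N 1 - Dt N M)/2 := by
  induction M, hM using Nat.le_induction with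
  | base =>
    have := cell0 hN
    simp only [Nat.cast_one, Finset.sum_range_one, Nat.cast_zero, sub_self, zero_div, add_zero]
    convert this using 3; ring
  | succ M hM ih =>
    have c := cell hN (i := M) (by exact_mod_cast hM)
    have iG : ∀ a b, IntervalIntegrable (Gt N) volume a b := fun a b => (Gt_cont hN).intervalIntegrable _ _
    push_cast
    rw [← intervalIntegral.integral_add_adjacent_intervals (iG 0 M) (iG M (M+1)), Finset.sum_range_succ]
    rw [abs_le] at *
    constructor <;> linarith [ih.1, ih.2, c.1, c.2]

lemma PN_bd {N : ℕ} (hN : 1 ≤ N) : |PN N - (N/2 + 1/2*(N*Real.log N) - Real.log 2/2)| ≤ 3/√N := by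
  have N0 : (0:ℝ) < N := by exact_mod_cast hN
  have n0 : 0 < √(N:ℝ) := Real.sqrt_pos.2 N0
  have t := trap hN hN
  rw [int_Gt hN] at t
  have e : ∑ i ∈ Finset.range N, Gt N i = PN N := rfl
  have e2 : Gt N N - Gt N 0 = Real.log 2 := by
    unfold Gt
    rw [Real.sqrt_zero, zero_add, ← Real.log_div (by positivity) (by positivity)]
    congr 1; field_simp; norm_num
  have d1 : Dt N 1 ≤ 1/√N := by
    unfold Dt; rw [Real.sqrt_one]
    apply one_div_le_one_div_of_le n0; linarith
  have d2 : 0 ≤ Dt N N := by unfold Dt; positivity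
  have p : 0 < 1/√(N:ℝ) := by positivity
  rw [e, e2] at t
  rw [show 3/√(N:ℝ) = 3*(1/√N) by ring]
  rw [abs_le] at *
  constructor <;> linarith [t.1, t.2]

lemma cN_lim : Tendsto (fun N : ℕ => (4*PN N - 2*Real.log (N.factorial) + Real.log N) - 4*N) atTop (𝓝 (-Real.log (8*π))) := by
  have t1 : Tendsto (fun N : ℕ => PN N - (N/2 + 1/2*(N*Real.log N) - Real.log 2/2)) atTop (𝓝 0) := by
    refine squeeze_zero_norm' ?_ tend3
    filter_upwards [eventually_ge_atTop 1] with N hN using PN_bd hN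
  have t2 : Tendsto (fun N : ℕ => Real.log (Stirling.stirlingSeq N)) atTop (𝓝 (Real.log (√π))) :=
    (Real.continuousAt_log (by positivity)).tendsto.comp Stirling.tendsto_stirlingSeq_sqrt_pi
  have t3 := ((t1.const_mul 4).sub (t2.const_mul 2)).sub_const (3*Real.log 2)
  have e : 4*0 - 2*Real.log (√π) - 3*Real.log 2 = -Real.log (8*π) := by
    rw [Real.log_sqrt Real.pi_pos.le, Real.log_mul (by norm_num) Real.pi_pos.ne', show (8:ℝ) = 2^3 by norm_num, Real.log_pow]
    push_cast; ring
  rw [e] at t3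
  refine t3.congr' ?_
  filter_upwards [eventually_ge_atTop 1] with N hN
  have N0 : (0:ℝ) < N := by exact_mod_cast hN
  rw [Stirling.log_stirlingSeq_formula, Real.log_mul (by norm_num) N0.ne', Real.log_div N0.ne' (Real.exp_pos 1).ne', Real.log_exp]
  ring

theorem const_plus : Vz 1 1 = -Real.log (8*π) := by
  have e0 : Vz 1 1 = ∫ x in (0:ℝ)..1, (fz x*fz x - 1/x) := by
    unfold Vz
    simp only [max_self, Nat.cast_one, Real.log_one, mul_zero, sub_zero]
    apply int_cgr zero_le_one
    intro x h0 h1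
    have w := Wc_pos (h := 1) (k := 1) le_rfl le_rfl h0
    rw [w]
    simp [h1, ph_eq h0 h1.le]
  rw [e0]
  have hR := Rlim fz_meas ii_fz int_fz
  have tg : Tendsto (fun N : ℕ => (∫ x in (0:ℝ)..1, fz (x+N) * fz (x+N)) - 4*N) atTop (𝓝 0) := by
    refine squeeze_zero_norm' (a := fun N : ℕ => 4/(N:ℝ)) ?_ (tendsto_const_div_atTop_nhds_zero_nat 4)
    filter_upwards [eventually_ge_atTop 1] with N hN using int_g2 hN
  have tot := (cN_lim.add (hR.const_mul 2)).sub tg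
  rw [mul_zero, add_zero, sub_zero] at tot
  refine tendsto_nhds_unique (tendsto_const_nhds.congr' ?_) tot
  filter_upwards [eventually_ge_atTop 1] with N hN
  have e : ∫ x in (0:ℝ)..1, (fz x*fz x - 1/x) = ∫ x in (0:ℝ)..1, ((sN N x^2 - 1/x) + 2*(fz x * fz (x+N)) - fz (x+N)*fz (x+N)) := by
    apply int_cgr zero_le_one
    intro x h0 _
    have : fz x = sN N x + fz (x+N) := fz_add_nat h0 N
    rw [this]; ring
  have c := cN hN
  have i2 := ii_fzN hN fz_meas ii_fz
  rw [e, intervalIntegral.integral_sub (c.1.add (i2.const_mul 2)) (ii_g2 hN), intervalIntegral.integral_add c.1 (i2.const_mul 2),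
    intervalIntegral.integral_const_mul, c.2]
  ring

end TT

/-- Corollary (Selberg range improvement): asymptotic for the second moment with two
twists in the range `q ≥ 4hk`. -/
theorem two_twists_asymptotic :
    ∃ C : ℝ, 0 < C ∧
      ∀ (q : ℕ) (hq : q.Prime) (h k : ℕ),
        1 ≤ h → h < q → 1 ≤ k → k < q → Nat.Coprime h k → 4 * h * k ≤ q →
        ∀ (ε : ℤ), ε = 1 ∨ ε = -1 →
        haveI : NeZero q := ⟨hq.ne_zero⟩
        ‖Mpm ε h k q -
            ((1/2 * Real.sqrt ((q : ℝ)/(h*k)) *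
              (Real.log ((q : ℝ)/(h*k)) + Real.eulerMascheroniConstant
                - Real.log (8*π) - (ε : ℝ) * π/2) : ℝ) : ℂ)‖
          ≤ C * Real.sqrt ((h : ℝ) + k) * Real.log q := by
  refine ⟨30000, by norm_num, ?_⟩
  intro q hq h k h1 hhq k1 hkq hc h4 ε hε
  have : NeZero q := ⟨hq.ne_zero⟩
  obtain ⟨t, ht, e⟩ := TT.Mpm_eq q hq h k h1 hhq k1 hkq ε hε
  have tp := TT.Tplus' hq h1 hhq k1 hkq hc h4
  have tm := TT.Tminus hq h1 hhq k1 hkq hc h4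
  rw [TT.minus_int h1 k1 hc, TT.const_minus] at tm
  rw [TT.const_plus] at tp
  have hh : (1:ℝ) ≤ h := by exact_mod_cast h1
  have hk : (1:ℝ) ≤ k := by exact_mod_cast k1
  have h4' : 4*(h:ℝ)*k ≤ q := by exact_mod_cast h4
  have q4 : (4:ℝ) ≤ q := by nlinarith
  have q0 : (0:ℝ) < q := by linarith
  have hL : 1 ≤ Real.log q := by
    rw [Real.le_log_iff_exp_le q0]
    linarith [Real.exp_one_lt_d9]
  have hs : 1 ≤ √((h:ℝ)+k) := by rw [Real.one_le_sqrt]; linarith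
  have hr : 1 ≤ √(q:ℝ) := by rw [Real.one_le_sqrt]; linarith
  rw [Real.sqrt_mul q0.le] at tp tm
  have eq1 : Real.log ((q:ℝ)/(h*k)) = Real.log q - Real.log (h*k) := Real.log_div q0.ne' (by positivity)
  have eq2 : √((q:ℝ)/(h*k)) = √q/(√h*√k) := by
    rw [Real.sqrt_div q0.le, Real.sqrt_mul (by positivity)]
  have eqq : (q:ℝ) = √q*√q := (Real.mul_self_sqrt q0.le).symm
  have hε' : |(ε:ℝ)| = 1 := by rcases hε with rfl | rfl <;> simp
  rw [e, ← Complex.ofReal_sub, Complex.norm_real, Real.norm_eq_abs, eq1, eq2]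
  generalize ∑ n ∈ Finset.Ico 1 q, TT.ph (k * ((n:ℝ)/q)) * TT.ph (h * ((n:ℝ)/q)) = A at *
  generalize ∑ n ∈ Finset.Ico 1 q, TT.ph (k * ((n:ℝ)/q)) * TT.ph (-(h * ((n:ℝ)/q))) = B at *
  generalize Real.log (q:ℝ) - Real.log (h*k) = l at *
  generalize Real.log (q:ℝ) = L at *
  have a0 : 0 < √(h:ℝ) := Real.sqrt_pos.2 (by linarith)
  have b0 : 0 < √(k:ℝ) := Real.sqrt_pos.2 (by linarith)
  set s := √((h:ℝ)+k)
  set r := √(q:ℝ)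
  set X := A - q/(√h*√k) * (l + Real.eulerMascheroniConstant + -Real.log (8*π)) with hX
  set Y := B - q * (1/(√h*√k) * -(π/2)) with hY
  have r0 : 0 < r := by linarith
  have key : 1/(2*r)*(A + ε*B) - t - 1/2*(r/(√h*√k))*(l + Real.eulerMascheroniConstant - Real.log (8*π) - ε*π/2)
      = 1/(2*r)*(X + ε*Y) - t := by
    rw [hX, hY, eqq]; field_simp; ring
  rw [key]
  have b1 : |X + ε*Y| ≤ 24640*(r*s*(1+L)) + 9 + 2*s := by
    refine (abs_add_le _ _).trans ?_
    rw [abs_mul, hε', one_mul]; linarith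
  have b2 : |1/(2*r)*(X+ε*Y)| ≤ 12320*(s*(1+L)) + 9/2 + s := by
    rw [abs_mul, abs_of_pos (by positivity), one_div_mul_eq_div, div_le_iff₀ (by positivity)]
    nlinarith
  refine (abs_sub _ _).trans ?_
  nlinarith
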